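/- arXiv:2402.13893 — 2 statements merged into one kernel-verified Lean document; each statement's English description precedes it below -/
import Mathlib

section
/- For every n ≥ 2 and every integer r ≥ 1, the set 𝔄_r := {λ ∈ ℝ^n : λ_1 ≥ … ≥ λ_n, λ_1+…+λ_n = 0, and 0 ∈ C_r(O_λ)} is a convex cone: it contains 0, is closed under addition, and is closed under multiplication by nonnegative real scalars. -/
/-- The `r`-th partial convex hull of a set `X`: the union of the convex hulls of all
`r`-tuples of points of `X`. -/
def partialConvexHull {E : Type*} [AddCommGroup E] [Module ℝ E]
    (r : ℕ) (X : Set E) : Set E :=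
  {y | ∃ f : Fin r → E, (∀ i, f i ∈ X) ∧ y ∈ convexHull ℝ (Set.range f)}

/-- The coadjoint orbit `O_λ` of `SU(n)`: the set of `n × n` complex Hermitian matrices
of trace zero whose eigenvalues, listed with multiplicity, are the entries of `lam`. -/
def coadjointOrbit {n : ℕ} (lam : Fin n → ℝ) : Set (Matrix (Fin n) (Fin n) ℂ) :=
  {A | A.trace = 0 ∧ ∃ hA : A.IsHermitian, ∃ σ : Equiv.Perm (Fin n),
      ∀ i, hA.eigenvalues (σ i) = lam i}

section
open Matrix

theorem hc_exists_aut (S : Set ℂ) (hS : S.Countable) :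
    ∃ N : Set ℂ, N.Countable ∧ ∀ z z' : ℂ, z ∉ N → z' ∉ N →
      ∃ σ : ℂ ≃+* ℂ, (∀ x ∈ S, σ x = x) ∧ σ z = z' := by
  classical
  let R := Subfield.closure S
  have hRc : Countable R := by
    have h1 := Subfield.cardinalMk_closure_le_max S
    have h2 : Cardinal.mk S ≤ Cardinal.aleph0 := Cardinal.mk_le_aleph0_iff.2 hS.to_subtype
    exact Cardinal.mk_le_aleph0_iff.1 (h1.trans (max_le h2 le_rfl))
  refine ⟨{x : ℂ | IsAlgebraic R x}, Algebraic.countable R ℂ, ?_⟩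
  intro z z' hz hz'
  have hbase : ∀ w : ℂ, ¬ IsAlgebraic R w → ∃ t : Set ℂ, w ∈ t ∧
      IsTranscendenceBasis R ((↑) : t → ℂ) := by
    intro w hw
    have hi : AlgebraicIndepOn R id ({w} : Set ℂ) := by
      have : AlgebraicIndependent R (fun _ : ({w} : Set ℂ) => w) :=
        algebraicIndependent_unique_type_iff.2 hw
      convert this using 1
      ext ⟨x, hx⟩
      simpa using hx
    obtain ⟨t, ht, hb⟩ := exists_isTranscendenceBasis_superset hi
    exact ⟨t, ht rfl, hb⟩
  obtain ⟨t, hzt, ht⟩ := hbase z hz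
  obtain ⟨t', hzt', ht'⟩ := hbase z' hz'
  have hcard : Cardinal.mk t = Cardinal.mk t' := ht.cardinalMk_eq ht'
  obtain ⟨e0⟩ := Cardinal.eq.1 hcard
  let e : t ≃ t' := e0.trans (Equiv.swap (e0 ⟨z, hzt⟩) ⟨z', hzt'⟩)
  have he : e ⟨z, hzt⟩ = ⟨z', hzt'⟩ := by simp [e]
  have := IsAlgClosed.isAlgClosure_of_transcendence_basis _ ht
  have := IsAlgClosed.isAlgClosure_of_transcendence_basis _ ht'
  let f : Algebra.adjoin R (Set.range ((↑) : t → ℂ)) ≃ₐ[R]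
      Algebra.adjoin R (Set.range ((↑) : t' → ℂ)) :=
    ht.1.aevalEquiv.symm.trans ((MvPolynomial.renameEquiv R e).trans ht'.1.aevalEquiv)
  let σ : ℂ ≃+* ℂ := IsAlgClosure.equivOfEquiv ℂ ℂ f.toRingEquiv
  refine ⟨σ, ?_, ?_⟩
  · intro x hx
    have hxR : x ∈ R := Subfield.subset_closure hx
    have h := IsAlgClosure.equivOfEquiv_algebraMap ℂ ℂ f.toRingEquiv
      (algebraMap R _ ⟨x, hxR⟩)
    have h2 : f.toRingEquiv (algebraMap R _ ⟨x, hxR⟩) = algebraMap R _ ⟨x, hxR⟩ := f.commutes _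
    rw [h2] at h
    exact h
  · have hm : (z : ℂ) ∈ Algebra.adjoin R (Set.range ((↑) : t → ℂ)) :=
      Algebra.subset_adjoin ⟨⟨z, hzt⟩, rfl⟩
    have h := IsAlgClosure.equivOfEquiv_algebraMap ℂ ℂ f.toRingEquiv ⟨z, hm⟩
    have h1 : ht.1.aevalEquiv (MvPolynomial.X ⟨z, hzt⟩) = ⟨z, hm⟩ := by
      apply Subtype.ext
      simp [AlgebraicIndependent.aevalEquiv_apply_coe]
    have h2 : f.toRingEquiv ⟨z, hm⟩ = ht'.1.aevalEquiv (MvPolynomial.X ⟨z', hzt'⟩) := by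
      rw [← h1]
      simp [f, he]
    rw [h2] at h
    have h3 : σ z = ((ht'.1.aevalEquiv (MvPolynomial.X ⟨z', hzt'⟩) :
      Algebra.adjoin R (Set.range ((↑) : t' → ℂ))) : ℂ) := h
    rw [h3]
    simp [AlgebraicIndependent.aevalEquiv_apply_coe]

theorem hc_rank_factor {k m : Type*} [Fintype k] [Fintype m] [DecidableEq m]
    (A : Matrix k m ℂ) :
    ∃ (B : Matrix k (Fin A.rank) ℂ) (C : Matrix (Fin A.rank) m ℂ), A = B * C := by
  classical
  let b := Module.finBasis ℂ (LinearMap.range A.mulVecLin)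
  refine ⟨Matrix.of fun i x => (b x : k → ℂ) i, Matrix.of fun x j => b.repr ⟨A.mulVecLin (Pi.single j 1), LinearMap.mem_range_self _ _⟩ x, ?_⟩
  ext i j
  have h := b.sum_repr ⟨A.mulVecLin (Pi.single j 1), LinearMap.mem_range_self _ _⟩
  have h2 := congrArg (fun v : LinearMap.range A.mulVecLin => (v : k → ℂ) i) h
  simp only [Submodule.coe_sum, Submodule.coe_smul, Finset.sum_apply, Pi.smul_apply,
    smul_eq_mul] at h2
  rw [Matrix.mul_apply]
  have h3 : A.mulVecLin (Pi.single j 1) i = A i j := by simp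
  rw [← h3, ← h2]
  exact Finset.sum_congr rfl fun x _ => mul_comm _ _

theorem hc_rank_map_le {k m : Type*} [Fintype k] [Fintype m] [DecidableEq m]
    (A : Matrix k m ℂ) (σ : ℂ →+* ℂ) : (A.map σ).rank ≤ A.rank := by
  obtain ⟨B, C, h⟩ := hc_rank_factor A
  conv_lhs => rw [h]
  rw [Matrix.map_mul]
  refine (Matrix.rank_mul_le_left _ _).trans ((Matrix.rank_le_card_width _).trans ?_)
  simp

theorem hc_isClosed_rank_le {k m : Type*} [Fintype k] [Fintype m] (ρ : ℕ) :
    IsClosed {A : Matrix k m ℂ | A.rank ≤ ρ} := by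
  classical
  have h := isOpen_setOfPred_nat_le_rank (𝕜 := ℂ) (E := m → ℂ) (F := k → ℂ) (ρ+1)
  have hc : Continuous (fun A : Matrix k m ℂ => LinearMap.toContinuousLinearMap A.mulVecLin) := by
    have : (fun A : Matrix k m ℂ => LinearMap.toContinuousLinearMap A.mulVecLin) =
      ⇑((LinearMap.toContinuousLinearMap (𝕜 := ℂ) (E := m → ℂ) (F' := k → ℂ)).toLinearMap.comp
        (Matrix.toLin' (R := ℂ) (m := k) (n := m)).toLinearMap) := by
      ext A; rfl
    rw [this]
    exact LinearMap.continuous_of_finiteDimensional _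
  have h2 := h.preimage hc
  convert h2.isClosed_compl using 1
  ext A
  simp only [Set.mem_ofPred_eq, Set.mem_compl_iff, Set.mem_preimage, not_le]
  rw [Matrix.rank, LinearMap.coe_toContinuousLinearMap, LinearMap.rank, ← Module.finrank_eq_rank]
  norm_cast
  exact Nat.lt_succ_iff.symm

end

section
open Matrix
open scoped ComplexOrder

section
variable {m k : Type*} [Fintype m] [DecidableEq m] [Fintype k]

theorem hc_spectral {A : Matrix m m ℂ} (hA : A.IsHermitian) :
    ∃ U : Matrix m m ℂ, Uᴴ * U = 1 ∧ U * Uᴴ = 1 ∧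
      A = U * diagonal (fun i => (hA.eigenvalues i : ℂ)) * Uᴴ := by
  refine ⟨hA.eigenvectorUnitary, ?_, ?_, ?_⟩
  · exact Unitary.coe_star_mul_self _
  · exact Unitary.coe_mul_star_self _
  · conv_lhs => rw [hA.spectral_theorem, Unitary.conjStarAlgAut_apply]
    rfl

theorem hc_eig_le {A : Matrix m m ℂ} (hA : A.IsHermitian) (t : ℝ)
    (h : ((t : ℂ) • (1 : Matrix m m ℂ) - A).PosSemidef) (i : m) : hA.eigenvalues i ≤ t := by
  obtain ⟨U, hU, hU', hAU⟩ := hc_spectral hA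
  have h1 := h.conjTranspose_mul_mul_same U
  have h2 : Uᴴ * ((t : ℂ) • (1 : Matrix m m ℂ) - A) * U
      = (t : ℂ) • (1 : Matrix m m ℂ) - diagonal (fun i => (hA.eigenvalues i : ℂ)) := by
    rw [mul_sub, sub_mul]
    congr 1
    · simp [hU]
    · conv_lhs => rw [hAU]
      simp only [← mul_assoc]
      rw [hU, one_mul, mul_assoc, hU, mul_one]
  rw [h2] at h1
  have h3 := h1.diag_nonneg (i := i)
  simp only [Matrix.sub_apply, Matrix.smul_apply, one_apply_eq, diagonal_apply_eq, smul_eq_mul, mul_one] at h3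
  rw [← Complex.ofReal_sub] at h3
  have := Complex.zero_le_real.1 h3
  linarith

theorem hc_le_eig {A : Matrix m m ℂ} (hA : A.IsHermitian) (t : ℝ)
    (h : (A - (t : ℂ) • (1 : Matrix m m ℂ)).PosSemidef) (i : m) : t ≤ hA.eigenvalues i := by
  obtain ⟨U, hU, hU', hAU⟩ := hc_spectral hA
  have h1 := h.conjTranspose_mul_mul_same U
  have h2 : Uᴴ * (A - (t : ℂ) • (1 : Matrix m m ℂ)) * U
      = diagonal (fun i => (hA.eigenvalues i : ℂ)) - (t : ℂ) • (1 : Matrix m m ℂ) := by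
    rw [mul_sub, sub_mul]
    congr 1
    · conv_lhs => rw [hAU]
      simp only [← mul_assoc]
      rw [hU, one_mul, mul_assoc, hU, mul_one]
    · simp [hU]
  rw [h2] at h1
  have h3 := h1.diag_nonneg (i := i)
  simp only [Matrix.sub_apply, Matrix.smul_apply, one_apply_eq, diagonal_apply_eq, smul_eq_mul, mul_one] at h3
  rw [← Complex.ofReal_sub] at h3
  have := Complex.zero_le_real.1 h3
  linarith

theorem hc_det_re {A : Matrix m m ℂ} (hA : A.IsHermitian) :
    A.det = ((∏ i, hA.eigenvalues i : ℝ) : ℂ) := by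
  rw [hA.det_eq_prod_eigenvalues]; push_cast; rfl

theorem hc_trace_re {A : Matrix m m ℂ} (hA : A.IsHermitian) :
    A.trace = ((∑ i, hA.eigenvalues i : ℝ) : ℂ) := by
  rw [hA.trace_eq_sum_eigenvalues]; push_cast; rfl

theorem hc_det_re_pos {A : Matrix m m ℂ} (hA : A.PosDef) : 0 < A.det.re := by
  rw [hc_det_re hA.1, Complex.ofReal_re]
  exact Finset.prod_pos fun i _ => hA.eigenvalues_pos i

theorem hc_posDef_factor {A : Matrix m m ℂ} (hA : A.PosDef) :
    ∃ L : Matrix m m ℂ, IsUnit L.det ∧ A = Lᴴ * L := by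
  obtain ⟨U, hU, hU', hAU⟩ := hc_spectral hA.1
  have key : A = (diagonal (fun i => ((Real.sqrt (hA.1.eigenvalues i) : ℝ) : ℂ)) * Uᴴ)ᴴ *
      (diagonal (fun i => ((Real.sqrt (hA.1.eigenvalues i) : ℝ) : ℂ)) * Uᴴ) := by
    conv_lhs => rw [hAU]
    rw [conjTranspose_mul, conjTranspose_conjTranspose, diagonal_conjTranspose]
    simp only [← mul_assoc]
    congr 1
    rw [mul_assoc, diagonal_mul_diagonal]
    congr 2
    funext i
    simp only [Pi.star_apply, RCLike.star_def, Complex.conj_ofReal]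
    rw [← Complex.ofReal_mul, Real.mul_self_sqrt (hA.eigenvalues_pos i).le]
  refine ⟨_, ?_, key⟩
  have hd := hA.det_pos.ne'
  rw [key, det_mul] at hd
  exact isUnit_iff_ne_zero.2 (right_ne_zero_of_mul hd)

theorem hc_det_mono {A B : Matrix m m ℂ} (hA : A.PosDef) (hAB : (B - A).PosSemidef) :
    A.det.re ≤ B.det.re := by
  obtain ⟨L, hL, rfl⟩ := hc_posDef_factor hA
  set H := (L⁻¹)ᴴ * B * L⁻¹ with hH
  have hB : B = Lᴴ * H * L := by
    have h1 : Lᴴ * (L⁻¹)ᴴ = 1 := by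
      rw [← conjTranspose_mul, nonsing_inv_mul _ hL, conjTranspose_one]
    rw [hH]; simp only [← mul_assoc]
    rw [h1, one_mul, mul_assoc, nonsing_inv_mul _ hL, mul_one]
  have hps : (H - (1 : Matrix m m ℂ)).PosSemidef := by
    have := hAB.conjTranspose_mul_mul_same L⁻¹
    rw [mul_sub, sub_mul, ← hH] at this
    have h2 : (L⁻¹)ᴴ * (Lᴴ * L) * L⁻¹ = 1 := by
      rw [← mul_assoc, ← conjTranspose_mul, mul_nonsing_inv _ hL, conjTranspose_one, one_mul,
        mul_nonsing_inv _ hL]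
    rwa [h2] at this
  have hHh : H.IsHermitian := by
    have := hps.1.add (isHermitian_one (n := m) (α := ℂ))
    simpa using this
  have hge : ∀ i, 1 ≤ hHh.eigenvalues i := fun i =>
    hc_le_eig hHh 1 (by simpa using hps) i
  clear_value H
  have hdet : B.det.re = (Lᴴ * L).det.re * (∏ i, hHh.eigenvalues i) := by
    have : B.det = (Lᴴ * L).det * ((∏ i, hHh.eigenvalues i : ℝ) : ℂ) := by
      rw [← hc_det_re hHh, congrArg det hB]; simp only [det_mul]; ring
    rw [this, Complex.re_mul_ofReal]
  rw [hdet]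
  have h1 : 1 ≤ ∏ i, hHh.eigenvalues i := by
    calc (1:ℝ) = ∏ i : m, (1:ℝ) := by simp
      _ ≤ _ := Finset.prod_le_prod (fun _ _ => zero_le_one) (fun i _ => hge i)
  have := (hc_det_re_pos hA).le
  nlinarith

theorem hc_log_det_le {B : Matrix m m ℂ} (hB : B.PosDef) :
    Real.log B.det.re ≤ B.trace.re - Fintype.card m := by
  rw [hc_det_re hB.1, hc_trace_re hB.1, Complex.ofReal_re, Complex.ofReal_re,
    Real.log_prod (fun i _ => (hB.eigenvalues_pos i).ne')]
  have : (Fintype.card m : ℝ) = ∑ i : m, (1:ℝ) := by simp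
  rw [this, ← Finset.sum_sub_distrib]
  exact Finset.sum_le_sum fun i _ => Real.log_le_sub_one_of_pos (hB.eigenvalues_pos i)

theorem hc_trace_le_rank (N : Matrix m k ℂ) (h : ((1 : Matrix m m ℂ) - N * Nᴴ).PosSemidef) :
    (N * Nᴴ).trace.re ≤ N.rank := by
  have hH : (N * Nᴴ).IsHermitian := isHermitian_mul_conjTranspose_self N
  have hps := posSemidef_self_mul_conjTranspose N
  rw [← rank_self_mul_conjTranspose N, hH.rank_eq_card_non_zero_eigs, hc_trace_re hH,
    Complex.ofReal_re, Fintype.card_subtype, Finset.card_filter]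
  push_cast
  refine Finset.sum_le_sum fun i _ => ?_
  have h1 := hc_eig_le hH 1 (by simpa using h) i
  split_ifs with h2
  · exact h1
  · simp only [ne_eq, not_not] at h2
    exact h2.le

theorem hc_orthonormalize (T : Matrix m k ℂ) (S : Matrix k m ℂ) (h : T * S = 1) :
    ∃ L : Matrix m m ℂ, IsUnit L.det ∧ (L * T) * (L * T)ᴴ = 1 := by
  have hpd : (T * Tᴴ).PosDef := by
    apply PosDef.mul_conjTranspose_self
    intro v w hvw
    have := congrArg (fun u => u ᵥ* S) hvw
    simpa [vecMul_vecMul, h] using this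
  obtain ⟨L, hL, hLe⟩ := hc_posDef_factor hpd
  have hLH : IsUnit (Lᴴ).det := by rw [det_conjTranspose]; exact hL.star
  refine ⟨(Lᴴ)⁻¹, ?_, ?_⟩
  · exact Matrix.isUnit_nonsing_inv_det _ hLH
  · rw [conjTranspose_mul, conjTranspose_nonsing_inv, conjTranspose_conjTranspose]
    rw [show Lᴴ⁻¹ * T * (Tᴴ * L⁻¹) = Lᴴ⁻¹ * (T * Tᴴ) * L⁻¹ by simp only [Matrix.mul_assoc], hLe,
      ← mul_assoc, nonsing_inv_mul _ hLH, one_mul, mul_nonsing_inv _ hL]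

theorem hc_entry_le (T : Matrix m k ℂ) (hT : T * Tᴴ = 1) (i : m) (j : k) : ‖T i j‖ ≤ 1 := by
  have h1 := congrFun (congrFun hT i) i
  simp only [mul_apply, conjTranspose_apply, one_apply_eq, RCLike.star_def, Complex.mul_conj] at h1
  have h2 : ∑ x, Complex.normSq (T i x) = 1 := by exact_mod_cast h1
  have h3 : Complex.normSq (T i j) ≤ 1 := by
    rw [← h2]
    exact Finset.single_le_sum (f := fun x => Complex.normSq (T i x))
      (fun x _ => Complex.normSq_nonneg _) (Finset.mem_univ j)
  rw [Complex.normSq_eq_norm_sq] at h3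
  have := norm_nonneg (T i j)
  nlinarith

theorem hc_isCompact_coisometry : IsCompact {T : Matrix m k ℂ | T * Tᴴ = 1} := by
  have hcl : IsClosed {T : Matrix m k ℂ | T * Tᴴ = 1} :=
    isClosed_eq (by fun_prop) continuous_const
  have hK : IsCompact (Set.pi Set.univ fun _ : m => Set.pi Set.univ fun _ : k =>
      Metric.closedBall (0:ℂ) 1) :=
    isCompact_univ_pi fun _ => isCompact_univ_pi fun _ => isCompact_closedBall _ _
  refine IsCompact.of_isClosed_subset (s := (Set.pi Set.univ fun _ : m => Set.pi Set.univ
    fun _ : k => Metric.closedBall (0:ℂ) 1)) hK hcl ?_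
  intro T hT i _ j _
  rw [mem_closedBall_zero_iff]
  exact hc_entry_le T hT i j

end

theorem hc_qr {n : ℕ} (A : Matrix (Fin n) (Fin n) ℂ) :
    ∃ U R : Matrix (Fin n) (Fin n) ℂ, Uᴴ * U = 1 ∧ (∀ i j, j < i → R i j = 0) ∧ A = U * R := by
  let f : Fin n → EuclideanSpace ℂ (Fin n) := fun j => WithLp.toLp 2 (fun i => A i j)
  have hc : Module.finrank ℂ (EuclideanSpace ℂ (Fin n)) = Fintype.card (Fin n) := by simp
  let b := InnerProductSpace.gramSchmidtOrthonormalBasis hc f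
  refine ⟨Matrix.of fun i j => b j i, Matrix.of fun i j => b.repr (f j) i, ?_, ?_, ?_⟩
  · ext i j
    have := b.inner_eq_ite i j
    rw [EuclideanSpace.inner_eq_star_dotProduct] at this
    rw [one_apply, ← this]
    simp [mul_apply, dotProduct, mul_comm]
  · intro i j hij
    exact InnerProductSpace.gramSchmidtOrthonormalBasis_inv_triangular' hc f hij
  · ext i j
    have := b.sum_repr (f j)
    have h2 := congrArg (fun v : EuclideanSpace ℂ (Fin n) => v i) this
    simp only [mul_apply]
    have h3 : (f j) i = A i j := rfl
    rw [← h3, ← h2]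
    simp [mul_comm]

theorem hc_posDef_sorted {n : ℕ} {P : Matrix (Fin n) (Fin n) ℂ} (hP : P.IsHermitian) :
    ∃ (w : Matrix (Fin n) (Fin n) ℂ) (d : Fin n → ℝ), wᴴ * w = 1 ∧ w * wᴴ = 1 ∧ Antitone d ∧
      P = wᴴ * diagonal (fun i => (d i : ℂ)) * w ∧
      ∃ σ : Equiv.Perm (Fin n), ∀ i, d i = hP.eigenvalues (σ i) := by
  obtain ⟨U, hU, hU', hPU⟩ := hc_spectral hP
  let σ : Equiv.Perm (Fin n) := Tuple.sort (fun i => - hP.eigenvalues i)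
  have hσ : Monotone ((fun i => - hP.eigenvalues i) ∘ σ) := Tuple.monotone_sort _
  refine ⟨(U.submatrix id σ)ᴴ, fun i => hP.eigenvalues (σ i), ?_, ?_, ?_, ?_, σ, fun _ => rfl⟩
  · rw [conjTranspose_conjTranspose, conjTranspose_submatrix, submatrix_mul_equiv, hU']
    simp
  · rw [conjTranspose_conjTranspose, conjTranspose_submatrix,
      ← submatrix_mul _ _ _ id _ Function.bijective_id, hU]
    simp
  · intro i j hij
    have := hσ hij
    simp only [Function.comp] at this
    linarith
  · conv_lhs => rw [hPU]
    rw [conjTranspose_conjTranspose, conjTranspose_submatrix]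
    have : diagonal (fun i => (hP.eigenvalues (σ i) : ℂ)) =
      (diagonal (fun i => (hP.eigenvalues i : ℂ))).submatrix σ σ := by
      rw [submatrix_diagonal_equiv]; rfl
    rw [this, submatrix_mul_equiv, submatrix_mul_equiv]
    simp

end

section
open Matrix
open scoped ComplexOrder

/-- The matrix of the first columns of `U`, up to column `j`. -/
def hcPre {n : ℕ} (U : Matrix (Fin n) (Fin n) ℂ) (j : Fin n) :
    Matrix (Fin n) {x : Fin n // x ≤ j} ℂ :=
  U.submatrix id Subtype.val

/-- The unitary tuple `U` solves the Horn type equation with weights `c` and scalar `s`. -/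
def HcSol {n r : ℕ} (c : Fin r → Fin n → ℝ) (s : ℝ) (U : Fin r → Matrix (Fin n) (Fin n) ℂ) :
    Prop :=
  (∀ i, (U i)ᴴ * U i = 1) ∧
    ∑ i, ∑ j, (c i j : ℂ) • (hcPre (U i) j * (hcPre (U i) j)ᴴ) = (s : ℂ) • 1

/-- Semistability of a tuple of (full) flags. -/
def HcSemi {n r : ℕ} (c : Fin r → Fin n → ℝ) (s : ℝ) (h : Fin r → Matrix (Fin n) (Fin n) ℂ) :
    Prop :=
  ∀ (k : ℕ) (T : Matrix (Fin k) (Fin n) ℂ), T * Tᴴ = 1 →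
    s * k ≤ ∑ i, ∑ j, c i j * ((T * hcPre (h i) j).rank : ℝ)

theorem hcPre_mul {n : ℕ} (A U : Matrix (Fin n) (Fin n) ℂ) (j : Fin n) :
    hcPre (A * U) j = A * hcPre U j := by
  ext a b
  simp [hcPre, mul_apply]

theorem hcPre_isometry {n : ℕ} {U : Matrix (Fin n) (Fin n) ℂ} (hU : Uᴴ * U = 1) (j : Fin n) :
    (hcPre U j)ᴴ * hcPre U j = 1 := by
  have : (hcPre U j)ᴴ * hcPre U j = (Uᴴ * U).submatrix Subtype.val Subtype.val := by
    ext a b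
    simp [hcPre, mul_apply]
  rw [this, hU]
  exact submatrix_one _ Subtype.val_injective

theorem hc_proj_psd {m k : Type*} [Fintype m] [DecidableEq m] [Fintype k] [DecidableEq k]
    (O : Matrix m k ℂ) (hO : Oᴴ * O = 1) : ((1 : Matrix m m ℂ) - O * Oᴴ).PosSemidef := by
  have h := posSemidef_conjTranspose_mul_self ((1 : Matrix m m ℂ) - O * Oᴴ)
  have h2 : ((1 : Matrix m m ℂ) - O * Oᴴ)ᴴ * ((1 : Matrix m m ℂ) - O * Oᴴ)
      = (1 : Matrix m m ℂ) - O * Oᴴ := by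
    rw [conjTranspose_sub, conjTranspose_one, conjTranspose_mul, conjTranspose_conjTranspose]
    have : O * Oᴴ * (O * Oᴴ) = O * Oᴴ := by
      rw [Matrix.mul_assoc, ← Matrix.mul_assoc Oᴴ, hO, Matrix.one_mul]
    rw [mul_sub, sub_mul, sub_mul, this]
    simp
  rwa [h2] at h

theorem hc_sol_semi {n r : ℕ} {c : Fin r → Fin n → ℝ} (hc : ∀ i j, 0 ≤ c i j) {s : ℝ}
    {U : Fin r → Matrix (Fin n) (Fin n) ℂ} (h : HcSol c s U) : HcSemi c s U := by
  intro k T hT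
  have h1 : ∀ i j, (T * hcPre (U i) j * (T * hcPre (U i) j)ᴴ).trace.re
      ≤ (T * hcPre (U i) j).rank := by
    intro i j
    apply hc_trace_le_rank
    have := (hc_proj_psd _ (hcPre_isometry (h.1 i) j)).mul_mul_conjTranspose_same T
    rw [Matrix.mul_sub, Matrix.sub_mul, Matrix.mul_one, hT] at this
    rw [conjTranspose_mul]
    simpa only [Matrix.mul_assoc] using this
  have h2 := congrArg (fun M => (T * M * Tᴴ).trace.re) h.2
  simp only [Matrix.mul_sum, Matrix.sum_mul, trace_sum, Complex.re_sum, Matrix.mul_smul,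
    Matrix.smul_mul, trace_smul, smul_eq_mul, Complex.re_ofReal_mul, Matrix.mul_one, hT,
    trace_one, Fintype.card_fin, Complex.natCast_re] at h2
  rw [← h2]
  refine Finset.sum_le_sum fun i _ => Finset.sum_le_sum fun j _ => ?_
  refine mul_le_mul_of_nonneg_left ?_ (hc i j)
  have := h1 i j
  rw [conjTranspose_mul] at this
  simpa only [Matrix.mul_assoc] using this

theorem hc_sol_trace {n r : ℕ} {c : Fin r → Fin n → ℝ} {s : ℝ}
    {U : Fin r → Matrix (Fin n) (Fin n) ℂ} (h : HcSol c s U) :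
    ∑ i, ∑ j, c i j * (Fintype.card {x : Fin n // x ≤ j} : ℝ) = s * n := by
  have h2 := congrArg (fun M => M.trace.re) h.2
  simp only [trace_sum, Complex.re_sum, trace_smul, smul_eq_mul, Complex.re_ofReal_mul,
    trace_one, Fintype.card_fin, Complex.natCast_re] at h2
  rw [← h2]
  refine Finset.sum_congr rfl fun i _ => Finset.sum_congr rfl fun j _ => ?_
  rw [trace_mul_comm, hcPre_isometry (h.1 i) j, trace_one, Complex.natCast_re]

theorem HcSemi.add {n r : ℕ} {c c' : Fin r → Fin n → ℝ} {s s' : ℝ}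
    {h : Fin r → Matrix (Fin n) (Fin n) ℂ} (h1 : HcSemi c s h) (h2 : HcSemi c' s' h) :
    HcSemi (c + c') (s + s') h := by
  intro k T hT
  have := h1 k T hT
  have := h2 k T hT
  simp only [Pi.add_apply, add_mul, Finset.sum_add_distrib]
  linarith

end

section
open Matrix
open scoped ComplexOrder

theorem hc_generic_semi {n r : ℕ} {c : Fin r → Fin n → ℝ} (hc : ∀ i j, 0 ≤ c i j) {s : ℝ}
    (A B : Fin r → Matrix (Fin n) (Fin n) ℂ) (S N : Set ℂ) (hN : N.Countable)
    (haut : ∀ z z' : ℂ, z ∉ N → z' ∉ N → ∃ σ : ℂ ≃+* ℂ, (∀ x ∈ S, σ x = x) ∧ σ z = z')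
    (hA : ∀ i a b, A i a b ∈ S) (hB : ∀ i a b, B i a b ∈ S) (z0 z : ℂ) (hz : z ∉ N)
    (h0 : HcSemi c s (fun i => A i + z0 • B i)) : HcSemi c s (fun i => A i + z • B i) := by
  intro k T hT
  by_contra hlt
  push Not at hlt
  let K : Set (Matrix (Fin k) (Fin n) ℂ) := {T | T * Tᴴ = 1}
  have hK : CompactSpace K := isCompact_iff_compactSpace.1 hc_isCompact_coisometry
  let Q : Set (ℂ × K) := {p | ∀ i j, ((p.2 : Matrix (Fin k) (Fin n) ℂ) *
    hcPre (A i + p.1 • B i) j).rank ≤ (T * hcPre (A i + z • B i) j).rank}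
  have hQ : IsClosed Q := by
    have : Q = ⋂ i, ⋂ j, {p : ℂ × K | ((p.2 : Matrix (Fin k) (Fin n) ℂ) *
      hcPre (A i + p.1 • B i) j).rank ≤ (T * hcPre (A i + z • B i) j).rank} := by
      ext p; simp [Q]
    rw [this]
    refine isClosed_iInter fun i => isClosed_iInter fun j => ?_
    refine (hc_isClosed_rank_le _).preimage
      (f := fun p : ℂ × K => (p.2 : Matrix (Fin k) (Fin n) ℂ) * hcPre (A i + p.1 • B i) j) ?_
    refine Continuous.matrix_mul (by fun_prop) ?_
    refine Continuous.matrix_submatrix ?_ _ _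
    fun_prop
  have hZ : IsClosed (Prod.fst '' Q) := isClosedMap_fst_of_compactSpace _ hQ
  have hd : Dense (Prod.fst '' Q) := by
    refine (hN.dense_compl ℂ).mono ?_
    intro z' hz'
    obtain ⟨σ, hσS, hσz⟩ := haut z z' hz hz'
    have h1 : T.map σ * (Tᴴ).map σ = 1 := by
      rw [← Matrix.map_mul, hT]; simp
    obtain ⟨L, -, hL⟩ := hc_orthonormalize _ _ h1
    refine ⟨(z', ⟨L * T.map σ, hL⟩), ?_, rfl⟩
    intro i j
    have h2 : hcPre (A i + z' • B i) j = (hcPre (A i + z • B i) j).map σ := by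
      ext a b
      simp [hcPre, hσS _ (hA i _ _), hσS _ (hB i _ _), hσz]
    change (L * T.map σ * hcPre (A i + z' • B i) j).rank ≤ _
    rw [Matrix.mul_assoc, h2, ← Matrix.map_mul]
    exact (rank_mul_le_right _ _).trans (hc_rank_map_le _ (σ : ℂ →+* ℂ))
  have hu : Prod.fst '' Q = Set.univ := by
    rw [← hZ.closure_eq]; exact hd.closure_eq
  have hz0 : z0 ∈ Prod.fst '' Q := by rw [hu]; trivial
  obtain ⟨⟨_, T0, hT0⟩, hq, rfl⟩ := hz0
  have h3 := h0 k T0 hT0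
  refine absurd (h3.trans ?_) (not_le.2 hlt)
  refine Finset.sum_le_sum fun i _ => Finset.sum_le_sum fun j _ => ?_
  refine mul_le_mul_of_nonneg_left ?_ (hc i j)
  exact_mod_cast hq i j

theorem hc_generic_det {n r : ℕ}
    (A B : Fin r → Matrix (Fin n) (Fin n) ℂ) (S N : Set ℂ) (hN : N.Countable)
    (haut : ∀ z z' : ℂ, z ∉ N → z' ∉ N → ∃ σ : ℂ ≃+* ℂ, (∀ x ∈ S, σ x = x) ∧ σ z = z')
    (hA : ∀ i a b, A i a b ∈ S) (hB : ∀ i a b, B i a b ∈ S) (z0 z : ℂ) (hz : z ∉ N) (i : Fin r)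
    (h0 : (A i + z0 • B i).det ≠ 0) : (A i + z • B i).det ≠ 0 := by
  intro hzero
  have hcl : IsClosed {z' : ℂ | (A i + z' • B i).det = 0} :=
    isClosed_eq (by fun_prop) continuous_const
  have hd : Dense {z' : ℂ | (A i + z' • B i).det = 0} := by
    refine (hN.dense_compl ℂ).mono ?_
    intro z' hz'
    obtain ⟨σ, hσS, hσz⟩ := haut z z' hz hz'
    have h2 : A i + z' • B i = (A i + z • B i).map σ := by
      ext a b
      simp [hσS _ (hA i _ _), hσS _ (hB i _ _), hσz]
    change (A i + z' • B i).det = 0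
    have h3 := RingEquiv.map_det σ (A i + z • B i)
    rw [hzero, map_zero] at h3
    rw [h2]
    exact h3.symm
  have hu : {z' : ℂ | (A i + z' • B i).det = 0} = Set.univ := by
    rw [← hcl.closure_eq]; exact hd.closure_eq
  have : z0 ∈ {z' : ℂ | (A i + z' • B i).det = 0} := by rw [hu]; trivial
  exact h0 this

theorem hc_unitary_det {n : ℕ} {U : Matrix (Fin n) (Fin n) ℂ} (hU : Uᴴ * U = 1) : U.det ≠ 0 := by
  intro h
  have := congrArg det hU
  rw [det_mul, h, mul_zero, det_one] at this
  exact zero_ne_one this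

theorem hc_generic {n r : ℕ} {c c' : Fin r → Fin n → ℝ} (hc : ∀ i j, 0 ≤ c i j)
    (hc' : ∀ i j, 0 ≤ c' i j) {s s' : ℝ}
    {U V : Fin r → Matrix (Fin n) (Fin n) ℂ} (hU : HcSol c s U) (hV : HcSol c' s' V) :
    ∃ h : Fin r → Matrix (Fin n) (Fin n) ℂ, (∀ i, (h i).det ≠ 0) ∧
      HcSemi (c + c') (s + s') h := by
  let A := U
  let B : Fin r → Matrix (Fin n) (Fin n) ℂ := fun i => V i - U i
  let S : Set ℂ := Set.range (fun p : Fin r × Fin n × Fin n => A p.1 p.2.1 p.2.2) ∪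
    Set.range (fun p : Fin r × Fin n × Fin n => B p.1 p.2.1 p.2.2)
  have hS : S.Countable := (Set.countable_range _).union (Set.countable_range _)
  obtain ⟨N, hN, haut⟩ := hc_exists_aut S hS
  have hA : ∀ i a b, A i a b ∈ S := fun i a b => Or.inl ⟨(i, a, b), rfl⟩
  have hB : ∀ i a b, B i a b ∈ S := fun i a b => Or.inr ⟨(i, a, b), rfl⟩
  obtain ⟨z, hz⟩ := (hN.dense_compl ℂ).nonempty
  have e0 : (fun i => A i + (0:ℂ) • B i) = U := by funext i; simp [A]
  have e1 : (fun i => A i + (1:ℂ) • B i) = V := by funext i; simp [A, B]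
  refine ⟨fun i => A i + z • B i, ?_, HcSemi.add ?_ ?_⟩
  · intro i
    refine hc_generic_det A B S N hN haut hA hB 0 z hz i ?_
    rw [congrFun e0 i]
    exact hc_unitary_det (hU.1 i)
  · refine hc_generic_semi hc A B S N hN haut hA hB 0 z hz ?_
    rw [e0]
    exact hc_sol_semi hc hU
  · refine hc_generic_semi hc' A B S N hN haut hA hB 1 z hz ?_
    rw [e1]
    exact hc_sol_semi hc' hV

end

section
open Matrix
open scoped ComplexOrder

theorem hc_greedy {n : ℕ} {m : Type*} [Fintype m] [DecidableEq m] (N : Matrix (Fin n) m ℂ)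
    (hN : N.rank = Fintype.card m) :
    ∃ e : m → Fin n, Function.Injective e ∧ (N.submatrix e id).det ≠ 0 ∧
      ∀ (k : ℕ) (hk : k ≤ n), (N.submatrix (Fin.castLE hk) id).rank ≤
        (Finset.univ.filter (fun x => (e x : ℕ) < k)).card := by
  classical
  let v : Fin n → m → ℂ := N.row
  let I : Set (Fin n) := {b | v b ∉ Submodule.span ℂ (v '' {a | a < b})}
  have key : ∀ k : ℕ, k ≤ n → LinearIndepOn ℂ v {b | b ∈ I ∧ (b : ℕ) < k} ∧
      Submodule.span ℂ (v '' {b | b ∈ I ∧ (b : ℕ) < k}) =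
        Submodule.span ℂ (v '' {b | (b : ℕ) < k}) := by
    intro k
    induction k with
    | zero => intro _; simp [LinearIndepOn]; try exact linearIndependent_empty_type
    | succ k ih =>
      intro hk
      obtain ⟨h1, h2⟩ := ih (by omega)
      let b : Fin n := ⟨k, by omega⟩
      have hb : {a : Fin n | a < b} = {a : Fin n | (a : ℕ) < k} := by
        ext a; simp [b, Fin.lt_def]
      have hall : {a : Fin n | (a : ℕ) < k + 1} = insert b {a : Fin n | (a : ℕ) < k} := by
        ext a; simp only [Set.mem_insert_iff, Set.mem_ofPred_eq, b, Fin.ext_iff]; omega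
      by_cases hbI : b ∈ I
      · have hs : {a | a ∈ I ∧ (a : ℕ) < k + 1} = insert b {a | a ∈ I ∧ (a : ℕ) < k} := by
          ext a
          simp only [Set.mem_insert_iff, Set.mem_ofPred_eq]
          constructor
          · rintro ⟨h3, h4⟩
            by_cases h5 : (a : ℕ) < k
            · exact Or.inr ⟨h3, h5⟩
            · left; apply Fin.ext; simp only [b]; omega
          · rintro (rfl | ⟨h3, h4⟩)
            · exact ⟨hbI, by simp [b]⟩
            · exact ⟨h3, by omega⟩
        have hbI' : v b ∉ Submodule.span ℂ (v '' {a | a < b}) := hbI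
        rw [hb, ← h2] at hbI'
        rw [hs, hall, Set.image_insert_eq, Set.image_insert_eq, Submodule.span_insert,
          Submodule.span_insert, h2]
        exact ⟨h1.insert hbI', rfl⟩
      · have hs : {a | a ∈ I ∧ (a : ℕ) < k + 1} = {a | a ∈ I ∧ (a : ℕ) < k} := by
          ext a
          simp only [Set.mem_ofPred_eq]
          constructor
          · rintro ⟨h3, h4⟩
            refine ⟨h3, ?_⟩
            by_contra h5
            have : a = b := by apply Fin.ext; simp only [b]; omega
            exact hbI (this ▸ h3)
          · rintro ⟨h3, h4⟩
            exact ⟨h3, by omega⟩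
        have hbI' : v b ∈ Submodule.span ℂ (v '' {a | a < b}) := by
          by_contra h; exact hbI h
        rw [hb] at hbI'
        rw [hs, hall, Set.image_insert_eq, Submodule.span_insert]
        refine ⟨h1, ?_⟩
        rw [h2]
        symm
        rw [sup_eq_right, Submodule.span_singleton_le_iff_mem]
        exact hbI'
  have hrank : ∀ (k : ℕ) (hk : k ≤ n), (N.submatrix (Fin.castLE hk) id).rank =
      (Finset.univ.filter (fun b => b ∈ I ∧ (b : ℕ) < k)).card := by
    intro k hk
    obtain ⟨h1, h2⟩ := key k hk
    have h3 := finrank_span_eq_card h1.linearIndependent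
    rw [rank_eq_finrank_span_row]
    have h4 : Set.range (N.submatrix (Fin.castLE hk) id).row = v '' {b | (b : ℕ) < k} := by
      ext u
      simp only [Set.mem_range, Set.mem_image, Set.mem_ofPred_eq]
      constructor
      · rintro ⟨a, rfl⟩
        exact ⟨Fin.castLE hk a, by simp, rfl⟩
      · rintro ⟨b, hb, rfl⟩
        exact ⟨⟨b, hb⟩, rfl⟩
    rw [h4, ← h2]
    have h6 : (Set.range fun x : {b : Fin n | b ∈ I ∧ (b : ℕ) < k} => v x) =
        v '' {b | b ∈ I ∧ (b : ℕ) < k} := (Set.image_eq_range _ _).symm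
    rw [h6] at h3
    rw [h3, Fintype.card_subtype]
    rfl
  have hIcard : Fintype.card m = Fintype.card {b // b ∈ I} := by
    have h := hrank n le_rfl
    have h5 : N.submatrix (Fin.castLE le_rfl) id = N := by ext; rfl
    rw [h5, hN] at h
    rw [h, Fintype.card_subtype]
    congr 1
    ext b
    simp
  let e0 : m ≃ {b // b ∈ I} := Fintype.equivOfCardEq hIcard
  have hinj : Function.Injective (fun x => (e0 x : Fin n)) :=
    Subtype.val_injective.comp e0.injective
  refine ⟨fun x => e0 x, hinj, ?_, ?_⟩
  · have h1 := (key n le_rfl).1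
    have h2 : {b : Fin n | b ∈ I ∧ (b : ℕ) < n} = I := by ext b; simp
    rw [h2] at h1
    have h3 : LinearIndependent ℂ (N.submatrix (fun x => (e0 x : Fin n)) id).row :=
      h1.linearIndependent.comp e0 e0.injective
    have h4 := Matrix.linearIndependent_rows_iff_isUnit.1 h3
    exact ((Matrix.isUnit_iff_isUnit_det _).1 h4).ne_zero
  · intro k hk
    rw [hrank k hk]
    have : (Finset.univ.filter (fun b => b ∈ I ∧ (b : ℕ) < k)) =
        (Finset.univ.filter (fun x => ((e0 x : Fin n) : ℕ) < k)).image (fun x => (e0 x : Fin n)) := by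
      ext b
      simp only [Finset.mem_filter, Finset.mem_univ, true_and, Finset.mem_image]
      constructor
      · rintro ⟨h1, h2⟩
        exact ⟨e0.symm ⟨b, h1⟩, by simpa using h2, by simp⟩
      · rintro ⟨x, h1, rfl⟩
        exact ⟨(e0 x).2, h1⟩
    rw [this]
    exact Finset.card_image_le

/-- Successive differences of a vector. -/
def hcDiff {n : ℕ} (lam : Fin n → ℝ) (j : Fin n) : ℝ :=
  lam j - if h : (j : ℕ) + 1 < n then lam ⟨j + 1, h⟩ else 0

theorem hc_telescope {n : ℕ} (lam : Fin n → ℝ) (x : Fin n) :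
    ∑ j, (if x ≤ j then hcDiff lam j else 0) = lam x := by
  let L : ℕ → ℝ := fun i => if h : i < n then lam ⟨i, h⟩ else 0
  have h1 : ∀ j : Fin n, (if x ≤ j then hcDiff lam j else 0) =
      (fun i : ℕ => if (x : ℕ) ≤ i then L i - L (i + 1) else 0) j := by
    intro j
    simp only [hcDiff, L, Fin.le_def, j.2, dif_pos, Fin.eta]
  rw [Finset.sum_congr rfl fun j _ => h1 j,
    Fin.sum_univ_eq_sum_range (fun i : ℕ => if (x : ℕ) ≤ i then L i - L (i + 1) else 0) n,
    ← Finset.sum_filter]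
  have h2 : (Finset.range n).filter (fun i => (x : ℕ) ≤ i) = Finset.Ico (x : ℕ) n := by
    ext i; simp only [Finset.mem_filter, Finset.mem_range, Finset.mem_Ico]; omega
  rw [h2, Finset.sum_Ico_eq_sum_range]
  have h3 := Finset.sum_range_sub' (fun k => L (x + k)) (n - x)
  have h4 : (x : ℕ) + (n - x) = n := by omega
  simp only [h4, add_zero] at h3
  have h5 : L n = 0 := by simp [L]
  have h6 : L x = lam x := by simp [L]
  rw [h5, h6, sub_zero] at h3
  rw [← h3]
  rfl

theorem hc_abel {n : ℕ} (g d : Fin n → ℝ) (hd : Antitone d)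
    (hg : ∀ k : ℕ, k ≤ n → 0 ≤ ∑ b : Fin n, if (b : ℕ) < k then g b else 0) (hg0 : ∑ b, g b = 0) :
    0 ≤ ∑ b, g b * d b := by
  have h1 : ∑ b, g b * d b = ∑ j, hcDiff d j * ∑ b : Fin n, if (b : ℕ) < (j : ℕ) + 1 then g b else 0 := by
    calc ∑ b, g b * d b = ∑ b, g b * ∑ j, (if b ≤ j then hcDiff d j else 0) := by
          simp only [hc_telescope]
      _ = ∑ b, ∑ j, g b * (if b ≤ j then hcDiff d j else 0) := by simp only [Finset.mul_sum]
      _ = ∑ j, ∑ b, g b * (if b ≤ j then hcDiff d j else 0) := Finset.sum_comm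
      _ = _ := by
          refine Finset.sum_congr rfl fun j _ => ?_
          rw [Finset.mul_sum]
          refine Finset.sum_congr rfl fun b _ => ?_
          have : b ≤ j ↔ (b : ℕ) < (j : ℕ) + 1 := by rw [Fin.le_def]; omega
          simp only [this]
          split_ifs <;> ring
  rw [h1]
  refine Finset.sum_nonneg fun j _ => ?_
  by_cases hj : (j : ℕ) + 1 < n
  · refine mul_nonneg ?_ (hg _ (by omega))
    rw [hcDiff, dif_pos hj, sub_nonneg]
    exact hd (by rw [Fin.le_def]; simp)
  · have : (∑ b : Fin n, if (b : ℕ) < (j : ℕ) + 1 then g b else 0) = ∑ b, g b :=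
      Finset.sum_congr rfl fun b _ => if_pos (by omega)
    rw [this, hg0, mul_zero]

end

section
open Matrix
open scoped ComplexOrder

/-- The Kempf-Ness type functional. -/
noncomputable def hcPhi {n r : ℕ} (c : Fin r → Fin n → ℝ) (s : ℝ)
    (h : Fin r → Matrix (Fin n) (Fin n) ℂ) (P : Matrix (Fin n) (Fin n) ℂ) : ℝ :=
  ∑ i, ∑ j, c i j * Real.log ((hcPre (h i) j)ᴴ * P * hcPre (h i) j).det.re
    - s * Real.log P.det.re

theorem hcPre_inj {n : ℕ} {h : Matrix (Fin n) (Fin n) ℂ} (hh : h.det ≠ 0) (j : Fin n) :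
    Function.Injective (hcPre h j).mulVec := by
  have h1 : IsUnit h := (isUnit_iff_isUnit_det _).2 (isUnit_iff_ne_zero.2 hh)
  have h2 := Matrix.linearIndependent_cols_iff_isUnit.2 h1
  rw [Matrix.mulVec_injective_iff]
  exact h2.comp Subtype.val Subtype.val_injective

theorem hcPre_rank {n : ℕ} {h : Matrix (Fin n) (Fin n) ℂ} (hh : h.det ≠ 0) (j : Fin n) :
    (hcPre h j).rank = Fintype.card {x : Fin n // x ≤ j} := by
  have h1 := (Matrix.mulVec_injective_iff.1 (hcPre_inj hh j))
  have h2 : LinearIndependent ℂ ((hcPre h j)ᵀ).row := h1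
  rw [← rank_transpose]
  exact h2.rank_matrix

theorem hc_local_log {n : ℕ} {m : Type*} [Fintype m] [DecidableEq m] (N : Matrix (Fin n) m ℂ)
    (e : m → Fin n) (he : Function.Injective e) (δ : ℝ) (hδ : 0 < δ)
    (hN : δ ≤ ‖(N.submatrix e id).det‖ ^ 2) (d : Fin n → ℝ) (hd : ∀ b, 0 < d b) :
    Real.log δ + ∑ x, Real.log (d (e x)) ≤
      Real.log (Nᴴ * diagonal (fun b => (d b : ℂ)) * N).det.re := by
  classical
  set M := N.submatrix e id with hM
  have hMdet : M.det ≠ 0 := by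
    intro h0
    rw [h0, norm_zero] at hN
    norm_num at hN
    linarith
  have hMu : IsUnit M := (isUnit_iff_isUnit_det _).2 (isUnit_iff_ne_zero.2 hMdet)
  have hpd : (Mᴴ * diagonal (fun x => (d (e x) : ℂ)) * M).PosDef := by
    refine PosDef.conjTranspose_mul_mul_same (PosDef.diagonal fun x => ?_) ?_
    · exact Complex.zero_lt_real.2 (hd _)
    · exact Matrix.mulVec_injective_iff_isUnit.2 hMu
  have hdet : (Mᴴ * diagonal (fun x => (d (e x) : ℂ)) * M).det.re =
      ‖M.det‖ ^ 2 * ∏ x, d (e x) := by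
    have : (Mᴴ * diagonal (fun x => (d (e x) : ℂ)) * M).det =
        ((‖M.det‖ ^ 2 * ∏ x, d (e x) : ℝ) : ℂ) := by
      rw [det_mul, det_mul, det_diagonal, det_conjTranspose]
      push_cast
      rw [← Complex.conj_mul']
      simp only [RCLike.star_def]
      ring
    rw [this, Complex.ofReal_re]
  have hle : (Nᴴ * diagonal (fun b => (d b : ℂ)) * N -
      Mᴴ * diagonal (fun x => (d (e x) : ℂ)) * M).PosSemidef := by
    have h1 : Mᴴ * diagonal (fun x => (d (e x) : ℂ)) * M =
        Nᴴ * diagonal (fun b => ((if b ∈ Set.range e then d b else 0 : ℝ) : ℂ)) * N := by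
      ext a b
      simp only [mul_apply (N := N), mul_apply (N := M), mul_diagonal, conjTranspose_apply]
      refine Fintype.sum_of_injective e he _ _ ?_ ?_
      · intro i hi
        rw [if_neg hi]; simp
      · intro x
        rw [if_pos ⟨x, rfl⟩]
        rfl
    rw [h1, ← Matrix.sub_mul, ← Matrix.mul_sub, diagonal_sub]
    refine PosSemidef.conjTranspose_mul_mul_same (PosSemidef.diagonal ?_) _
    intro b
    simp only [Pi.zero_apply]
    rw [← Complex.ofReal_sub]
    apply Complex.zero_le_real.2
    split_ifs
    · simp
    · simpa using (hd b).le
  have hmono := hc_det_mono hpd hle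
  have hpos := hc_det_re_pos hpd
  refine le_trans ?_ (Real.log_le_log hpos hmono)
  have hprod : 0 < ∏ x, d (e x) := Finset.prod_pos fun x _ => hd _
  rw [hdet, Real.log_mul (by positivity) hprod.ne', Real.log_prod (fun x _ => (hd _).ne')]
  gcongr

theorem hc_local_bound {n r : ℕ} {c : Fin r → Fin n → ℝ} (hc : ∀ i j, 0 ≤ c i j) {s : ℝ}
    (h : Fin r → Matrix (Fin n) (Fin n) ℂ) (hdet : ∀ i, (h i).det ≠ 0) (hs : HcSemi c s h)
    (htr : ∑ i, ∑ j, c i j * (Fintype.card {x : Fin n // x ≤ j} : ℝ) = s * n)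
    (w0 : Matrix (Fin n) (Fin n) ℂ) (hw0 : w0 * w0ᴴ = 1) :
    ∃ C : ℝ, ∀ᶠ w in nhds w0, w * wᴴ = 1 → ∀ d : Fin n → ℝ, Antitone d → (∀ b, 0 < d b) →
      C ≤ hcPhi c s h (wᴴ * diagonal (fun b => (d b : ℂ)) * w) := by
  classical
  have hw0' : IsUnit w0.det := by
    have := hc_unitary_det (mul_eq_one_comm.1 hw0)
    exact isUnit_iff_ne_zero.2 this
  have hrk : ∀ i j, (w0 * hcPre (h i) j).rank = Fintype.card {x : Fin n // x ≤ j} := by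
    intro i j
    rw [rank_mul_eq_right_of_isUnit_det _ _ hw0', hcPre_rank (hdet i)]
  choose e he hedet hecard using fun i j => hc_greedy (w0 * hcPre (h i) j) (hrk i j)
  let F : Fin r → Fin n → Matrix (Fin n) (Fin n) ℂ → ℝ := fun i j w =>
    ‖((w * hcPre (h i) j).submatrix (e i j) id).det‖ ^ 2
  have hF : ∀ i j, Continuous (F i j) := by
    intro i j
    refine Continuous.pow (Continuous.norm (Continuous.matrix_det ?_)) 2
    refine Continuous.matrix_submatrix ?_ _ _
    fun_prop
  have hF0 : ∀ i j, 0 < F i j w0 := fun i j => by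
    have := norm_pos_iff.2 (hedet i j)
    positivity
  have hev : ∀ᶠ w in nhds w0, ∀ i j, F i j w0 / 2 ≤ F i j w := by
    rw [Filter.eventually_all]
    intro i
    rw [Filter.eventually_all]
    intro j
    have : F i j w0 / 2 < F i j w0 := half_lt_self (hF0 i j)
    filter_upwards [(hF i j).continuousAt.eventually (lt_mem_nhds this)] with w hw
    exact hw.le
  refine ⟨∑ i, ∑ j, c i j * Real.log (F i j w0 / 2), ?_⟩
  filter_upwards [hev] with w hw hww d hd hdpos
  have hlog : ∀ i j, Real.log (F i j w0 / 2) + ∑ x, Real.log (d (e i j x)) ≤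
      Real.log ((hcPre (h i) j)ᴴ * (wᴴ * diagonal (fun b => (d b : ℂ)) * w) *
        hcPre (h i) j).det.re := by
    intro i j
    have := hc_local_log (w * hcPre (h i) j) (e i j) (he i j) (F i j w0 / 2)
      (half_pos (hF0 i j)) (hw i j) d hdpos
    rw [conjTranspose_mul] at this
    simpa only [Matrix.mul_assoc] using this
  have hPdet : (wᴴ * diagonal (fun b => (d b : ℂ)) * w).det.re = ∏ b, d b := by
    have : (wᴴ * diagonal (fun b => (d b : ℂ)) * w).det = ((∏ b, d b : ℝ) : ℂ) := by
      rw [det_mul, det_mul, mul_right_comm, ← det_mul, mul_eq_one_comm.1 hww, det_one, one_mul,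
        det_diagonal]
      push_cast; rfl
    rw [this, Complex.ofReal_re]
  have hmain : s * ∑ b, Real.log (d b) ≤
      ∑ i, ∑ j, c i j * ∑ x, Real.log (d (e i j x)) := by
    let g : Fin n → ℝ := fun b =>
      (∑ i, ∑ j, c i j * ∑ x, if e i j x = b then (1:ℝ) else 0) - s
    have hgf : ∀ f : Fin n → ℝ, ∑ b, g b * f b =
        (∑ i, ∑ j, c i j * ∑ x, f (e i j x)) - s * ∑ b, f b := by
      intro f
      simp only [g, sub_mul, Finset.sum_sub_distrib, Finset.mul_sum, Finset.sum_mul]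
      congr 1
      rw [Finset.sum_comm]
      refine Finset.sum_congr rfl fun i _ => ?_
      rw [Finset.sum_comm]
      refine Finset.sum_congr rfl fun j _ => ?_
      rw [Finset.sum_comm]
      refine Finset.sum_congr rfl fun x _ => ?_
      rw [Finset.sum_eq_single (e i j x)]
      · simp
      · intro b _ hb
        simp [hb.symm]
      · simp
    have habel := hc_abel g (fun b => Real.log (d b)) ?_ ?_ ?_
    · rw [hgf] at habel
      linarith
    · intro a b hab
      exact Real.log_le_log (hdpos _) (hd hab)
    · intro k hk
      have h1 : (∑ b : Fin n, if (b : ℕ) < k then g b else 0) =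
          ∑ b, g b * (if (b : ℕ) < k then 1 else 0) := by
        refine Finset.sum_congr rfl fun b _ => ?_
        split_ifs <;> simp
      rw [h1, hgf]
      have h2 : ∑ b : Fin n, (if (b : ℕ) < k then (1:ℝ) else 0) = k := by
        rw [Fin.sum_univ_eq_sum_range (fun b => if b < k then (1:ℝ) else 0) n,
          ← Finset.sum_filter]
        have : (Finset.range n).filter (fun i => i < k) = Finset.range k := by
          ext i; simp only [Finset.mem_filter, Finset.mem_range]; omega
        rw [this]; simp
      rw [h2, sub_nonneg]
      have h3 := hs k (w0.submatrix (Fin.castLE hk) id) ?_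
      · refine h3.trans ?_
        refine Finset.sum_le_sum fun i _ => Finset.sum_le_sum fun j _ => ?_
        refine mul_le_mul_of_nonneg_left ?_ (hc i j)
        have h4 := hecard i j k hk
        have h5 : w0.submatrix (Fin.castLE hk) id * hcPre (h i) j =
            (w0 * hcPre (h i) j).submatrix (Fin.castLE hk) id := by
          ext a b; simp [mul_apply]
        rw [h5]
        rw [Finset.card_filter] at h4
        exact_mod_cast h4
      · have : w0.submatrix (Fin.castLE hk) id * (w0.submatrix (Fin.castLE hk) id)ᴴ =
            (w0 * w0ᴴ).submatrix (Fin.castLE hk) (Fin.castLE hk) := by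
          ext a b; simp [mul_apply]
        rw [this, hw0]
        exact submatrix_one _ (Fin.castLE_injective hk)
    · have := hgf (fun _ => 1)
      simp only [mul_one, Finset.sum_const, Finset.card_univ, nsmul_eq_mul, Fintype.card_fin]
        at this
      rw [this, htr, sub_self]
  rw [hcPhi, hPdet, Real.log_prod (fun b _ => (hdpos b).ne')]
  have hfin : ∑ i, ∑ j, c i j * (Real.log (F i j w0 / 2) + ∑ x, Real.log (d (e i j x))) ≤
      ∑ i, ∑ j, c i j * Real.log ((hcPre (h i) j)ᴴ * (wᴴ * diagonal (fun b => (d b : ℂ)) * w) *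
        hcPre (h i) j).det.re :=
    Finset.sum_le_sum fun i _ => Finset.sum_le_sum fun j _ =>
      mul_le_mul_of_nonneg_left (hlog i j) (hc i j)
  simp only [mul_add, Finset.sum_add_distrib] at hfin
  linarith

theorem hc_bound {n r : ℕ} {c : Fin r → Fin n → ℝ} (hc : ∀ i j, 0 ≤ c i j) {s : ℝ}
    (h : Fin r → Matrix (Fin n) (Fin n) ℂ) (hdet : ∀ i, (h i).det ≠ 0) (hs : HcSemi c s h)
    (htr : ∑ i, ∑ j, c i j * (Fintype.card {x : Fin n // x ≤ j} : ℝ) = s * n) :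
    ∃ C : ℝ, ∀ P : Matrix (Fin n) (Fin n) ℂ, P.PosDef → C ≤ hcPhi c s h P := by
  have hK : IsCompact {w : Matrix (Fin n) (Fin n) ℂ | w * wᴴ = 1} := hc_isCompact_coisometry
  have key : ∃ C : ℝ, ∀ w ∈ {w : Matrix (Fin n) (Fin n) ℂ | w * wᴴ = 1}, w * wᴴ = 1 →
      ∀ d : Fin n → ℝ, Antitone d → (∀ b, 0 < d b) →
      C ≤ hcPhi c s h (wᴴ * diagonal (fun b => (d b : ℂ)) * w) := by
    refine hK.induction_on (p := fun t => ∃ C : ℝ, ∀ w ∈ t, w * wᴴ = 1 →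
      ∀ d : Fin n → ℝ, Antitone d → (∀ b, 0 < d b) →
      C ≤ hcPhi c s h (wᴴ * diagonal (fun b => (d b : ℂ)) * w)) ?_ ?_ ?_ ?_
    · exact ⟨0, fun w hw => absurd hw (Set.notMem_empty _)⟩
    · rintro t t' htt ⟨C, hC⟩
      exact ⟨C, fun w hw => hC w (htt hw)⟩
    · rintro t t' ⟨C, hC⟩ ⟨C', hC'⟩
      refine ⟨min C C', ?_⟩
      rintro w (hw | hw) h1 d h2 h3
      · exact (min_le_left _ _).trans (hC w hw h1 d h2 h3)
      · exact (min_le_right _ _).trans (hC' w hw h1 d h2 h3)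
    · intro w0 hw0
      obtain ⟨C, hC⟩ := hc_local_bound hc h hdet hs htr w0 hw0
      exact ⟨_, mem_nhdsWithin_of_mem_nhds hC, C, fun w hw => hw⟩
  obtain ⟨C, hC⟩ := key
  refine ⟨C, fun P hP => ?_⟩
  obtain ⟨w, d, h1, h2, h3, h4, σ, h5⟩ := hc_posDef_sorted hP.1
  rw [h4]
  exact hC w h2 h2 d h3 fun b => by rw [h5]; exact hP.eigenvalues_pos _

end

section
open Matrix
open scoped ComplexOrder

theorem hcPre_upper {n : ℕ} (U R : Matrix (Fin n) (Fin n) ℂ) (hR : ∀ i j, j < i → R i j = 0)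
    (j : Fin n) : hcPre (U * R) j = hcPre U j *
      (R.submatrix Subtype.val Subtype.val : Matrix {x : Fin n // x ≤ j} {x : Fin n // x ≤ j} ℂ) := by
  ext a b
  simp only [hcPre, submatrix_apply, mul_apply, id]
  symm
  refine Fintype.sum_of_injective Subtype.val Subtype.val_injective _ _ ?_ ?_
  · intro x hx
    have : ¬ x ≤ j := fun h => hx ⟨⟨x, h⟩, rfl⟩
    rw [hR x b (lt_of_le_of_lt b.2 (not_le.1 this)), mul_zero]
  · intro x; rfl

theorem hc_phi_one {n r : ℕ} (c : Fin r → Fin n → ℝ) (s : ℝ)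
    (U : Fin r → Matrix (Fin n) (Fin n) ℂ) (hU : ∀ i, (U i)ᴴ * U i = 1) :
    hcPhi c s U 1 = 0 := by
  simp [hcPhi, hcPre_isometry (hU _)]

theorem hc_phi_change {n r : ℕ} (c : Fin r → Fin n → ℝ) (s : ℝ)
    (h : Fin r → Matrix (Fin n) (Fin n) ℂ) (hdet : ∀ i, (h i).det ≠ 0)
    (g : Matrix (Fin n) (Fin n) ℂ) (hg : g.det ≠ 0) :
    ∃ U : Fin r → Matrix (Fin n) (Fin n) ℂ, (∀ i, (U i)ᴴ * U i = 1) ∧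
      ∀ Q : Matrix (Fin n) (Fin n) ℂ, Q.PosDef →
        hcPhi c s U Q = hcPhi c s h (gᴴ * Q * g) - hcPhi c s h (gᴴ * g) := by
  choose U R hU hR hUR using fun i => hc_qr (g * h i)
  refine ⟨U, hU, ?_⟩
  have hgh : ∀ i, (g * h i).det ≠ 0 := fun i => by
    rw [det_mul]; exact mul_ne_zero hg (hdet i)
  let R' : ∀ (i : Fin r) (j : Fin n), Matrix {x : Fin n // x ≤ j} {x : Fin n // x ≤ j} ℂ :=
    fun i j => (R i).submatrix Subtype.val Subtype.val
  have hpre : ∀ i j, g * hcPre (h i) j = hcPre (U i) j * R' i j := by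
    intro i j
    rw [← hcPre_mul, hUR i, hcPre_upper _ _ (hR i)]
  have hR' : ∀ i j, (R' i j).det ≠ 0 := by
    intro i j h0
    have h1 := (PosDef.conjTranspose_mul_self _ (hcPre_inj (hgh i) j)).det_pos.ne'
    rw [hcPre_mul, hpre, conjTranspose_mul] at h1
    apply h1
    rw [← Matrix.mul_assoc, det_mul, h0, mul_zero]
  have hlog : ∀ i j (Q : Matrix (Fin n) (Fin n) ℂ), Q.PosDef →
      Real.log ((hcPre (h i) j)ᴴ * (gᴴ * Q * g) * hcPre (h i) j).det.re =
      Real.log (‖(R' i j).det‖ ^ 2) +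
        Real.log ((hcPre (U i) j)ᴴ * Q * hcPre (U i) j).det.re := by
    intro i j Q hQ
    have h1 : (hcPre (h i) j)ᴴ * (gᴴ * Q * g) * hcPre (h i) j =
        (R' i j)ᴴ * ((hcPre (U i) j)ᴴ * Q * hcPre (U i) j) * R' i j := by
      have : (hcPre (h i) j)ᴴ * (gᴴ * Q * g) * hcPre (h i) j =
        (g * hcPre (h i) j)ᴴ * Q * (g * hcPre (h i) j) := by
        rw [conjTranspose_mul]; simp only [Matrix.mul_assoc]
      rw [this, hpre, conjTranspose_mul]; simp only [Matrix.mul_assoc]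
    have hpd : ((hcPre (U i) j)ᴴ * Q * hcPre (U i) j).PosDef :=
      hQ.conjTranspose_mul_mul_same (hcPre_inj (hc_unitary_det (hU i)) j)
    have h2 : ((hcPre (h i) j)ᴴ * (gᴴ * Q * g) * hcPre (h i) j).det =
        ((‖(R' i j).det‖ ^ 2 : ℝ) : ℂ) * ((hcPre (U i) j)ᴴ * Q * hcPre (U i) j).det := by
      rw [h1, det_mul, det_mul, det_conjTranspose]
      push_cast
      rw [← Complex.conj_mul']
      simp only [RCLike.star_def]
      ring
    rw [h2, Complex.re_ofReal_mul, Real.log_mul _ (hc_det_re_pos hpd).ne']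
    have := norm_pos_iff.2 (hR' i j)
    positivity
  have hlogP : ∀ Q : Matrix (Fin n) (Fin n) ℂ, Q.PosDef →
      Real.log (gᴴ * Q * g).det.re = Real.log (‖g.det‖ ^ 2) + Real.log Q.det.re := by
    intro Q hQ
    have h2 : (gᴴ * Q * g).det = ((‖g.det‖ ^ 2 : ℝ) : ℂ) * Q.det := by
      rw [det_mul, det_mul, det_conjTranspose]
      push_cast
      rw [← Complex.conj_mul']
      simp only [RCLike.star_def]
      ring
    rw [h2, Complex.re_ofReal_mul, Real.log_mul _ (hc_det_re_pos hQ).ne']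
    have := norm_pos_iff.2 hg
    positivity
  have hall : ∀ Q : Matrix (Fin n) (Fin n) ℂ, Q.PosDef →
      hcPhi c s h (gᴴ * Q * g) = (∑ i, ∑ j, c i j * Real.log (‖(R' i j).det‖ ^ 2)
        - s * Real.log (‖g.det‖ ^ 2)) + hcPhi c s U Q := by
    intro Q hQ
    simp only [hcPhi, hlog _ _ Q hQ, hlogP Q hQ, mul_add, Finset.sum_add_distrib]
    ring
  intro Q hQ
  have h1 := hall 1 PosDef.one
  rw [hc_phi_one c s U hU, Matrix.mul_one] at h1
  rw [hall Q hQ, h1]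
  ring

theorem hc_phi_cont {n r : ℕ} (c : Fin r → Fin n → ℝ) (s : ℝ)
    (U : Fin r → Matrix (Fin n) (Fin n) ℂ) (hU : ∀ i, (U i)ᴴ * U i = 1)
    (Q : Matrix (Fin n) (Fin n) ℂ) (hQ : Q.PosDef) :
    ContinuousAt (fun U : Fin r → Matrix (Fin n) (Fin n) ℂ => hcPhi c s U Q) U := by
  unfold hcPhi
  refine ContinuousAt.sub ?_ continuousAt_const
  refine tendsto_finsetSum _ fun i _ => tendsto_finsetSum _ fun j _ => ?_
  refine Filter.Tendsto.const_mul _ ?_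
  refine ContinuousAt.log (f := fun U : Fin r → Matrix (Fin n) (Fin n) ℂ =>
    ((hcPre (U i) j)ᴴ * Q * hcPre (U i) j).det.re) ?_ ?_
  · apply Continuous.continuousAt
    refine Complex.continuous_re.comp (Continuous.matrix_det ?_)
    have : Continuous fun U : Fin r → Matrix (Fin n) (Fin n) ℂ => hcPre (U i) j :=
      Continuous.matrix_submatrix (by fun_prop) _ _
    fun_prop
  · exact (hc_det_re_pos
      (hQ.conjTranspose_mul_mul_same (hcPre_inj (hc_unitary_det (hU i)) j))).ne'

theorem hc_minimizer {n r : ℕ} {c : Fin r → Fin n → ℝ} {s : ℝ}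
    (h : Fin r → Matrix (Fin n) (Fin n) ℂ) (hdet : ∀ i, (h i).det ≠ 0)
    (C : ℝ) (hC : ∀ P : Matrix (Fin n) (Fin n) ℂ, P.PosDef → C ≤ hcPhi c s h P) :
    ∃ U : Fin r → Matrix (Fin n) (Fin n) ℂ, (∀ i, (U i)ᴴ * U i = 1) ∧
      ∀ Q : Matrix (Fin n) (Fin n) ℂ, Q.PosDef → 0 ≤ hcPhi c s U Q := by
  let X : Set ℝ := (fun P => hcPhi c s h P) '' {P : Matrix (Fin n) (Fin n) ℂ | P.PosDef}
  have hXne : X.Nonempty := ⟨_, 1, PosDef.one, rfl⟩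
  have hXb : BddBelow X := ⟨C, by rintro _ ⟨P, hP, rfl⟩; exact hC P hP⟩
  have step : ∀ k : ℕ, ∃ U : Fin r → Matrix (Fin n) (Fin n) ℂ, (∀ i, (U i)ᴴ * U i = 1) ∧
      ∀ Q : Matrix (Fin n) (Fin n) ℂ, Q.PosDef → -(1 / ((k : ℝ) + 1)) ≤ hcPhi c s U Q := by
    intro k
    have hδ : (0 : ℝ) < 1 / ((k : ℝ) + 1) := by positivity
    obtain ⟨_, ⟨P, hP, rfl⟩, hlt⟩ := Real.lt_sInf_add_pos hXne hδ
    obtain ⟨g, hg, hPg⟩ := hc_posDef_factor hP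
    obtain ⟨U, hU, hUQ⟩ := hc_phi_change c s h hdet g hg.ne_zero
    refine ⟨U, hU, fun Q hQ => ?_⟩
    rw [hUQ Q hQ, ← hPg]
    have hgu : IsUnit g := (isUnit_iff_isUnit_det _).2 hg
    have hpd : (gᴴ * Q * g).PosDef :=
      hQ.conjTranspose_mul_mul_same (Matrix.mulVec_injective_iff_isUnit.2 hgu)
    have : sInf X ≤ hcPhi c s h (gᴴ * Q * g) := csInf_le hXb ⟨_, hpd, rfl⟩
    simp only at hlt
    linarith
  choose U hU hUQ using step
  have hK : IsCompact (Set.pi Set.univ fun _ : Fin r =>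
      {w : Matrix (Fin n) (Fin n) ℂ | w * wᴴ = 1}) :=
    isCompact_univ_pi fun _ => hc_isCompact_coisometry
  have : FirstCountableTopology (Matrix (Fin n) (Fin n) ℂ) :=
    inferInstanceAs (FirstCountableTopology (Fin n → Fin n → ℂ))
  obtain ⟨V, hV, φ, hφ, hlim⟩ := hK.tendsto_subseq (x := U)
    (fun k i _ => mul_eq_one_comm.1 (hU k i))
  have hV' : ∀ i, (V i)ᴴ * V i = 1 := fun i => mul_eq_one_comm.1 (hV i trivial)
  refine ⟨V, hV', fun Q hQ => ?_⟩
  have h1 := (hc_phi_cont c s V hV' Q hQ).tendsto.comp hlim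
  have h2 : Filter.Tendsto (fun k => -(1 / ((φ k : ℝ) + 1))) Filter.atTop (nhds (-0)) :=
    ((tendsto_one_div_add_atTop_nhds_zero_nat (𝕜 := ℝ)).comp hφ.tendsto_atTop).neg
  rw [neg_zero] at h2
  exact le_of_tendsto_of_tendsto' h2 h1 fun k => hUQ (φ k) Q hQ

theorem hc_critical {n r : ℕ} {c : Fin r → Fin n → ℝ} (hc : ∀ i j, 0 ≤ c i j) {s : ℝ}
    (U : Fin r → Matrix (Fin n) (Fin n) ℂ) (hU : ∀ i, (U i)ᴴ * U i = 1)
    (hmin : ∀ Q : Matrix (Fin n) (Fin n) ℂ, Q.PosDef → 0 ≤ hcPhi c s U Q) :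
    HcSol c s U := by
  refine ⟨hU, ?_⟩
  set Y := ∑ i, ∑ j, (c i j : ℂ) • (hcPre (U i) j * (hcPre (U i) j)ᴴ) with hY
  have hYh : Y.IsHermitian := by
    rw [IsHermitian, hY]
    simp only [conjTranspose_sum, conjTranspose_smul, conjTranspose_mul,
      conjTranspose_conjTranspose, RCLike.star_def, Complex.conj_ofReal]
  have hMh : (Y - (s : ℂ) • (1 : Matrix (Fin n) (Fin n) ℂ)).IsHermitian := by
    refine hYh.sub ?_
    rw [IsHermitian, conjTranspose_smul, conjTranspose_one, RCLike.star_def, Complex.conj_ofReal]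
  set M := Y - (s : ℂ) • (1 : Matrix (Fin n) (Fin n) ℂ) with hM
  obtain ⟨W, hW, hW', hMW⟩ := hc_spectral hMh
  set μ := hMh.eigenvalues with hμ
  have hQ : ∀ ε : ℝ, (1 : Matrix (Fin n) (Fin n) ℂ) - (ε : ℂ) • M =
      W * diagonal (fun k => ((1 - ε * μ k : ℝ) : ℂ)) * Wᴴ := by
    intro ε
    have : diagonal (fun k => ((1 - ε * μ k : ℝ) : ℂ)) =
        (1 : Matrix (Fin n) (Fin n) ℂ) - (ε : ℂ) • diagonal (fun k => (μ k : ℂ)) := by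
      rw [← diagonal_one, ← diagonal_smul, diagonal_sub]
      congr 1
      funext k
      simp
    rw [this, Matrix.mul_sub, Matrix.sub_mul, Matrix.mul_one, hW', Matrix.mul_smul,
      Matrix.smul_mul, ← hMW]
  have htrMM : (M * Y).trace.re = ∑ k, μ k ^ 2 + s * ∑ k, μ k := by
    have h1 : Y = M + (s : ℂ) • 1 := by rw [hM]; simp
    have h2 : M * M = W * diagonal (fun k => ((μ k ^ 2 : ℝ) : ℂ)) * Wᴴ := by
      conv_lhs => rw [hMW]
      rw [show W * diagonal (fun i => (μ i : ℂ)) * Wᴴ * (W * diagonal (fun i => (μ i : ℂ)) * Wᴴ) =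
        W * diagonal (fun i => (μ i : ℂ)) * (Wᴴ * W) * diagonal (fun i => (μ i : ℂ)) * Wᴴ by
          simp only [Matrix.mul_assoc], hW, Matrix.mul_one, Matrix.mul_assoc W,
          diagonal_mul_diagonal]
      congr 3
      funext k
      push_cast; ring
    have h3 : (M * M).trace = ((∑ k, μ k ^ 2 : ℝ) : ℂ) := by
      rw [h2, trace_mul_comm, ← Matrix.mul_assoc, hW, Matrix.one_mul, trace_diagonal]
      push_cast; rfl
    have h4 : M.trace = ((∑ k, μ k : ℝ) : ℂ) := hc_trace_re hMh
    conv_lhs => rw [h1]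
    rw [Matrix.mul_add, trace_add, h3, Matrix.mul_smul, Matrix.mul_one, trace_smul, h4,
      smul_eq_mul, ← Complex.ofReal_mul, ← Complex.ofReal_add, Complex.ofReal_re]
  have hsumtr : ∑ i, ∑ j, c i j * ((hcPre (U i) j)ᴴ * M * hcPre (U i) j).trace.re =
      (M * Y).trace.re := by
    rw [hY]
    simp only [Matrix.mul_sum, trace_sum, Complex.re_sum, Matrix.mul_smul, trace_smul,
      smul_eq_mul, Complex.re_ofReal_mul]
    refine Finset.sum_congr rfl fun i _ => Finset.sum_congr rfl fun j _ => ?_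
    rw [Matrix.mul_assoc, trace_mul_comm, Matrix.mul_assoc]
  let g : ℝ → ℝ := fun ε => -(ε * (∑ k, μ k ^ 2 + s * ∑ k, μ k))
    - s * ∑ k, Real.log (1 - ε * μ k)
  have hg0 : g 0 = 0 := by simp [g]
  have hev : ∀ᶠ ε in nhds (0:ℝ), ∀ k, 0 < 1 - ε * μ k := by
    rw [Filter.eventually_all]
    intro k
    have : Continuous fun ε : ℝ => 1 - ε * μ k := by fun_prop
    exact this.continuousAt.eventually (lt_mem_nhds (by simp))
  have hloc : IsLocalMin g 0 := by
    filter_upwards [hev] with ε hε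
    rw [hg0]
    have hpd : ((1 : Matrix (Fin n) (Fin n) ℂ) - (ε : ℂ) • M).PosDef := by
      rw [hQ]
      have hd : (diagonal (fun k => ((1 - ε * μ k : ℝ) : ℂ))).PosDef :=
        PosDef.diagonal fun k => Complex.zero_lt_real.2 (hε k)
      have hWu : IsUnit Wᴴ := ⟨⟨Wᴴ, W, hW, hW'⟩, rfl⟩
      have := hd.conjTranspose_mul_mul_same (Matrix.mulVec_injective_iff_isUnit.2 hWu)
      rwa [conjTranspose_conjTranspose] at this
    have hdetQ : ((1 : Matrix (Fin n) (Fin n) ℂ) - (ε : ℂ) • M).det.re = ∏ k, (1 - ε * μ k) := by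
      have : ((1 : Matrix (Fin n) (Fin n) ℂ) - (ε : ℂ) • M).det =
          ((∏ k, (1 - ε * μ k) : ℝ) : ℂ) := by
        rw [hQ, det_mul, det_mul, mul_right_comm, ← det_mul, hW', det_one, one_mul, det_diagonal]
        push_cast; rfl
      rw [this, Complex.ofReal_re]
    have h1 := hmin _ hpd
    rw [hcPhi, hdetQ, Real.log_prod (fun k _ => (hε k).ne')] at h1
    have h2 : ∑ i, ∑ j, c i j * Real.log ((hcPre (U i) j)ᴴ *
        ((1 : Matrix (Fin n) (Fin n) ℂ) - (ε : ℂ) • M) * hcPre (U i) j).det.re ≤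
        ∑ i, ∑ j, c i j * (-(ε * ((hcPre (U i) j)ᴴ * M * hcPre (U i) j).trace.re)) := by
      refine Finset.sum_le_sum fun i _ => Finset.sum_le_sum fun j _ => ?_
      refine mul_le_mul_of_nonneg_left ?_ (hc i j)
      have hpd' := hpd.conjTranspose_mul_mul_same (hcPre_inj (hc_unitary_det (hU i)) j)
      refine (hc_log_det_le hpd').trans (le_of_eq ?_)
      rw [Matrix.mul_sub, Matrix.sub_mul, Matrix.mul_one, hcPre_isometry (hU i), trace_sub,
        trace_one, Matrix.mul_smul, Matrix.smul_mul, trace_smul, smul_eq_mul, Complex.sub_re,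
        Complex.re_ofReal_mul, Complex.natCast_re]
      ring
    have h3 : ∑ i, ∑ j, c i j * (-(ε * ((hcPre (U i) j)ᴴ * M * hcPre (U i) j).trace.re)) =
        -(ε * (∑ k, μ k ^ 2 + s * ∑ k, μ k)) := by
      rw [← htrMM, ← hsumtr]
      simp only [Finset.mul_sum, ← Finset.sum_neg_distrib]
      refine Finset.sum_congr rfl fun i _ => Finset.sum_congr rfl fun j _ => ?_
      ring
    simp only [g]
    linarith
  have hder : HasDerivAt g (-(∑ k, μ k ^ 2)) 0 := by
    have h1 : HasDerivAt (fun ε : ℝ => ∑ k, Real.log (1 - ε * μ k)) (∑ k, (-μ k)) 0 := by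
      refine HasDerivAt.fun_sum fun k _ => ?_
      have h2 : HasDerivAt (fun ε : ℝ => 1 - ε * μ k) (-μ k) 0 := by
        simpa using ((hasDerivAt_id (0:ℝ)).mul_const (μ k)).const_sub 1
      simpa using h2.log (by simp)
    have h3 : HasDerivAt (fun ε : ℝ => -(ε * (∑ k, μ k ^ 2 + s * ∑ k, μ k)))
        (-(∑ k, μ k ^ 2 + s * ∑ k, μ k)) 0 := by
      exact (((hasDerivAt_id (0:ℝ)).mul_const (∑ k, μ k ^ 2 + s * ∑ k, μ k)).fun_neg).congr_deriv (by simp)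
    refine (h3.sub (h1.const_mul s)).congr_deriv ?_
    rw [Finset.sum_neg_distrib]
    ring
  have hzero := hloc.hasDerivAt_eq_zero hder
  have hsq : ∑ k, μ k ^ 2 = 0 := by linarith
  have hμ0 : ∀ k, μ k = 0 := fun k => by
    have := (Finset.sum_eq_zero_iff_of_nonneg (fun k _ => sq_nonneg (μ k))).1 hsq k
      (Finset.mem_univ k)
    exact pow_eq_zero_iff (two_ne_zero) |>.1 this
  have hM0 : M = 0 := by
    rw [hMW]
    have : diagonal (fun i => (μ i : ℂ)) = (0 : Matrix (Fin n) (Fin n) ℂ) := by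
      ext a b; simp [diagonal_apply, hμ0]
    rw [this]; simp
  exact sub_eq_zero.1 (hM.symm.trans hM0)

/-- Horn type problem is closed under addition. -/
theorem hc_main {n r : ℕ} {c c' : Fin r → Fin n → ℝ} (hc : ∀ i j, 0 ≤ c i j)
    (hc' : ∀ i j, 0 ≤ c' i j) {s s' : ℝ}
    (h1 : ∃ U, HcSol c s U) (h2 : ∃ U, HcSol c' s' U) : ∃ U, HcSol (c + c') (s + s') U := by
  obtain ⟨U, hU⟩ := h1
  obtain ⟨V, hV⟩ := h2
  obtain ⟨h, hdet, hsemi⟩ := hc_generic hc hc' hU hV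
  have hcc : ∀ i j, 0 ≤ (c + c') i j := fun i j => add_nonneg (hc i j) (hc' i j)
  have htr : ∑ i, ∑ j, (c + c') i j * (Fintype.card {x : Fin n // x ≤ j} : ℝ) = (s + s') * n := by
    have e1 := hc_sol_trace hU
    have e2 := hc_sol_trace hV
    simp only [Pi.add_apply, add_mul, Finset.sum_add_distrib]
    rw [e1, e2]
  obtain ⟨C, hC⟩ := hc_bound hcc h hdet hsemi htr
  obtain ⟨W, hW, hmin⟩ := hc_minimizer h hdet C hC
  exact ⟨W, hc_critical hcc W hW hmin⟩

end

section
open Matrix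
open scoped ComplexOrder

theorem hc_hull_weights {E : Type*} [AddCommGroup E] [Module ℝ E] {r : ℕ} (f : Fin r → E) {x : E}
    (hx : x ∈ convexHull ℝ (Set.range f)) :
    ∃ t : Fin r → ℝ, (∀ i, 0 ≤ t i) ∧ ∑ i, t i = 1 ∧ ∑ i, t i • f i = x := by
  have hsub : convexHull ℝ (Set.range f) ⊆
      {x | ∃ t : Fin r → ℝ, (∀ i, 0 ≤ t i) ∧ ∑ i, t i = 1 ∧ ∑ i, t i • f i = x} := by
    refine convexHull_min ?_ ?_
    · rintro _ ⟨i, rfl⟩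
      refine ⟨Pi.single i 1, fun j => ?_, by simp, ?_⟩
      · by_cases h : j = i
        · subst h; simp
        · simp [h]
      · rw [Finset.sum_eq_single i]
        · simp
        · intro j _ h; simp [h]
        · simp
    · rintro _ ⟨t, h0, h1, rfl⟩ _ ⟨t', h0', h1', rfl⟩ a b ha hb hab
      refine ⟨fun i => a * t i + b * t' i, fun i => ?_, ?_, ?_⟩
      · have := h0 i
        have := h0' i
        positivity
      · rw [Finset.sum_add_distrib, ← Finset.mul_sum, ← Finset.mul_sum, h1, h1']; linarith
      · simp only [add_smul, mul_smul, Finset.sum_add_distrib, Finset.smul_sum]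
  exact hsub hx

theorem hc_perm_of_multiset {n : ℕ} {f g : Fin n → ℂ}
    (h : Multiset.map f Finset.univ.val = Multiset.map g Finset.univ.val) :
    ∃ σ : Equiv.Perm (Fin n), ∀ i, g (σ i) = f i := by
  classical
  have hc : ∀ c, Fintype.card {a // f a = c} = Fintype.card {a // g a = c} := by
    intro c
    have := congrArg (Multiset.count c) h
    rw [Multiset.count_map, Multiset.count_map] at this
    rw [Fintype.card_subtype, Fintype.card_subtype]
    simp only [Finset.card_def, Finset.filter_val]
    simpa only [eq_comm] using this
  refine ⟨Equiv.ofFiberEquiv (fun c => Fintype.equivOfCardEq (hc c)), fun i => ?_⟩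
  exact Equiv.ofFiberEquiv_map _ i

theorem hc_orbit_unitary {n : ℕ} {lam : Fin n → ℝ} {A : Matrix (Fin n) (Fin n) ℂ}
    (h : A ∈ coadjointOrbit lam) :
    ∃ U : Matrix (Fin n) (Fin n) ℂ, Uᴴ * U = 1 ∧ A = U * diagonal (fun i => (lam i : ℂ)) * Uᴴ := by
  obtain ⟨_, hA, σ, hσ⟩ := h
  obtain ⟨U, hU, hU', hAU⟩ := hc_spectral hA
  refine ⟨U.submatrix id σ, ?_, ?_⟩
  · rw [conjTranspose_submatrix, ← submatrix_mul _ _ _ id _ Function.bijective_id, hU]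
    simp
  · conv_lhs => rw [hAU]
    rw [conjTranspose_submatrix]
    have : diagonal (fun i => (lam i : ℂ)) =
      (diagonal (fun i => (hA.eigenvalues i : ℂ))).submatrix σ σ := by
      rw [submatrix_diagonal_equiv]; congr 1; ext i; simp [hσ]
    rw [this, submatrix_mul_equiv, submatrix_mul_equiv]
    simp

theorem hc_unitary_orbit {n : ℕ} {lam : Fin n → ℝ} (h0 : ∑ i, lam i = 0)
    {U : Matrix (Fin n) (Fin n) ℂ} (hU : Uᴴ * U = 1) :
    U * diagonal (fun i => (lam i : ℂ)) * Uᴴ ∈ coadjointOrbit lam := by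
  have hH : (U * diagonal (fun i => (lam i : ℂ)) * Uᴴ).IsHermitian := by
    apply isHermitian_mul_mul_conjTranspose
    rw [isHermitian_diagonal_iff]
    intro i
    exact Complex.conj_ofReal _
  refine ⟨?_, hH, ?_⟩
  · rw [trace_mul_comm, ← Matrix.mul_assoc, hU, Matrix.one_mul, trace_diagonal]
    exact_mod_cast h0
  · have hch : (U * diagonal (fun i => (lam i : ℂ)) * Uᴴ).charpoly.roots =
        Multiset.map (fun i => (lam i : ℂ)) Finset.univ.val := by
      rw [charpoly_mul_comm, ← Matrix.mul_assoc, hU, Matrix.one_mul, charpoly_diagonal]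
      have := Polynomial.roots_multiset_prod_X_sub_C
        (Multiset.map (fun i => (lam i : ℂ)) Finset.univ.val)
      rw [Multiset.map_map] at this
      exact this
    rw [hH.roots_charpoly_eq_eigenvalues] at hch
    obtain ⟨σ, hσ⟩ := hc_perm_of_multiset hch.symm
    refine ⟨σ, fun i => ?_⟩
    have := hσ i
    simpa using this

theorem hc_flag_sum {n : ℕ} (lam : Fin n → ℝ) (U : Matrix (Fin n) (Fin n) ℂ) :
    ∑ j, (hcDiff lam j : ℂ) • (hcPre U j * (hcPre U j)ᴴ) =
      U * diagonal (fun x => (lam x : ℂ)) * Uᴴ := by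
  have h1 : ∀ j, hcPre U j * (hcPre U j)ᴴ =
      U * diagonal (fun x => if x ≤ j then (1 : ℂ) else 0) * Uᴴ := by
    intro j
    ext a b
    rw [Matrix.mul_apply, Matrix.mul_apply]
    simp only [mul_diagonal, conjTranspose_apply, hcPre, submatrix_apply, id]
    have h2 : ∀ x, (U a x * if x ≤ j then (1 : ℂ) else 0) * star (U b x) =
        if x ≤ j then U a x * star (U b x) else 0 := by
      intro x; split_ifs <;> simp
    simp only [h2]
    rw [← Finset.sum_filter]
    symm
    exact Finset.sum_subtype _ (by simp) _
  simp only [h1]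
  have h3 : ∀ j, (hcDiff lam j : ℂ) • (U * diagonal (fun x => if x ≤ j then (1 : ℂ) else 0) * Uᴴ) =
      U * ((hcDiff lam j : ℂ) • diagonal (fun x => if x ≤ j then (1 : ℂ) else 0)) * Uᴴ := by
    intro j
    rw [Matrix.mul_smul, Matrix.smul_mul]
  simp only [h3]
  rw [← Finset.sum_mul, ← Finset.mul_sum]
  congr 2
  ext a b
  rw [Matrix.sum_apply]
  by_cases hab : a = b
  · subst hab
    simp only [Matrix.smul_apply, diagonal_apply_eq, smul_eq_mul]
    rw [← hc_telescope lam a]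
    push_cast
    refine Finset.sum_congr rfl fun j _ => ?_
    split_ifs <;> simp
  · simp [hab]

theorem hcDiff_nonneg {n : ℕ} {lam : Fin n → ℝ} (h : Antitone lam) (h0 : ∀ i, 0 ≤ lam i) (j : Fin n) :
    0 ≤ hcDiff lam j := by
  unfold hcDiff
  split_ifs with hj
  · have : lam ⟨j + 1, hj⟩ ≤ lam j := h (by rw [Fin.le_def]; simp)
    linarith
  · simpa using h0 j

theorem hcDiff_add {n : ℕ} (lam mu : Fin n → ℝ) (j : Fin n) :
    hcDiff (lam + mu) j = hcDiff lam j + hcDiff mu j := by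
  unfold hcDiff
  split_ifs <;> simp <;> ring

theorem hc_unitary_right {n : ℕ} {U : Matrix (Fin n) (Fin n) ℂ} (hU : Uᴴ * U = 1) : U * Uᴴ = 1 :=
  mul_eq_one_comm.mp hU

theorem hc_conj_shift {n : ℕ} (lam : Fin n → ℝ) (K : ℝ) {U : Matrix (Fin n) (Fin n) ℂ}
    (hU : Uᴴ * U = 1) :
    U * diagonal (fun x => ((lam x + K : ℝ) : ℂ)) * Uᴴ =
      U * diagonal (fun x => (lam x : ℂ)) * Uᴴ + (K : ℂ) • 1 := by
  have : diagonal (fun x => ((lam x + K : ℝ) : ℂ)) =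
      diagonal (fun x => (lam x : ℂ)) + (K : ℂ) • 1 := by
    ext a b
    by_cases h : a = b
    · subst h; simp
    · simp [h]
  rw [this, Matrix.mul_add, Matrix.add_mul]
  simp [hc_unitary_right hU]

/-- Averaging over cyclic shifts of the weights. -/
theorem hc_symmetrize {n r : ℕ} (hr : 1 ≤ r) {lam : Fin n → ℝ} (hl : Antitone lam)
    (h : (0 : Matrix (Fin n) (Fin n) ℂ) ∈ partialConvexHull r (coadjointOrbit lam)) :
    ∃ K : ℝ, (∀ i, 0 ≤ lam i + K) ∧
      ∃ U, HcSol (fun (_ : Fin r) j => hcDiff (fun x => lam x + K) j) (r * K) U := by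
  have : NeZero r := ⟨by omega⟩
  obtain ⟨f, hf, h0⟩ := h
  obtain ⟨t, ht0, ht1, hts⟩ := hc_hull_weights f h0
  choose U hU hfU using fun i => hc_orbit_unitary (hf i)
  let K : ℝ := ∑ i, |lam i|
  have hK : ∀ i, 0 ≤ lam i + K := by
    intro i
    have h1 : |lam i| ≤ K := Finset.single_le_sum (f := fun i => |lam i|)
      (fun j _ => abs_nonneg _) (Finset.mem_univ i)
    have := neg_abs_le (lam i)
    linarith
  refine ⟨K, hK, ?_⟩
  set lt : Fin n → ℝ := fun x => lam x + K with hlt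
  have hanti : Antitone lt := fun i j hij => by simpa [hlt] using hl hij
  have hd : ∀ j, 0 ≤ hcDiff lt j := hcDiff_nonneg hanti hK
  have hshift : ∀ k : Fin r, HcSol (fun i j => t (i + k) * hcDiff lt j) K (fun i => U (i + k)) := by
    intro k
    refine ⟨fun i => hU _, ?_⟩
    have e : ∀ i : Fin r, ∑ j, ((t i * hcDiff lt j : ℝ) : ℂ) • (hcPre (U i) j * (hcPre (U i) j)ᴴ) =
        t i • f i + ((t i * K : ℝ) : ℂ) • 1 := by
      intro i
      have h1 := hc_flag_sum lt (U i)
      rw [hlt, hc_conj_shift lam K (hU i), ← hfU i, ← hlt] at h1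
      have h2 := congrArg (fun M => (t i : ℂ) • M) h1
      simp only [Finset.smul_sum, smul_smul, smul_add] at h2
      push_cast
      rw [h2]
      congr 1
    have e2 := Equiv.sum_comp (Equiv.addRight k)
      (fun i => ∑ j, ((t i * hcDiff lt j : ℝ) : ℂ) • (hcPre (U i) j * (hcPre (U i) j)ᴴ))
    simp only [Equiv.coe_addRight] at e2
    rw [e2]
    simp only [e]
    rw [Finset.sum_add_distrib, hts, zero_add, ← Finset.sum_smul]
    congr 1
    rw [← Complex.ofReal_sum, ← Finset.sum_mul, ht1, one_mul]
  have hind : ∀ S : Finset (Fin r),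
      ∃ V, HcSol (fun i j => ∑ k ∈ S, t (i + k) * hcDiff lt j) (S.card * K) V := by
    intro S
    induction S using Finset.induction_on with
    | empty => exact ⟨fun _ => 1, fun _ => by simp, by simp⟩
    | insert a S ha ih =>
      have := hc_main (fun i j => mul_nonneg (ht0 (i + a)) (hd j))
        (fun i j => Finset.sum_nonneg fun k _ => mul_nonneg (ht0 (i + k)) (hd j)) ⟨_, hshift a⟩ ih
      obtain ⟨V, hV⟩ := this
      refine ⟨V, ?_⟩
      convert hV using 1
      · ext i j; simp [Finset.sum_insert ha]
      · rw [Finset.card_insert_of_notMem ha]; push_cast; ring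
  obtain ⟨V, hV⟩ := hind Finset.univ
  refine ⟨V, ?_⟩
  convert hV using 1
  · ext i j
    rw [← Finset.sum_mul]
    have := Equiv.sum_comp (Equiv.addLeft i) t
    simp only [Equiv.coe_addLeft] at this
    rw [this, ht1, one_mul]
  · simp

theorem hc_final_add {n r : ℕ} (hr : 1 ≤ r) {lam mu : Fin n → ℝ} (hl : Antitone lam)
    (hm : Antitone mu) (hl0 : ∑ i, lam i = 0) (hm0 : ∑ i, mu i = 0)
    (h : (0 : Matrix (Fin n) (Fin n) ℂ) ∈ partialConvexHull r (coadjointOrbit lam))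
    (h' : (0 : Matrix (Fin n) (Fin n) ℂ) ∈ partialConvexHull r (coadjointOrbit mu)) :
    (0 : Matrix (Fin n) (Fin n) ℂ) ∈ partialConvexHull r (coadjointOrbit (lam + mu)) := by
  obtain ⟨K, hK, hU⟩ := hc_symmetrize hr hl h
  obtain ⟨L, hL, hV⟩ := hc_symmetrize hr hm h'
  have ha : Antitone (fun x => lam x + K) := fun i j hij => by simpa using hl hij
  have hb : Antitone (fun x => mu x + L) := fun i j hij => by simpa using hm hij
  obtain ⟨W, hW, hS⟩ := hc_main (fun _ j => hcDiff_nonneg ha hK j)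
    (fun _ j => hcDiff_nonneg hb hL j) hU hV
  have hr0 : (r : ℝ) ≠ 0 := by positivity
  refine ⟨fun i => W i * diagonal (fun x => ((lam + mu) x : ℂ)) * (W i)ᴴ, fun i => ?_, ?_⟩
  · have := hc_unitary_orbit (lam := lam + mu)
      (by simp [Finset.sum_add_distrib, hl0, hm0]) (hW i)
    simpa using this
  · have e : ∀ i, ∑ j, (((fun (_ : Fin r) j => hcDiff (fun x => lam x + K) j) +
        (fun (_ : Fin r) j => hcDiff (fun x => mu x + L) j)) i j : ℂ) •
          (hcPre (W i) j * (hcPre (W i) j)ᴴ) =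
        W i * diagonal (fun x => ((lam + mu) x : ℂ)) * (W i)ᴴ + ((K + L : ℝ) : ℂ) • 1 := by
      intro i
      rw [← hc_conj_shift (lam + mu) (K + L) (hW i)]
      have : (fun x => (lam + mu) x + (K + L)) = (fun x => lam x + K) + (fun x => mu x + L) := by
        ext x; simp; ring
      have h2 := hc_flag_sum (fun x => (lam + mu) x + (K + L)) (W i)
      rw [← h2, this]
      simp only [hcDiff_add, Pi.add_apply]
    simp only [e] at hS
    rw [Finset.sum_add_distrib] at hS
    have hz : ∑ i, W i * diagonal (fun x => ((lam + mu) x : ℂ)) * (W i)ᴴ = 0 := by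
      have : ∑ i : Fin r, ((K + L : ℝ) : ℂ) • (1 : Matrix (Fin n) (Fin n) ℂ) =
          ((r * K + r * L : ℝ) : ℂ) • 1 := by
        rw [Finset.sum_const, Finset.card_univ, Fintype.card_fin, ← Nat.cast_smul_eq_nsmul ℂ,
          smul_smul]
        congr 1
        push_cast; ring
      rw [this] at hS
      simpa using hS
    refine mem_convexHull_of_exists_fintype (fun _ : Fin r => (r : ℝ)⁻¹) _ (fun _ => by positivity)
      (by simp [hr0]) (fun i => Set.mem_range_self i) ?_
    rw [← Finset.smul_sum, hz, smul_zero]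

theorem hc_final_smul {n r : ℕ} {lam : Fin n → ℝ} (hl0 : ∑ i, lam i = 0) (c : ℝ)
    (h : (0 : Matrix (Fin n) (Fin n) ℂ) ∈ partialConvexHull r (coadjointOrbit lam)) :
    (0 : Matrix (Fin n) (Fin n) ℂ) ∈ partialConvexHull r (coadjointOrbit (c • lam)) := by
  obtain ⟨f, hf, h0⟩ := h
  obtain ⟨t, ht0, ht1, hts⟩ := hc_hull_weights f h0
  refine ⟨fun i => c • f i, fun i => ?_, ?_⟩
  · obtain ⟨U, hU, hfU⟩ := hc_orbit_unitary (hf i)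
    have := hc_unitary_orbit (lam := c • lam)
      (by simp [← Finset.mul_sum, hl0]) hU
    convert this using 1
    show c • f i = _
    rw [hfU, ← Matrix.smul_mul, ← Matrix.mul_smul]
    congr 2
    ext a b
    by_cases hab : a = b
    · subst hab; simp
    · simp [hab]
  · refine mem_convexHull_of_exists_fintype t _ ht0 ht1 (fun i => Set.mem_range_self i) ?_
    simp only [smul_comm _ c]
    rw [← Finset.smul_sum, hts, smul_zero]

theorem hc_final_zero {n r : ℕ} (hr : 1 ≤ r) :
    (0 : Matrix (Fin n) (Fin n) ℂ) ∈ partialConvexHull r (coadjointOrbit 0) := by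
  refine ⟨fun _ => 0, fun i => ?_, ?_⟩
  · have := hc_unitary_orbit (n := n) (lam := 0) (by simp) (U := 1) (by simp)
    simpa using this
  · exact subset_convexHull _ _ ⟨⟨0, hr⟩, rfl⟩

end

/-- The set `𝔄_r` of decreasing trace-free `λ ∈ ℝ^n` with `0 ∈ C_r(O_λ)` is a convex cone:
it contains `0`, is closed under addition, and under multiplication by nonnegative scalars. -/
theorem Ar_isConvexCone (n : ℕ) (hn : 2 ≤ n) (r : ℕ) (hr : 1 ≤ r) :
    (0 : Fin n → ℝ) ∈ {lam : Fin n → ℝ | Antitone lam ∧ ∑ i, lam i = 0 ∧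
        (0 : Matrix (Fin n) (Fin n) ℂ) ∈ partialConvexHull r (coadjointOrbit lam)} ∧
    (∀ lam mu : Fin n → ℝ,
      lam ∈ {lam : Fin n → ℝ | Antitone lam ∧ ∑ i, lam i = 0 ∧
        (0 : Matrix (Fin n) (Fin n) ℂ) ∈ partialConvexHull r (coadjointOrbit lam)} →
      mu ∈ {lam : Fin n → ℝ | Antitone lam ∧ ∑ i, lam i = 0 ∧
        (0 : Matrix (Fin n) (Fin n) ℂ) ∈ partialConvexHull r (coadjointOrbit lam)} →
      lam + mu ∈ {lam : Fin n → ℝ | Antitone lam ∧ ∑ i, lam i = 0 ∧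
        (0 : Matrix (Fin n) (Fin n) ℂ) ∈ partialConvexHull r (coadjointOrbit lam)}) ∧
    (∀ (c : ℝ), 0 ≤ c → ∀ lam : Fin n → ℝ,
      lam ∈ {lam : Fin n → ℝ | Antitone lam ∧ ∑ i, lam i = 0 ∧
        (0 : Matrix (Fin n) (Fin n) ℂ) ∈ partialConvexHull r (coadjointOrbit lam)} →
      c • lam ∈ {lam : Fin n → ℝ | Antitone lam ∧ ∑ i, lam i = 0 ∧
        (0 : Matrix (Fin n) (Fin n) ℂ) ∈ partialConvexHull r (coadjointOrbit lam)}) := by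
  refine ⟨⟨fun _ _ _ => le_refl _, by simp, hc_final_zero hr⟩, ?_, ?_⟩
  · rintro lam mu ⟨h1, h2, h3⟩ ⟨h1', h2', h3'⟩
    exact ⟨h1.add h1', by simp [Finset.sum_add_distrib, h2, h2'],
      hc_final_add hr h1 h1' h2 h2' h3 h3'⟩
  · rintro c hc lam ⟨h1, h2, h3⟩
    exact ⟨fun i j hij => mul_le_mul_of_nonneg_left (h1 hij) hc,
      by simp [← Finset.mul_sum, h2], hc_final_smul h2 c h3⟩
end

section
/- Let n ≥ 2, let λ ∈ ℝ^n satisfy λ_1 ≥ … ≥ λ_n and λ_1+…+λ_n = 0, and let r ≥ 1 be an integer. Then the r-th partial convex hull C_r(O_λ) is a convex set if and only if the r-fold Minkowski sum O_λ + O_λ + … + O_λ (r summands) is a convex set. -/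
section
open Cardinal in
theorem exists_transc_aut (S : Set ℂ) (hS : S.Countable) :
    ∃ z : ℂ, ∀ a b : ℚ, b ≠ 0 → ∃ τ : ℂ ≃+* ℂ, (∀ s ∈ S, τ s = s) ∧ τ z = a + b * z := by
  classical
  let k : Subfield ℂ := Subfield.closure S
  have hk : Cardinal.mk k ≤ ℵ₀ := (Subfield.cardinalMk_closure_le_max S).trans
    (max_le (Cardinal.mk_le_aleph0_iff.2 hS) le_rfl)
  have hex : ∃ z : ℂ, Transcendental k z := by
    by_contra! h
    have halg : Algebra.IsAlgebraic k ℂ := ⟨fun z => by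
      have := h z
      unfold Transcendental at this
      exact not_not.1 this⟩
    have h1 := Algebra.IsAlgebraic.cardinalMk_le_max k ℂ
    have h2 : Cardinal.mk ℂ ≤ ℵ₀ := h1.trans (max_le hk le_rfl)
    rw [Cardinal.mk_complex] at h2
    exact absurd h2 (not_le.2 Cardinal.aleph0_lt_continuum)
  obtain ⟨z, hz⟩ := hex
  have hz1 : AlgebraicIndepOn k id ({z} : Set ℂ) :=
    (algebraicIndependent_singleton_iff (ι := ({z} : Set ℂ)) ⟨z, rfl⟩).2 hz
  obtain ⟨t, hzt, ht⟩ := exists_isTranscendenceBasis_superset hz1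
  have hzt' : z ∈ t := hzt rfl
  refine ⟨z, fun a b hb => ?_⟩
  let z0 : t := ⟨z, hzt'⟩
  let f : t → MvPolynomial t k := Function.update MvPolynomial.X z0
    (MvPolynomial.C (a : k) + MvPolynomial.C (b : k) * MvPolynomial.X z0)
  let g : t → MvPolynomial t k := Function.update MvPolynomial.X z0
    (MvPolynomial.C (b⁻¹ : k) * (MvPolynomial.X z0 - MvPolynomial.C (a : k)))
  have hbk : (b : k) ≠ 0 := by exact_mod_cast hb
  have hbb : (MvPolynomial.C (b : k) : MvPolynomial t k) * MvPolynomial.C (b⁻¹ : k) = 1 := by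
    rw [← MvPolynomial.C_mul, mul_inv_cancel₀ hbk, MvPolynomial.C_1]
  let e : MvPolynomial t k ≃ₐ[k] MvPolynomial t k :=
    AlgEquiv.ofAlgHom (MvPolynomial.aeval f) (MvPolynomial.aeval g)
      (by
        apply MvPolynomial.algHom_ext
        intro i
        by_cases hi : i = z0
        · subst hi
          simp only [AlgHom.comp_apply, MvPolynomial.aeval_X, g, f, Function.update_self, map_mul,
            map_sub, MvPolynomial.algHom_C, AlgHom.id_apply, MvPolynomial.algebraMap_eq]
          linear_combination (MvPolynomial.X z0) * hbb
        · simp [g, f, Function.update_of_ne hi])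
      (by
        apply MvPolynomial.algHom_ext
        intro i
        by_cases hi : i = z0
        · subst hi
          simp only [AlgHom.comp_apply, MvPolynomial.aeval_X, g, f, Function.update_self, map_mul,
            map_add, MvPolynomial.algHom_C, AlgHom.id_apply, MvPolynomial.algebraMap_eq]
          linear_combination (MvPolynomial.X z0 - MvPolynomial.C (a : k)) * hbb
        · simp [g, f, Function.update_of_ne hi])
  let E : Algebra.adjoin k (Set.range ((↑) : t → ℂ)) ≃ₐ[k]
      Algebra.adjoin k (Set.range ((↑) : t → ℂ)) :=
    ht.1.aevalEquiv.symm.trans (e.trans ht.1.aevalEquiv)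
  let _ := IsAlgClosed.isAlgClosure_of_transcendence_basis _ ht
  let τ : ℂ ≃+* ℂ := IsAlgClosure.equivOfEquiv ℂ ℂ E.toRingEquiv
  have key : ∀ x : Algebra.adjoin k (Set.range ((↑) : t → ℂ)), τ (x : ℂ) = (E x : ℂ) :=
    fun x => IsAlgClosure.equivOfEquiv_algebraMap ℂ ℂ E.toRingEquiv x
  refine ⟨τ, fun s hs => ?_, ?_⟩
  · have := key (algebraMap k _ ⟨s, Subfield.subset_closure hs⟩)
    rw [AlgEquiv.commutes] at this
    exact this
  · have := key (ht.1.aevalEquiv (MvPolynomial.X z0))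
    have h1 : ((ht.1.aevalEquiv (MvPolynomial.X z0) : Algebra.adjoin k _) : ℂ) = z := by
      have := ht.1.algebraMap_aevalEquiv (MvPolynomial.X z0)
      rw [MvPolynomial.aeval_X] at this
      exact this
    rw [h1] at this
    rw [this]
    have h2 : E (ht.1.aevalEquiv (MvPolynomial.X z0)) = ht.1.aevalEquiv (f z0) := by
      simp [E, e]
    rw [h2]
    refine (ht.1.algebraMap_aevalEquiv (f z0)).trans ?_
    simp [f, z0]

theorem cv_rank_map_le {m n : Type*} [Fintype m] [Fintype n] [DecidableEq m] [DecidableEq n]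
    (A : Matrix m n ℂ) (τ : ℂ ≃+* ℂ) : (A.map τ).rank ≤ A.rank := by
  let W := Submodule.span ℂ (Set.range A.col)
  have hr : Module.finrank ℂ W = A.rank := (Matrix.rank_eq_finrank_span_cols A).symm
  let b := Module.finBasisOfFinrankEq ℂ W hr
  let B : Matrix m (Fin A.rank) ℂ := fun i l => (b l : m → ℂ) i
  have hmem : ∀ j, A.col j ∈ W := fun j => Submodule.subset_span ⟨j, rfl⟩
  let C : Matrix (Fin A.rank) n ℂ := fun l j => b.repr ⟨A.col j, hmem j⟩ l
  have h : A = B * C := by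
    ext i j
    have := b.sum_repr ⟨A.col j, hmem j⟩
    have h2 := congrFun (congrArg (Subtype.val) this) i
    rw [Matrix.mul_apply]
    simp only [Submodule.coe_sum, Submodule.coe_smul, Finset.sum_apply, Pi.smul_apply,
      smul_eq_mul] at h2
    rw [show A i j = A.col j i from rfl, ← h2]
    exact Finset.sum_congr rfl fun l _ => mul_comm _ _
  have h2 : A.map τ = B.map τ * C.map τ := by
    conv_lhs => rw [h]
    exact Matrix.map_mul (f := (τ : ℂ →+* ℂ))
  rw [h2]
  refine (Matrix.rank_mul_le_left _ _).trans ?_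
  simpa using Matrix.rank_le_card_width (B.map τ)

theorem cv_rank_map_eq {m n : Type*} [Fintype m] [Fintype n] [DecidableEq m] [DecidableEq n]
    (A : Matrix m n ℂ) (τ : ℂ ≃+* ℂ) : (A.map τ).rank = A.rank := by
  refine le_antisymm (cv_rank_map_le A τ) ?_
  have := cv_rank_map_le (A.map τ) τ.symm
  rwa [Matrix.map_map, show (τ.symm ∘ τ : ℂ → ℂ) = id by ext; simp, Matrix.map_id] at this

end

section
open Matrix
open scoped ComplexOrder
set_option linter.unusedSectionVars false

/-- Hermitian idempotents. -/
def IsOP {n : Type*} [Fintype n] (P : Matrix n n ℂ) : Prop := Pᴴ = P ∧ P * P = P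

/-- projection on the range of `N`. -/
noncomputable def projM {n m : Type*} [Fintype n] [Fintype m] [DecidableEq m]
    (N : Matrix n m ℂ) : Matrix n n ℂ := N * (Nᴴ * N)⁻¹ * Nᴴ

section
variable {n m : Type*} [Fintype n] [Fintype m] [DecidableEq n] [DecidableEq m]

theorem isUnit_det_gram (N : Matrix n m ℂ) (hN : N.rank = Fintype.card m) :
    IsUnit (Nᴴ * N).det := by
  rw [← Matrix.isUnit_iff_isUnit_det]
  by_contra hcon
  have h1 : (Nᴴ * N).rank = Fintype.card m := by rw [rank_conjTranspose_mul_self, hN]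
  have h2 : LinearIndependent ℂ (Nᴴ * N).col := by
    rw [linearIndependent_iff_card_eq_finrank_span, ← h1, rank_eq_finrank_span_cols]
    rfl
  exact hcon (Matrix.linearIndependent_cols_iff_isUnit.1 h2)

theorem projM_isOP (N : Matrix n m ℂ) (hN : N.rank = Fintype.card m) : IsOP (projM N) := by
  have h := isUnit_det_gram N hN
  constructor
  · simp [projM, conjTranspose_mul, conjTranspose_nonsing_inv, Matrix.mul_assoc]
  · have : Nᴴ * (N * ((Nᴴ * N)⁻¹ * Nᴴ)) = Nᴴ := by
      rw [← Matrix.mul_assoc, ← Matrix.mul_assoc, mul_nonsing_inv _ h, Matrix.one_mul]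
    simp only [projM, Matrix.mul_assoc]
    rw [this]

theorem projM_mul (N : Matrix n m ℂ) (hN : N.rank = Fintype.card m) : projM N * N = N := by
  have h := isUnit_det_gram N hN
  rw [projM, Matrix.mul_assoc, Matrix.mul_assoc, nonsing_inv_mul _ h, Matrix.mul_one]

theorem projM_trace (N : Matrix n m ℂ) (hN : N.rank = Fintype.card m) :
    (projM N).trace = Fintype.card m := by
  have h := isUnit_det_gram N hN
  rw [projM, trace_mul_comm, ← Matrix.mul_assoc, mul_nonsing_inv _ h, trace_one]

theorem projM_smul (N : Matrix n m ℂ) (a : ℂ) (ha : a ≠ 0) (hN : N.rank = Fintype.card m) :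
    projM (a • N) = projM N := by
  have h := isUnit_det_gram N hN
  have ha2 : star a * a ≠ 0 := mul_ne_zero (star_ne_zero.2 ha) ha
  have : ((a • N)ᴴ * (a • N))⁻¹ = (star a * a)⁻¹ • (Nᴴ * N)⁻¹ := by
    apply inv_eq_left_inv
    rw [conjTranspose_smul, Matrix.smul_mul, Matrix.mul_smul, Matrix.smul_mul, Matrix.mul_smul,
      Matrix.mul_smul, smul_smul, smul_smul, nonsing_inv_mul _ h,
      mul_assoc, mul_comm a, inv_mul_cancel₀ ha2, one_smul]
  rw [projM, this, conjTranspose_smul, Matrix.smul_mul, Matrix.mul_smul, Matrix.smul_mul, 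
    Matrix.mul_smul, Matrix.smul_mul, smul_smul, smul_smul, projM]
  have : star a * a * (star a * a)⁻¹ = 1 := mul_inv_cancel₀ ha2
  rw [this, one_smul]

theorem isOP_one_sub {P : Matrix n n ℂ} (h : IsOP P) : IsOP (1 - P) := by
  refine ⟨by simp [h.1], ?_⟩
  rw [Matrix.mul_sub, Matrix.sub_mul, Matrix.sub_mul, h.2]; simp

theorem isOP_sub {P Q : Matrix n n ℂ} (hP : IsOP P) (hQ : IsOP Q) (h : P * Q = Q) :
    IsOP (P - Q) := by
  have h2 : Q * P = Q := by
    have := congrArg conjTranspose h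
    rwa [conjTranspose_mul, hP.1, hQ.1] at this
  refine ⟨by simp [hP.1, hQ.1], ?_⟩
  rw [Matrix.mul_sub, Matrix.sub_mul, Matrix.sub_mul, hP.2, hQ.2, h, h2]; simp

theorem trace_herm_self_re (A : Matrix n m ℂ) : (Aᴴ * A).trace.re = ∑ j, ∑ i, ‖A i j‖ ^ 2 := by
  simp only [trace, diag, Matrix.mul_apply, conjTranspose_apply, Complex.re_sum]
  refine Finset.sum_congr rfl fun j _ => Finset.sum_congr rfl fun i _ => ?_
  rw [← Complex.normSq_eq_norm_sq, Complex.normSq_apply]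
  simp

theorem isOP_trace_nonneg {P Q : Matrix n n ℂ} (hP : IsOP P) (hQ : IsOP Q) :
    0 ≤ (P * Q).trace.re := by
  have : (P * Q).trace = ((Q * P)ᴴ * (Q * P)).trace := by
    rw [conjTranspose_mul, hP.1, hQ.1, Matrix.mul_assoc, ← Matrix.mul_assoc Q Q, hQ.2,
      trace_mul_comm P (Q * P), Matrix.mul_assoc, hP.2, trace_mul_comm]
  rw [this, trace_herm_self_re]
  positivity

theorem exists_range_proj (Z : Matrix n m ℂ) : ∃ (Q : Matrix n n ℂ) (K : Matrix m n ℂ),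
    IsOP Q ∧ Q * Z = Z ∧ Q = Z * K ∧ Q.trace = Z.rank := by
  let W := Submodule.span ℂ (Set.range Z.col)
  have hr : Module.finrank ℂ W = Z.rank := (Matrix.rank_eq_finrank_span_cols Z).symm
  let b := Module.finBasisOfFinrankEq ℂ W hr
  let B : Matrix n (Fin Z.rank) ℂ := fun i l => (b l : n → ℂ) i
  have hmem : ∀ j, Z.col j ∈ W := fun j => Submodule.subset_span ⟨j, rfl⟩
  let C : Matrix (Fin Z.rank) m ℂ := fun l j => b.repr ⟨Z.col j, hmem j⟩ l
  have h : Z = B * C := by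
    ext i j
    have := b.sum_repr ⟨Z.col j, hmem j⟩
    have h2 := congrFun (congrArg (Subtype.val) this) i
    rw [Matrix.mul_apply]
    simp only [Submodule.coe_sum, Submodule.coe_smul, Finset.sum_apply, Pi.smul_apply,
      smul_eq_mul] at h2
    rw [show Z i j = Z.col j i from rfl, ← h2]
    exact Finset.sum_congr rfl fun l _ => mul_comm _ _
  have hB : B.rank = Fintype.card (Fin Z.rank) := by
    apply le_antisymm (rank_le_card_width B)
    rw [Fintype.card_fin]
    conv_lhs => rw [h]
    exact rank_mul_le_left _ _
  have hBm : ∀ l, ∃ v : m → ℂ, Z *ᵥ v = (b l : n → ℂ) := by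
    intro l
    have : (b l : n → ℂ) ∈ Submodule.span ℂ (Set.range Z.col) := (b l).2
    rw [← Matrix.range_mulVecLin] at this
    obtain ⟨v, hv⟩ := this
    exact ⟨v, hv⟩
  choose v hv using hBm
  let V : Matrix m (Fin Z.rank) ℂ := fun j l => v l j
  have hBV : B = Z * V := by
    ext i l
    have := congrFun (hv l) i
    exact this.symm
  refine ⟨projM B, V * (Bᴴ * B)⁻¹ * Bᴴ, projM_isOP B hB, ?_, ?_, ?_⟩
  · refine (congrArg (projM B * ·) h).trans ?_
    change projM B * (B * C) = Z
    rw [← Matrix.mul_assoc, projM_mul B hB, ← h]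
  · rw [projM, ← Matrix.mul_assoc, ← Matrix.mul_assoc, ← hBV]
  · rw [projM_trace B hB, Fintype.card_fin]

/-- (L2) -/
theorem rank_le_trace {P Q : Matrix n n ℂ} (hP : IsOP P) (hQ : IsOP Q) (Z : Matrix n m ℂ)
    (h1 : P * Z = Z) (h2 : Q * Z = Z) : (Z.rank : ℝ) ≤ (P * Q).trace.re := by
  obtain ⟨R, K, hR, -, hRK, hRt⟩ := exists_range_proj Z
  have e1 : P * R = R := by rw [hRK, ← Matrix.mul_assoc, h1]
  have e2 : Q * R = R := by rw [hRK, ← Matrix.mul_assoc, h2]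
  have := isOP_trace_nonneg hP (isOP_sub hQ hR e2)
  rw [Matrix.mul_sub, trace_sub, e1, hRt] at this
  simpa using this

/-- (L1) -/
theorem trace_le_rank {P Q : Matrix n n ℂ} (hP : IsOP P) (hQ : IsOP Q) :
    (P * Q).trace.re ≤ ((P * Q).rank : ℝ) := by
  obtain ⟨R, K, hR, hR1, hRK, hRt⟩ := exists_range_proj (P * Q)
  have e1 : P * R = R := by
    rw [hRK, ← Matrix.mul_assoc, ← Matrix.mul_assoc, hP.2]
  have e2 : R * P = R := by
    have := congrArg conjTranspose e1
    rwa [conjTranspose_mul, hP.1, hR.1] at this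
  have e3 : R * Q = P * Q := by
    rw [← Matrix.mul_assoc, e2] at hR1
    exact hR1
  have := isOP_trace_nonneg hR (isOP_one_sub hQ)
  rw [Matrix.mul_sub, Matrix.mul_one, trace_sub, e3, hRt] at this
  simpa using this

theorem isOP_entry {P : Matrix n n ℂ} (hP : IsOP P) (a b : n) : ‖P a b‖ ≤ 1 := by
  have h : ∀ a, (P a a).re = ∑ c, ‖P a c‖ ^ 2 := by
    intro a
    conv_lhs => rw [← hP.2, Matrix.mul_apply, Complex.re_sum]
    refine Finset.sum_congr rfl fun c _ => ?_
    have : P c a = star (P a c) := by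
      conv_lhs => rw [← hP.1]
      rfl
    rw [this, ← Complex.normSq_eq_norm_sq, Complex.normSq_apply]
    simp
  have h1 : ∀ b, ‖P a b‖ ^ 2 ≤ (P a a).re := fun b => by
    rw [h a]
    exact Finset.single_le_sum (f := fun c => ‖P a c‖ ^ 2) (fun _ _ => by positivity)
      (Finset.mem_univ b)
  have h2 := h1 a
  have h3 : (P a a).re ≤ ‖P a a‖ := Complex.re_le_norm _
  have h4 : ‖P a a‖ ≤ 1 := by nlinarith [norm_nonneg (P a a)]
  have h5 := h1 b
  nlinarith [norm_nonneg (P a b)]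
end

end

section
open Matrix
open scoped ComplexOrder
set_option linter.unusedSectionVars false

section
variable {n : Type*} [Fintype n] [DecidableEq n]
open Filter Topology

theorem continuousAt_projM {m : Type*} [Fintype m] [DecidableEq m]
    (N : Matrix n m ℂ) (hN : N.rank = Fintype.card m) : ContinuousAt projM N := by
  have h := (isUnit_det_gram N hN).ne_zero
  have h1 : Continuous fun N : Matrix n m ℂ => Nᴴ * N :=
    (continuous_id.matrix_conjTranspose).matrix_mul continuous_id
  have h2 : ContinuousAt (fun N : Matrix n m ℂ => (Nᴴ * N)⁻¹) N := by
    simp only [Matrix.inv_def, Ring.inverse_eq_inv']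
    exact ((h1.matrix_det.continuousAt).inv₀ h).smul (h1.matrix_adjugate.continuousAt)
  have h3 : Continuous fun x : Matrix n m ℂ × Matrix m m ℂ => x.1 * x.2 * x.1ᴴ :=
    (continuous_fst.matrix_mul continuous_snd).matrix_mul continuous_fst.matrix_conjTranspose
  have h4 : ContinuousAt (fun N : Matrix n m ℂ => (N, (Nᴴ * N)⁻¹)) N :=
    continuousAt_id.prodMk h2
  have h5 : ContinuousAt (fun N : Matrix n m ℂ => N * (Nᴴ * N)⁻¹ * Nᴴ) N := by
    have h6 := ContinuousAt.comp (f := fun N : Matrix n m ℂ => (N, (Nᴴ * N)⁻¹)) (x := N)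
      (h3.continuousAt) h4
    exact h6
  exact h5

theorem abs_trace_mul_le {P : Matrix n n ℂ} (hP : IsOP P) (D : Matrix n n ℂ) :
    |(P * D).trace.re| ≤ ∑ a, ∑ b, ‖D b a‖ := by
  refine (Complex.abs_re_le_norm _).trans ?_
  simp only [trace, diag, Matrix.mul_apply]
  refine (norm_sum_le _ _).trans (Finset.sum_le_sum fun a _ => (norm_sum_le _ _).trans
    (Finset.sum_le_sum fun b _ => ?_))
  rw [norm_mul]
  exact mul_le_of_le_one_left (norm_nonneg _) (isOP_entry hP a b)

theorem semistable_limit {ι : Type*} [Fintype ι] {m : ι → Type*} [∀ p, Fintype (m p)]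
    [∀ p, DecidableEq (m p)] (c : ι → ℝ) (hc : ∀ p, 0 ≤ c p) (κ : ℝ)
    (M0 : ∀ p, Matrix n (m p) ℂ) (hM0 : ∀ p, (M0 p).rank = Fintype.card (m p))
    (hsol : ∑ p, (c p : ℂ) • projM (M0 p) = (κ : ℂ) • (1 : Matrix n n ℂ))
    (M : ℕ → ∀ p, Matrix n (m p) ℂ) (hM : ∀ k p, (M k p).rank = Fintype.card (m p))
    (hlim : ∀ p, Tendsto (fun k => M k p) atTop (𝓝 (M0 p)))
    (y : ℕ → Matrix n n ℂ) (R : ℕ) (ρ : ι → ℕ) (hy : ∀ k, (y k).rank = R)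
    (hyM : ∀ k p, (y k * M k p).rank = ρ p) : κ * R ≤ ∑ p, c p * ρ p := by
  let D : ℕ → Matrix n n ℂ := fun k => ∑ p, (c p : ℂ) • projM (M k p) - (κ : ℂ) • 1
  have hD : Tendsto D atTop (𝓝 0) := by
    have : Tendsto D atTop (𝓝 (∑ p, (c p : ℂ) • projM (M0 p) - (κ : ℂ) • 1)) :=
      (tendsto_finsetSum _ fun p _ =>
        ((continuousAt_projM (M0 p) (hM0 p)).tendsto.comp (hlim p)).const_smul _).sub_const _
    rwa [hsol, sub_self] at this
  have hS : Tendsto (fun k => ∑ a, ∑ b, ‖D k b a‖) atTop (𝓝 0) := by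
    have hcont : Continuous fun X : Matrix n n ℂ => ∑ a, ∑ b, ‖X b a‖ := by fun_prop
    have := (hcont.tendsto 0).comp hD
    rw [Function.comp_def] at this
    simpa only [Matrix.zero_apply, norm_zero, Finset.sum_const_zero] using this
  have key : ∀ k, κ * R - ∑ a, ∑ b, ‖D k b a‖ ≤ ∑ p, c p * ρ p := by
    intro k
    obtain ⟨Q, K, hQ, hQ1, hQ2, hQ3⟩ := exists_range_proj (y k)ᴴ
    rw [rank_conjTranspose, hy] at hQ3
    have hQ4 : Q = Kᴴ * y k := by
      have := congrArg conjTranspose hQ2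
      rwa [hQ.1, conjTranspose_mul, conjTranspose_conjTranspose] at this
    have h1 : ∀ p, (Q * projM (M k p)).trace.re ≤ ρ p := by
      intro p
      refine (trace_le_rank hQ (projM_isOP _ (hM k p))).trans ?_
      rw [← hyM k p]
      have : Q * projM (M k p) = Kᴴ * ((y k * M k p) * (((M k p)ᴴ * M k p)⁻¹ * (M k p)ᴴ)) := by
        conv_lhs => rw [hQ4]
        unfold projM
        simp only [Matrix.mul_assoc]
      rw [this]
      exact Nat.cast_le.2 ((rank_mul_le_right _ _).trans (rank_mul_le_left _ _))
    have h2 : (Q * D k).trace.re = ∑ p, c p * (Q * projM (M k p)).trace.re - κ * R := by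
      simp only [D, Matrix.mul_sub, Matrix.mul_sum, Matrix.mul_smul, trace_sub, trace_sum,
        trace_smul, Matrix.mul_one, hQ3, smul_eq_mul, Complex.sub_re, Complex.re_sum,
        Complex.re_ofReal_mul, Complex.natCast_re]
    have h3 := abs_trace_mul_le hQ (D k)
    have h4 : ∑ p, c p * (Q * projM (M k p)).trace.re ≤ ∑ p, c p * ρ p :=
      Finset.sum_le_sum fun p _ => mul_le_mul_of_nonneg_left (h1 p) (hc p)
    have h5 := (abs_le.1 h3).1
    linarith
  have hl : Tendsto (fun k => κ * R - ∑ a, ∑ b, ‖D k b a‖) atTop (𝓝 (κ * R - 0)) :=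
    hS.const_sub _
  rw [sub_zero] at hl
  exact le_of_tendsto' hl key
end

end

section
open Matrix
open scoped ComplexOrder
set_option linter.unusedSectionVars false

section
variable {n : Type*} [Fintype n] [DecidableEq n]
open Filter Topology

/-- A lower bound for determinants. -/
theorem det_ge_of_sub_posSemidef (A : Matrix n n ℂ) (hA : A.IsHermitian) (t : ℝ) (ht : 0 ≤ t)
    (h : (A - (t : ℂ) • (1 : Matrix n n ℂ)).PosSemidef) : t ^ Fintype.card n ≤ A.det.re := by
  have h1 : ∀ i, t ≤ hA.eigenvalues i := by
    intro i
    have h2 := h.re_dotProduct_nonneg (hA.eigenvectorBasis i)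
    rw [sub_mulVec, dotProduct_sub, hA.mulVec_eigenvectorBasis, smul_mulVec, one_mulVec,
      dotProduct_smul, dotProduct_smul] at h2
    have h3 : star (⇑(hA.eigenvectorBasis i)) ⬝ᵥ ⇑(hA.eigenvectorBasis i) = (1 : ℂ) := by
      have := hA.eigenvectorBasis.orthonormal.1 i
      have h4 : inner ℂ (hA.eigenvectorBasis i) (hA.eigenvectorBasis i) = (1 : ℂ) := by
        rw [inner_self_eq_norm_sq_to_K, this]; simp
      rw [EuclideanSpace.inner_eq_star_dotProduct] at h4
      rw [dotProduct_comm]; exact h4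
    rw [h3] at h2
    simp at h2
    exact h2
  rw [hA.det_eq_prod_eigenvalues, ← Finset.card_univ, ← Finset.prod_const]
  have : (∏ i, ((hA.eigenvalues i : ℝ) : ℂ)).re = ∏ i, hA.eigenvalues i := by
    rw [← Complex.ofReal_prod, Complex.ofReal_re]
  refine le_trans ?_ (le_of_eq this.symm)
  exact Finset.prod_le_prod (fun _ _ => ht) fun i _ => h1 i

theorem posSemidef_of_eig (A : Matrix n n ℂ) (hA : A.IsHermitian) (a b : ℝ)
    (h : ∀ i, 0 ≤ a * hA.eigenvalues i + b) :
    ((a : ℂ) • A + (b : ℂ) • (1 : Matrix n n ℂ)).PosSemidef := by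
  have h1 := hA.spectral_theorem
  rw [Unitary.conjStarAlgAut_apply] at h1
  let U : Matrix n n ℂ := hA.eigenvectorUnitary
  have hU : U * star U = 1 := Unitary.coe_mul_star_self _
  have h2 : (a : ℂ) • A + (b : ℂ) • (1 : Matrix n n ℂ) =
      U * diagonal (fun i => ((a * hA.eigenvalues i + b : ℝ) : ℂ)) * Uᴴ := by
    have h3 : diagonal (fun i => ((a * hA.eigenvalues i + b : ℝ) : ℂ)) =
        (a : ℂ) • diagonal (RCLike.ofReal ∘ hA.eigenvalues) + (b : ℂ) • (1 : Matrix n n ℂ) := by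
      ext i j
      by_cases hij : i = j <;> simp [hij]
    rw [h3, Matrix.mul_add, Matrix.add_mul, Matrix.mul_smul, Matrix.smul_mul, Matrix.mul_smul,
      Matrix.mul_one, Matrix.smul_mul, ← star_eq_conjTranspose, hU]
    congr 2
  rw [h2]
  apply PosSemidef.mul_mul_conjTranspose_same
  rw [posSemidef_diagonal_iff]
  intro i
  exact_mod_cast h i

theorem eventually_one_add_posSemidef (Z : Matrix n n ℂ) (hZ : Z.IsHermitian) :
    ∀ᶠ s : ℝ in 𝓝 0, ((1 : Matrix n n ℂ) + (s : ℂ) • Z).PosSemidef := by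
  have : ∀ᶠ s : ℝ in 𝓝 0, ∀ i, 0 ≤ s * hZ.eigenvalues i + 1 := by
    rw [eventually_all]
    intro i
    have h : Continuous fun s : ℝ => s * hZ.eigenvalues i + 1 := by fun_prop
    have h2 := (h.tendsto 0).eventually (lt_mem_nhds (a := 0) (by simp))
    filter_upwards [h2] with s hs using hs.le
  filter_upwards [this] with s hs
  have := posSemidef_of_eig Z hZ s 1 hs
  rw [add_comm]
  simpa using this

/-- trace-one PSD matrices dominate their determinant. -/
theorem sub_det_posSemidef (X : Matrix n n ℂ) (hX : X.PosSemidef) (htr : X.trace = 1) :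
    (X - (X.det.re : ℂ) • (1 : Matrix n n ℂ)).PosSemidef := by
  have h0 := hX.eigenvalues_nonneg
  have hdet : X.det.re = ∏ i, hX.1.eigenvalues i := by
    rw [hX.1.det_eq_prod_eigenvalues]
    have : (∏ i, ((hX.1.eigenvalues i : ℝ) : ℂ)).re = ∏ i, hX.1.eigenvalues i := by
      rw [← Complex.ofReal_prod, Complex.ofReal_re]
    exact this
  have hs : ∑ i, hX.1.eigenvalues i = 1 := by
    have := hX.1.trace_eq_sum_eigenvalues
    rw [htr] at this
    have h2 := congrArg Complex.re this
    have h3 : (∑ i, ((hX.1.eigenvalues i : ℝ) : ℂ)).re = ∑ i, hX.1.eigenvalues i := by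
      rw [← Complex.ofReal_sum, Complex.ofReal_re]
    exact (h2.trans h3).symm
  have hle : ∀ i, hX.1.eigenvalues i ≤ 1 := fun i => by
    rw [← hs]; exact Finset.single_le_sum (fun j _ => h0 j) (Finset.mem_univ i)
  have h1 : ∀ i, X.det.re ≤ hX.1.eigenvalues i := by
    intro i
    rw [hdet, ← Finset.mul_prod_erase _ _ (Finset.mem_univ i)]
    exact mul_le_of_le_one_right (h0 i) (Finset.prod_le_one (fun j _ => h0 j) fun j _ => hle j)
  have := posSemidef_of_eig X hX.1 1 (-X.det.re) (fun i => by linarith [h1 i])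
  simpa [sub_eq_add_neg] using this

theorem exists_gram_lower {m : Type*} [Fintype m] [DecidableEq m]
    (M : Matrix n m ℂ) (hM : M.rank = Fintype.card m) : ∃ μ : ℝ, 0 < μ ∧
      (Mᴴ * M - (μ : ℂ) • (1 : Matrix m m ℂ)).PosSemidef := by
  have h1 : (Mᴴ * M).PosSemidef := posSemidef_conjTranspose_mul_self M
  have h2 := (isUnit_det_gram M hM).ne_zero
  have hpos : ∀ i, 0 < h1.1.eigenvalues i := by
    intro i
    refine lt_of_le_of_ne (h1.eigenvalues_nonneg i) fun h => h2 ?_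
    rw [h1.1.det_eq_prod_eigenvalues]
    exact Finset.prod_eq_zero (Finset.mem_univ i) (by simp [← h])
  obtain ⟨μ, hμ, hle⟩ : ∃ μ : ℝ, 0 < μ ∧ ∀ i, μ ≤ h1.1.eigenvalues i := by
    rcases isEmpty_or_nonempty m with he | he
    · exact ⟨1, one_pos, fun i => (he.false i).elim⟩
    · obtain ⟨i, hi⟩ := Finite.exists_min h1.1.eigenvalues
      exact ⟨_, hpos i, hi⟩
  refine ⟨μ, hμ, ?_⟩
  have := posSemidef_of_eig _ h1.1 1 (-μ) (fun i => by linarith [hle i])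
  simpa [sub_eq_add_neg] using this

theorem det_compress_ge {m : Type*} [Fintype m] [DecidableEq m]
    (M : Matrix n m ℂ) (hM : M.rank = Fintype.card m) : ∃ μ : ℝ, 0 < μ ∧
      ∀ X : Matrix n n ℂ, X.PosSemidef → X.trace = 1 →
        (X.det.re * μ) ^ Fintype.card m ≤ (Mᴴ * X * M).det.re := by
  obtain ⟨μ, hμ, h⟩ := exists_gram_lower M hM
  refine ⟨μ, hμ, fun X hX ht => ?_⟩
  have hd : 0 ≤ X.det.re := (Complex.le_def.1 hX.det_nonneg).1
  apply det_ge_of_sub_posSemidef _ (hX.conjTranspose_mul_mul_same M).1 _ (by positivity)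
  have h1 := (sub_det_posSemidef X hX ht).conjTranspose_mul_mul_same M
  have h2 := h.smul (a := (X.det.re : ℂ)) (by exact_mod_cast hd)
  have h3 := h1.add h2
  convert h3 using 1
  rw [Matrix.mul_sub, Matrix.sub_mul, Matrix.mul_smul, Matrix.smul_mul, Matrix.mul_one, smul_sub,
    smul_smul]
  push_cast
  abel

theorem hasDerivAt_det (G E : Matrix n n ℂ) (hG : G.det ≠ 0) :
    HasDerivAt (fun s : ℝ => (G + (s : ℂ) • E).det.re) (G.det * (G⁻¹ * E).trace).re 0 := by
  have h1 : ∀ s : ℂ, (G + s • E).det = G.det *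
      (Polynomial.eval s (det (1 + (Polynomial.X : Polynomial ℂ) • (G⁻¹ * E).map Polynomial.C))) := by
    intro s
    have : Polynomial.eval s
        (det (1 + (Polynomial.X : Polynomial ℂ) • (G⁻¹ * E).map Polynomial.C)) =
        det (1 + s • (G⁻¹ * E)) := by
      generalize G⁻¹ * E = T
      rw [← Polynomial.coe_evalRingHom, RingHom.map_det]
      congr 1
      ext i j
      by_cases hij : i = j <;> simp [hij] <;> exact mul_comm _ _
    rw [this, ← det_mul, Matrix.mul_add, Matrix.mul_smul, ← Matrix.mul_assoc,
      mul_nonsing_inv _ (isUnit_iff_ne_zero.2 hG)]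
    simp
  have h2 : HasDerivAt (fun s : ℂ => (G + s • E).det) (G.det * (G⁻¹ * E).trace) ((0:ℝ):ℂ) := by
    simp only [h1]
    apply HasDerivAt.const_mul
    have := Polynomial.hasDerivAt
      (det (1 + (Polynomial.X : Polynomial ℂ) • (G⁻¹ * E).map Polynomial.C)) 0
    rw [derivative_det_one_add_X_smul] at this
    simpa using this
  exact h2.real_of_complex

end

end

section
open Matrix
open scoped ComplexOrder
set_option linter.unusedSectionVars false

section
variable {n : Type*} [Fintype n] [DecidableEq n]
open Filter Topology

/-- The functional to be minimised. -/
noncomputable def potF {ι : Type*} [Fintype ι] {m : ι → Type*} [∀ p, Fintype (m p)]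
    [∀ p, DecidableEq (m p)] (c : ι → ℝ) (κ ε : ℝ) (M : ∀ p, Matrix n (m p) ℂ)
    (X : Matrix n n ℂ) : ℝ :=
  ∑ p, c p * Real.log ((M p)ᴴ * X * M p).det.re - κ * Real.log X.det.re + ε * (X.det.re)⁻¹

theorem log_penalty (K C ε F : ℝ) (hε : 0 < ε) : ∃ s : ℝ, 0 < s ∧ ∀ d : ℝ, 0 < d → d < s →
    F < K * Real.log d + C + ε * d⁻¹ := by
  have h1 : Tendsto (fun d : ℝ => d * (K * Real.log d + C - F) + ε) (𝓝[>] 0)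
      (𝓝 (K * 0 + 0 * (C - F) + ε)) := by
    have ha : Tendsto (fun d : ℝ => Real.log d * d) (𝓝[>] 0) (𝓝 0) := by
      simpa using tendsto_log_mul_rpow_nhdsGT_zero (r := 1) one_pos
    have hb : Tendsto (fun d : ℝ => d) (𝓝[>] 0) (𝓝 0) := tendsto_nhdsWithin_of_tendsto_nhds tendsto_id
    have := ((ha.const_mul K).add (hb.mul_const (C - F))).add_const ε
    refine this.congr fun d => by ring
  have h2 := h1.eventually (lt_mem_nhds (a := 0) (by simpa using hε))
  obtain ⟨s, hs, h3⟩ := (mem_nhdsGT_iff_exists_Ioo_subset).1 h2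
  refine ⟨s, hs, fun d hd hds => ?_⟩
  have h4 : 0 < d * (K * Real.log d + C - F) + ε := h3 ⟨hd, hds⟩
  have h5 : K * Real.log d + C + ε * d⁻¹ - F = (d * (K * Real.log d + C - F) + ε) * d⁻¹ := by
    field_simp; ring
  have : 0 < (d * (K * Real.log d + C - F) + ε) * d⁻¹ := mul_pos h4 (inv_pos.2 hd)
  linarith

variable {ι : Type*} [Fintype ι] {m : ι → Type*} [∀ p, Fintype (m p)] [∀ p, DecidableEq (m p)]

theorem potF_lower (c : ι → ℝ) (hc : ∀ p, 0 ≤ c p) (κ ε : ℝ) (M : ∀ p, Matrix n (m p) ℂ)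
    (hM : ∀ p, (M p).rank = Fintype.card (m p)) : ∃ K C : ℝ, ∀ X : Matrix n n ℂ, X.PosSemidef →
      X.trace = 1 → 0 < X.det.re → 
      K * Real.log X.det.re + C + ε * (X.det.re)⁻¹ ≤ potF c κ ε M X := by
  choose μ hμ h using fun p => det_compress_ge (M p) (hM p)
  refine ⟨∑ p, c p * Fintype.card (m p) - κ, ∑ p, c p * (Fintype.card (m p) * Real.log (μ p)),
    fun X hX ht hd => ?_⟩
  have h1 : ∀ p, c p * (Fintype.card (m p) * (Real.log X.det.re + Real.log (μ p))) ≤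
      c p * Real.log ((M p)ᴴ * X * M p).det.re := by
    intro p
    refine mul_le_mul_of_nonneg_left ?_ (hc p)
    have := Real.log_le_log (pow_pos (mul_pos hd (hμ p)) _) (h p X hX ht)
    rwa [Real.log_pow, Real.log_mul hd.ne' (hμ p).ne'] at this
  have h2 := Finset.sum_le_sum fun p (_ : p ∈ Finset.univ) => h1 p
  simp only [mul_add, Finset.sum_add_distrib] at h2
  unfold potF
  have h3 : ∑ p, c p * (Fintype.card (m p) * Real.log X.det.re) =
      (∑ p, c p * Fintype.card (m p)) * Real.log X.det.re := by
    rw [Finset.sum_mul]; exact Finset.sum_congr rfl fun p _ => by ring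
  rw [h3] at h2
  linarith

theorem gram_det (h : Matrix n n ℂ) : (hᴴ * h).det.re = ‖h.det‖ ^ 2 := by
  rw [det_mul, det_conjTranspose, Complex.star_def, ← Complex.normSq_eq_conj_mul_self,
    Complex.ofReal_re, Complex.normSq_eq_norm_sq]

theorem rank_mul_of_det {k : Type*} [Fintype k] (h : Matrix n n ℂ) (hh : h.det ≠ 0)
    (N : Matrix n k ℂ) : (h * N).rank = N.rank :=
  rank_mul_eq_right_of_isUnit_det _ _ (isUnit_iff_ne_zero.2 hh)

theorem exists_min_potF [Nonempty n] (c : ι → ℝ) (hc : ∀ p, 0 ≤ c p) (κ ε : ℝ) (hε : 0 < ε)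
    (M : ∀ p, Matrix n (m p) ℂ) (hM : ∀ p, (M p).rank = Fintype.card (m p)) :
    ∃ h : Matrix n n ℂ, h.det ≠ 0 ∧ (hᴴ * h).trace = 1 ∧ ∀ g : Matrix n n ℂ, g.det ≠ 0 →
      (gᴴ * g).trace = 1 → potF c κ ε M (hᴴ * h) ≤ potF c κ ε M (gᴴ * g) := by
  obtain ⟨K, C, hlow⟩ := potF_lower c hc κ ε M hM
  let a : ℝ := (Real.sqrt (Fintype.card n))⁻¹
  have hcard : (0 : ℝ) < Fintype.card n := by exact_mod_cast Fintype.card_pos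
  have ha : 0 < a := inv_pos.2 (Real.sqrt_pos.2 hcard)
  let h0 : Matrix n n ℂ := (a : ℂ) • 1
  have h0d : h0.det ≠ 0 := by
    simp only [h0, det_smul, det_one, mul_one]
    exact pow_ne_zero _ (by exact_mod_cast ha.ne')
  have h0t : (h0ᴴ * h0).trace = 1 := by
    have : a * a * Fintype.card n = 1 := by
      simp only [a]
      rw [← mul_inv, Real.mul_self_sqrt hcard.le, inv_mul_cancel₀ hcard.ne']
    simp only [h0, conjTranspose_smul, conjTranspose_one, smul_mul_smul_comm, Matrix.mul_one,
      trace_smul, trace_one]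
    simp
    exact_mod_cast this
  obtain ⟨s, hs, hpen⟩ := log_penalty K C ε (potF c κ ε M (h0ᴴ * h0)) hε
  let s' := min s (‖h0.det‖ ^ 2)
  have hs' : 0 < s' := lt_min hs (by have := norm_pos_iff.2 h0d; positivity)
  let T : Set (Matrix n n ℂ) := {g | (gᴴ * g).trace = 1 ∧ s' ≤ ‖g.det‖ ^ 2}
  have hTd : ∀ g ∈ T, g.det ≠ 0 := by
    intro g hg h
    have := hg.2
    rw [h] at this
    simp at this
    linarith
  have hgram : Continuous fun g : Matrix n n ℂ => gᴴ * g :=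
    (continuous_id.matrix_conjTranspose).matrix_mul continuous_id
  have hT : IsCompact T := by
    have hcl : IsClosed T := by
      apply IsClosed.inter
      · exact isClosed_eq (hgram.matrix_trace) continuous_const
      · exact isClosed_le continuous_const ((continuous_id.matrix_det).norm.pow 2)
    have hb : T ⊆ Set.pi Set.univ fun _ : n => Set.pi Set.univ fun _ : n => Metric.closedBall (0:ℂ) 1 := by
      intro g hg i _ j _
      rw [mem_closedBall_zero_iff]
      have h1 := trace_herm_self_re g
      rw [hg.1, Complex.one_re] at h1
      have h2 : ‖g i j‖ ^ 2 ≤ 1 := by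
        rw [h1]
        refine le_trans ?_ (Finset.single_le_sum (f := fun j => ∑ i, ‖g i j‖ ^ 2)
          (fun _ _ => Finset.sum_nonneg fun _ _ => by positivity) (Finset.mem_univ j))
        exact Finset.single_le_sum (f := fun i => ‖g i j‖ ^ 2) (fun _ _ => by positivity)
          (Finset.mem_univ i)
      nlinarith [norm_nonneg (g i j)]
    exact (isCompact_univ_pi fun _ => isCompact_univ_pi fun _ =>
      isCompact_closedBall _ _).of_isClosed_subset hcl hb
  have hcont : ContinuousOn (fun g : Matrix n n ℂ => potF c κ ε M (gᴴ * g)) T := by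
    intro g hg
    apply ContinuousAt.continuousWithinAt
    have hgd := hTd g hg
    have hd : (gᴴ * g).det.re ≠ 0 := by
      rw [gram_det]; have := norm_pos_iff.2 hgd; positivity
    have e1 : ContinuousAt (fun g : Matrix n n ℂ => (gᴴ * g).det.re) g :=
      (Complex.continuous_re.comp hgram.matrix_det).continuousAt
    unfold potF
    refine ((tendsto_finsetSum _ fun p _ => ?_).sub ((e1.log hd).const_mul κ)).add
      ((e1.inv₀ hd).const_mul ε)
    have e2 : Continuous (fun g : Matrix n n ℂ => ((M p)ᴴ * (gᴴ * g) * M p).det.re) :=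
      Complex.continuous_re.comp
        ((continuous_const.matrix_mul hgram).matrix_mul continuous_const).matrix_det
    refine (e2.continuousAt.log ?_).const_mul (c p)
    have e3 : (M p)ᴴ * (gᴴ * g) * M p = (g * M p)ᴴ * (g * M p) := by
      rw [conjTranspose_mul]; simp only [Matrix.mul_assoc]
    have e4 := isUnit_det_gram (g * M p) (by rw [rank_mul_of_det g hgd, hM])
    have e5 := (posSemidef_conjTranspose_mul_self (g * M p)).det_nonneg
    rw [e3]
    intro h
    apply e4.ne_zero
    apply Complex.ext h
    exact (Complex.le_def.1 e5).2.symm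
  obtain ⟨h, hhT, hmin⟩ := hT.exists_isMinOn ⟨h0, h0t, min_le_right _ _⟩ hcont
  refine ⟨h, hTd h hhT, hhT.1, fun g hg hgt => ?_⟩
  by_cases hgs : s' ≤ ‖g.det‖ ^ 2
  · exact hmin (a := g) ⟨hgt, hgs⟩
  · refine (hmin (a := h0) ⟨h0t, min_le_right _ _⟩).trans ?_
    rw [not_le] at hgs
    have hp : 0 < (gᴴ * g).det.re := by
      rw [gram_det]; have := norm_pos_iff.2 hg; positivity
    refine le_trans (hpen (gᴴ * g).det.re hp ?_).le 
      (hlow _ (posSemidef_conjTranspose_mul_self g) hgt hp)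
    rw [gram_det]
    exact hgs.trans_le (min_le_left _ _)

end

end

section
open Matrix
open scoped ComplexOrder
set_option linter.unusedSectionVars false

section
open scoped MatrixOrder Matrix.Norms.L2Operator
theorem posSemidef_exists_gram {n : Type*} [Fintype n] [DecidableEq n] (X : Matrix n n ℂ)
    (hX : X.PosSemidef) : ∃ B : Matrix n n ℂ, X = Bᴴ * B :=
  CStarAlgebra.nonneg_iff_eq_star_mul_self.mp hX.nonneg
end

section
variable {n : Type*} [Fintype n] [DecidableEq n]
open Filter Topology

theorem gram_det_pos {k : Type*} [Fintype k] [DecidableEq k] (N : Matrix n k ℂ)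
    (hN : N.rank = Fintype.card k) : 0 < (Nᴴ * N).det.re ∧ (Nᴴ * N).det.im = 0 := by
  have e4 := isUnit_det_gram N hN
  have e5 := (posSemidef_conjTranspose_mul_self N).det_nonneg
  have e6 := Complex.le_def.1 e5
  refine ⟨lt_of_le_of_ne e6.1 fun h => e4.ne_zero (Complex.ext h.symm e6.2.symm), e6.2.symm⟩

theorem hasDerivAt_gram {k : Type*} [Fintype k] [DecidableEq k] (N : Matrix n k ℂ)
    (hN : N.rank = Fintype.card k) (Z : Matrix n n ℂ) :
    HasDerivAt (fun s : ℝ => (Nᴴ * (1 + (s : ℂ) • Z) * N).det.re)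
      ((Nᴴ * N).det.re * (Z * projM N).trace.re) 0 := by
  have h1 := hasDerivAt_det (Nᴴ * N) (Nᴴ * Z * N) (isUnit_det_gram N hN).ne_zero
  have h2 : ((Nᴴ * N)⁻¹ * (Nᴴ * Z * N)).trace = (Z * projM N).trace := by
    rw [← Matrix.mul_assoc, trace_mul_comm _ N, trace_mul_comm Z, projM]
    simp only [Matrix.mul_assoc]
  rw [h2, Complex.mul_re, (gram_det_pos N hN).2, zero_mul, sub_zero] at h1
  refine h1.congr_of_eventuallyEq (Eventually.of_forall fun s => ?_)
  simp only
  rw [Matrix.mul_add, Matrix.add_mul, Matrix.mul_one, Matrix.mul_smul, Matrix.smul_mul]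

theorem rank_of_det_ne (h : Matrix n n ℂ) (hh : h.det ≠ 0) : h.rank = Fintype.card n :=
  rank_of_isUnit _ ((isUnit_iff_isUnit_det _).2 (isUnit_iff_ne_zero.2 hh))

theorem projM_of_det_ne (h : Matrix n n ℂ) (hh : h.det ≠ 0) : projM h = 1 := by
  have h1 := projM_mul h (rank_of_det_ne h hh)
  have h2 := congrArg (· * h⁻¹) h1
  rwa [Matrix.mul_assoc, mul_nonsing_inv _ (isUnit_iff_ne_zero.2 hh), Matrix.mul_one] at h2

variable {ι : Type*} [Fintype ι] {m : ι → Type*} [∀ p, Fintype (m p)] [∀ p, DecidableEq (m p)]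

theorem stationary_dir (c : ι → ℝ) (κ ε : ℝ)
    (M : ∀ p, Matrix n (m p) ℂ) (hM : ∀ p, (M p).rank = Fintype.card (m p))
    (h : Matrix n n ℂ) (hd : h.det ≠ 0) (ht : (hᴴ * h).trace = 1)
    (hmin : ∀ g : Matrix n n ℂ, g.det ≠ 0 →
      (gᴴ * g).trace = 1 → potF c κ ε M (hᴴ * h) ≤ potF c κ ε M (gᴴ * g))
    (Z : Matrix n n ℂ) (hZ : Z.IsHermitian) (hZt : (Z * (h * hᴴ)).trace = 0) :
    ∑ p, c p * (Z * projM (h * M p)).trace.re - κ * Z.trace.re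
      - ε / ‖h.det‖ ^ 2 * Z.trace.re = 0 := by
  have hN : ∀ p, (h * M p).rank = Fintype.card (m p) := fun p => by
    rw [rank_mul_of_det h hd, hM]
  have hr := rank_of_det_ne h hd
  let φ : ℝ → ℝ := fun s => potF c κ ε M (hᴴ * (1 + (s : ℂ) • Z) * h)
  have hφ : HasDerivAt φ (∑ p, c p * (Z * projM (h * M p)).trace.re - κ * Z.trace.re
      - ε / ‖h.det‖ ^ 2 * Z.trace.re) 0 := by
    have e1 := hasDerivAt_gram h hr Z
    rw [projM_of_det_ne h hd, Matrix.mul_one] at e1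
    have e0 : (hᴴ * (1 + ((0 : ℝ) : ℂ) • Z) * h).det.re = ‖h.det‖ ^ 2 := by
      rw [← gram_det]; simp
    have hpos : ‖h.det‖ ^ 2 ≠ 0 := by have := norm_pos_iff.2 hd; positivity
    have e2 := ((e1.log (by rw [e0]; exact hpos)).const_mul κ)
    have e3 := ((e1.inv (by rw [e0]; exact hpos)).const_mul ε)
    have e4 : ∀ p, HasDerivAt (fun s : ℝ =>
        c p * Real.log ((M p)ᴴ * (hᴴ * (1 + (s : ℂ) • Z) * h) * M p).det.re)
        (c p * (Z * projM (h * M p)).trace.re) 0 := by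
      intro p
      have f1 := hasDerivAt_gram (h * M p) (hN p) Z
      have f2 := (gram_det_pos (h * M p) (hN p)).1
      have f3 : ((h * M p)ᴴ * (1 + ((0 : ℝ) : ℂ) • Z) * (h * M p)).det.re =
        ((h * M p)ᴴ * (h * M p)).det.re := by simp
      have f4 := (f1.log (by rw [f3]; exact f2.ne')).const_mul (c p)
      rw [f3, mul_div_cancel_left₀ _ f2.ne'] at f4
      refine f4.congr_of_eventuallyEq (Eventually.of_forall fun s => ?_)
      simp only [conjTranspose_mul, Matrix.mul_assoc]
    have e5 := HasDerivAt.fun_sum (u := Finset.univ) fun p _ => e4 p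
    have e6 := (e5.sub e2).add e3
    rw [e0, gram_det] at e6
    have e7 : ∑ p, c p * (Z * projM (h * M p)).trace.re - κ * Z.trace.re
        - ε / ‖h.det‖ ^ 2 * Z.trace.re = ∑ i, c i * (Z * projM (h * M i)).trace.re -
        κ * (‖h.det‖ ^ 2 * Z.trace.re / ‖h.det‖ ^ 2) +
        ε * (-(‖h.det‖ ^ 2 * Z.trace.re) / (‖h.det‖ ^ 2) ^ 2) := by
      generalize ∑ p, c p * (Z * projM (h * M p)).trace.re = S
      generalize ‖h.det‖ ^ 2 = d at hpos
      field_simp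
      ring
    rw [e7]
    exact e6
  have hloc : IsLocalMin φ 0 := by
    have hcd : ∀ᶠ s : ℝ in 𝓝 0, ((1 : Matrix n n ℂ) + (s : ℂ) • Z).det ≠ 0 := by
      have hc : Continuous fun s : ℝ => ((1 : Matrix n n ℂ) + (s : ℂ) • Z).det :=
        (continuous_const.add (Complex.continuous_ofReal.smul continuous_const)).matrix_det
      exact hc.continuousAt.eventually_ne (by simp)
    filter_upwards [eventually_one_add_posSemidef Z hZ, hcd] with s hs hsd
    obtain ⟨B, hB⟩ := posSemidef_exists_gram _ hs
    have hBd : B.det ≠ 0 := by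
      intro hb
      apply hsd
      rw [hB, det_mul, hb, mul_zero]
    have g1 : hᴴ * (1 + (s : ℂ) • Z) * h = (B * h)ᴴ * (B * h) := by
      rw [hB, conjTranspose_mul]; simp only [Matrix.mul_assoc]
    have g2 : φ 0 = potF c κ ε M (hᴴ * h) := by simp [φ]
    rw [g2]
    simp only [φ]
    rw [g1]
    apply hmin
    · rw [det_mul]; exact mul_ne_zero hBd hd
    · rw [← g1, Matrix.mul_assoc, trace_mul_comm, Matrix.mul_assoc, Matrix.add_mul, Matrix.one_mul,
        trace_add, Matrix.smul_mul, trace_smul, hZt, smul_zero, add_zero, trace_mul_comm, ht]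
  exact hloc.hasDerivAt_eq_zero hφ

theorem exists_stationary [Nonempty n] (c : ι → ℝ) (hc : ∀ p, 0 ≤ c p) (κ ε : ℝ) (hε : 0 < ε)
    (M : ∀ p, Matrix n (m p) ℂ) (hM : ∀ p, (M p).rank = Fintype.card (m p))
    (hbal : ∑ p, c p * Fintype.card (m p) = κ * Fintype.card n) :
    ∃ h : Matrix n n ℂ, h.det ≠ 0 ∧ (hᴴ * h).trace = 1 ∧
      ∑ p, (c p : ℂ) • projM (h * M p) - (κ : ℂ) • (1 : Matrix n n ℂ) =
        ((ε / ‖h.det‖ ^ 2 : ℝ) : ℂ) • (1 - (Fintype.card n : ℂ) • (h * hᴴ)) := by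
  obtain ⟨h, hd, ht, hmin⟩ := exists_min_potF c hc κ ε hε M hM
  refine ⟨h, hd, ht, ?_⟩
  have hN : ∀ p, (h * M p).rank = Fintype.card (m p) := fun p => by
    rw [rank_mul_of_det h hd, hM]
  set e : ℝ := ε / ‖h.det‖ ^ 2 with he
  set P := ∑ p, (c p : ℂ) • projM (h * M p) with hP
  set H := h * hᴴ with hH
  have hHt : H.trace = 1 := by rw [hH, trace_mul_comm, ht]
  have hHh : Hᴴ = H := by rw [hH, conjTranspose_mul, conjTranspose_conjTranspose]
  have hPh : Pᴴ = P := by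
    rw [hP, conjTranspose_sum]
    refine Finset.sum_congr rfl fun p _ => ?_
    rw [conjTranspose_smul, (projM_isOP _ (hN p)).1]; simp
  have hPt : P.trace = (κ : ℂ) * Fintype.card n := by
    rw [hP, trace_sum]
    have : ∀ p, ((c p : ℂ) • projM (h * M p)).trace = ((c p * Fintype.card (m p) : ℝ) : ℂ) := by
      intro p
      rw [trace_smul, projM_trace _ (hN p)]; simp
    rw [Finset.sum_congr rfl fun p _ => this p, ← Complex.ofReal_sum, hbal]; simp
  let W := P - (κ : ℂ) • (1 : Matrix n n ℂ) - (e : ℂ) • (1 : Matrix n n ℂ)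
  let η : ℝ := e * Fintype.card n
  have hWt : W.trace = -(η : ℂ) := by
    simp only [W, trace_sub, trace_smul, trace_one, hPt, η]
    simp
  have hWh : Wᴴ = W := by
    simp only [W, conjTranspose_sub, conjTranspose_smul, conjTranspose_one, hPh]; simp
  let G := W + (η : ℂ) • H
  have hGh : Gᴴ = G := by
    simp only [G, conjTranspose_add, conjTranspose_smul, hWh, hHh]; simp
  let τ : ℝ := (G * H).trace.re
  have hτ : (G * H).trace = (τ : ℂ) := by
    have : star (G * H).trace = (G * H).trace := by
      rw [← trace_conjTranspose, conjTranspose_mul, hGh, hHh, trace_mul_comm]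
    exact (Complex.conj_eq_iff_re.1 this).symm
  let Z := G - (τ : ℂ) • (1 : Matrix n n ℂ)
  have hZ : Z.IsHermitian := by
    change Zᴴ = Z
    simp only [Z, conjTranspose_sub, conjTranspose_smul, conjTranspose_one, hGh]; simp
  have hst := stationary_dir c κ ε M hM h hd ht hmin Z hZ (by
    change (Z * H).trace = 0
    simp only [Z, Matrix.sub_mul, trace_sub, hτ, Matrix.smul_mul, Matrix.one_mul, trace_smul, hHt]
    simp)
  have h1 : (Z * W).trace.re = 0 := by
    rw [← hst]
    simp only [W, hP, Matrix.mul_sub, Matrix.mul_sum, Matrix.mul_smul, trace_sub, trace_sum,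
      trace_smul, Matrix.mul_one, smul_eq_mul, Complex.sub_re, Complex.re_sum,
      Complex.re_ofReal_mul, he]
  have h2 : (Z * W).trace = (Gᴴ * G).trace := by
    rw [hGh]
    have h3 : (Z * W).trace = (G * W).trace + (τ : ℂ) * η := by
      simp only [Z, Matrix.sub_mul, trace_sub, Matrix.smul_mul, Matrix.one_mul, trace_smul, hWt]
      simp
    have h4 : (G * G).trace = (G * W).trace + (η : ℂ) * τ := by
      conv_lhs => rw [show G * G = G * W + (η : ℂ) • (G * H) by
        rw [← Matrix.mul_smul, ← Matrix.mul_add]]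
      rw [trace_add, trace_smul, hτ, smul_eq_mul]
    rw [h3, h4, mul_comm]
  rw [h2, trace_herm_self_re] at h1
  have h5 : G = 0 := by
    ext i j
    have h6 := (Finset.sum_eq_zero_iff_of_nonneg (fun j _ =>
      Finset.sum_nonneg fun i _ => by positivity)).1 h1 j (Finset.mem_univ j)
    have h7 := (Finset.sum_eq_zero_iff_of_nonneg (fun i _ => by positivity)).1 h6 i
      (Finset.mem_univ i)
    simpa using h7
  have h8 : P - (κ : ℂ) • (1 : Matrix n n ℂ) = G + (e : ℂ) • (1 - (Fintype.card n : ℂ) • H) := by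
    simp only [G, W, η, smul_sub, smul_smul]
    push_cast
    abel
  rw [h8, h5, zero_add]

end

end

section
open Matrix
open scoped ComplexOrder
set_option linter.unusedSectionVars false

section
variable {n : Type*} [Fintype n] [DecidableEq n]
open Filter Topology

theorem exists_subseq_matrix {J : Type*} [Fintype J] (u : ℕ → J → Matrix n n ℂ) (C : ℝ)
    (hb : ∀ k j a b, ‖u k j a b‖ ≤ C) : ∃ L : J → Matrix n n ℂ, ∃ φ : ℕ → ℕ, StrictMono φ ∧
      ∀ j, Tendsto (fun k => u (φ k) j) atTop (𝓝 (L j)) := by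
  let v : ℕ → J → n → n → ℂ := fun k j a b => u k j a b
  have hK : IsCompact (Set.pi Set.univ fun _ : J => Set.pi Set.univ fun _ : n =>
      Set.pi Set.univ fun _ : n => Metric.closedBall (0 : ℂ) C) :=
    isCompact_univ_pi fun _ => isCompact_univ_pi fun _ => isCompact_univ_pi fun _ =>
      isCompact_closedBall _ _
  obtain ⟨L, -, φ, hφ, hL⟩ := hK.tendsto_subseq (x := v) (fun k j _ a _ b _ => by
    rw [mem_closedBall_zero_iff]; exact hb k j a b)
  refine ⟨L, φ, hφ, fun j => ?_⟩
  exact (tendsto_pi_nhds.1 hL) j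

theorem isOP_of_tendsto (P : ℕ → Matrix n n ℂ) (L : Matrix n n ℂ) (hP : ∀ k, IsOP (P k))
    (h : Tendsto P atTop (𝓝 L)) : IsOP L := by
  constructor
  · have h1 : Tendsto (fun k => (P k)ᴴ) atTop (𝓝 Lᴴ) :=
      (continuous_id.matrix_conjTranspose.tendsto L).comp h
    have h2 : (fun k => (P k)ᴴ) = P := funext fun k => (hP k).1
    rw [h2] at h1
    exact tendsto_nhds_unique h1 h
  · have h1 : Tendsto (fun k => P k * P k) atTop (𝓝 (L * L)) :=
      ((continuous_id.matrix_mul continuous_id).tendsto L).comp h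
    have h2 : (fun k => P k * P k) = P := funext fun k => (hP k).2
    rw [h2] at h1
    exact tendsto_nhds_unique h1 h

theorem tendsto_matrix_mul {l k o : Type*} [Fintype k] (A : ℕ → Matrix l k ℂ) (B : ℕ → Matrix k o ℂ)
    (A0 : Matrix l k ℂ) (B0 : Matrix k o ℂ) (hA : Tendsto A atTop (𝓝 A0))
    (hB : Tendsto B atTop (𝓝 B0)) : Tendsto (fun k => A k * B k) atTop (𝓝 (A0 * B0)) := by
  have hc : Continuous fun x : Matrix l k ℂ × Matrix k o ℂ => x.1 * x.2 :=
    continuous_fst.matrix_mul continuous_snd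
  have h1 := hA.prodMk_nhds hB
  have h2 := Filter.Tendsto.comp (hc.tendsto (A0, B0)) h1
  exact h2

theorem tendsto_trace_re (A : ℕ → Matrix n n ℂ) (L : Matrix n n ℂ) (hA : Tendsto A atTop (𝓝 L)) :
    Tendsto (fun k => (A k).trace.re) atTop (𝓝 L.trace.re) := by
  have hc : Continuous fun x : Matrix n n ℂ => x.trace.re :=
    Complex.continuous_re.comp continuous_id.matrix_trace
  exact (hc.tendsto L).comp hA

theorem entry_le_one_of_trace (g : Matrix n n ℂ) (hg : (gᴴ * g).trace = 1) (i j : n) :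
    ‖g i j‖ ≤ 1 := by
  have h1 := trace_herm_self_re g
  rw [hg, Complex.one_re] at h1
  have h2 : ‖g i j‖ ^ 2 ≤ 1 := by
    rw [h1]
    refine le_trans ?_ (Finset.single_le_sum (f := fun j => ∑ i, ‖g i j‖ ^ 2)
      (fun _ _ => Finset.sum_nonneg fun _ _ => by positivity) (Finset.mem_univ j))
    exact Finset.single_le_sum (f := fun i => ‖g i j‖ ^ 2) (fun _ _ => by positivity)
      (Finset.mem_univ i)
  nlinarith [norm_nonneg (g i j)]

theorem rank_lt_of_det_zero (h : Matrix n n ℂ) (hd : h.det = 0) : h.rank < Fintype.card n := by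
  refine lt_of_le_of_ne (rank_le_card_width h) fun hr => ?_
  have h1 := isUnit_det_gram h hr
  rw [det_mul, hd, mul_zero] at h1
  exact not_isUnit_zero h1

variable {ι : Type*} [Fintype ι] {m : ι → Type*} [∀ p, Fintype (m p)] [∀ p, DecidableEq (m p)]

/-- The contradiction at the heart of the compactness argument. -/
theorem no_bad_limit (c : ι → ℝ) (hc : ∀ p, 0 ≤ c p) (κ : ℝ)
    (M : ∀ p, Matrix n (m p) ℂ) (hM : ∀ p, (M p).rank = Fintype.card (m p))
    (hSS : ∀ y : Matrix n n ℂ, κ * y.rank ≤ ∑ p, c p * (y * M p).rank)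
    (e : ℕ → ℝ) (e0 : ℝ) (he0 : 0 < e0) (he : ∀ k, e0 ≤ e k)
    (h : ℕ → Matrix n n ℂ) (hd : ∀ k, (h k).det ≠ 0) (ht : ∀ k, ((h k)ᴴ * h k).trace = 1)
    (hst : ∀ k, ∑ p, (c p : ℂ) • projM (h k * M p) - (κ : ℂ) • (1 : Matrix n n ℂ) =
        ((e k : ℝ) : ℂ) • (1 - (Fintype.card n : ℂ) • (h k * (h k)ᴴ)))
    (hlim : Tendsto (fun k => (h k).det) atTop (𝓝 0)) : False := by
  have hN : ∀ k p, (h k * M p).rank = Fintype.card (m p) := fun k p => by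
    rw [rank_mul_of_det _ (hd k), hM]
  have hOP := fun k p => projM_isOP _ (hN k p)
  let u : ℕ → Option ι → Matrix n n ℂ := fun k j =>
    Option.elim j (h k) fun p => projM (h k * M p)
  obtain ⟨L, φ, hφ, hL⟩ := exists_subseq_matrix u 1 (by
    intro k j a b
    cases j with
    | none => exact entry_le_one_of_trace _ (ht k) a b
    | some p => exact isOP_entry (hOP k p) a b)
  have hφt := hφ.tendsto_atTop
  let h0 := L none
  let P : ι → Matrix n n ℂ := fun p => L (some p)
  have hh : Tendsto (fun k => h (φ k)) atTop (𝓝 h0) := hL none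
  have hPk : ∀ p, Tendsto (fun k => projM (h (φ k) * M p)) atTop (𝓝 (P p)) := fun p => hL (some p)
  have hPO : ∀ p, IsOP (P p) := fun p => isOP_of_tendsto _ _ (fun k => hOP (φ k) p) (hPk p)
  have hPh : ∀ p, P p * (h0 * M p) = h0 * M p := by
    intro p
    have h1 : Tendsto (fun k => h (φ k) * M p) atTop (𝓝 (h0 * M p)) :=
      tendsto_matrix_mul _ _ _ _ hh tendsto_const_nhds
    have h2 := tendsto_matrix_mul _ _ _ _ (hPk p) h1
    have h3 : (fun k => projM (h (φ k) * M p) * (h (φ k) * M p)) = fun k => h (φ k) * M p :=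
      funext fun k => projM_mul _ (hN _ p)
    rw [h3] at h2
    exact tendsto_nhds_unique h2 h1
  have hdet0 : h0.det = 0 := by
    have h1 : Tendsto (fun k => (h (φ k)).det) atTop (𝓝 h0.det) :=
      (continuous_id.matrix_det.tendsto h0).comp hh
    exact tendsto_nhds_unique h1 (hlim.comp hφt)
  have hrank := rank_lt_of_det_zero h0 hdet0
  have hhH : Tendsto (fun k => h (φ k) * (h (φ k))ᴴ) atTop (𝓝 (h0 * h0ᴴ)) :=
    tendsto_matrix_mul _ _ _ _ hh ((continuous_id.matrix_conjTranspose.tendsto h0).comp hh)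
  have htr0 : (h0 * h0ᴴ).trace.re = 1 := by
    have h1 := tendsto_trace_re _ _ hhH
    have h2 : (fun k => (h (φ k) * (h (φ k))ᴴ).trace.re) = fun _ => (1 : ℝ) :=
      funext fun k => by rw [trace_mul_comm, ht, Complex.one_re]
    rw [h2] at h1
    exact tendsto_nhds_unique h1 tendsto_const_nhds
  obtain ⟨Q, K, hQ, hQ1, -, hQ3⟩ := exists_range_proj h0
  have hx : Tendsto (fun k => (Q * (h (φ k) * (h (φ k))ᴴ)).trace.re) atTop (𝓝 1) := by
    have h1 := tendsto_trace_re _ _ (tendsto_matrix_mul (fun _ => Q) _ _ _ tendsto_const_nhds hhH)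
    rwa [← Matrix.mul_assoc Q h0, hQ1, htr0] at h1
  have hS : Tendsto (fun k => ∑ p, c p * (Q * projM (h (φ k) * M p)).trace.re - κ * h0.rank) atTop
      (𝓝 (∑ p, c p * (Q * P p).trace.re - κ * h0.rank)) :=
    (tendsto_finsetSum _ fun p _ => (tendsto_trace_re _ _
      (tendsto_matrix_mul (fun _ => Q) _ _ _ tendsto_const_nhds (hPk p))).const_mul _).sub_const _
  have heq : ∀ k, ∑ p, c p * (Q * projM (h k * M p)).trace.re - κ * h0.rank =
      e k * (h0.rank - Fintype.card n * (Q * (h k * (h k)ᴴ)).trace.re) := by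
    intro k
    have h1 := congrArg (fun X => (Q * X).trace.re) (hst k)
    simp only [Matrix.mul_sub, Matrix.mul_sum, Matrix.mul_smul, trace_sub, trace_sum,
        trace_smul, Matrix.mul_one, hQ3, smul_eq_mul, Complex.sub_re, Complex.re_sum,
        Complex.re_ofReal_mul, Complex.natCast_re] at h1
    rw [h1]
    congr 2
    have := Complex.re_ofReal_mul (Fintype.card n : ℝ) (Q * (h k * (h k)ᴴ)).trace
    rw [Complex.ofReal_natCast] at this
    exact this
  have hlow : 0 ≤ ∑ p, c p * (Q * P p).trace.re - κ * h0.rank := by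
    have h1 := hSS h0
    have h2 : ∑ p, c p * ((h0 * M p).rank : ℝ) ≤ ∑ p, c p * (Q * P p).trace.re :=
      Finset.sum_le_sum fun p _ => mul_le_mul_of_nonneg_left (rank_le_trace hQ (hPO p) _
        (by rw [← Matrix.mul_assoc, hQ1]) (hPh p)) (hc p)
    linarith
  have hy : Tendsto (fun k => (h0.rank : ℝ) - Fintype.card n *
      (Q * (h (φ k) * (h (φ k))ᴴ)).trace.re) atTop (𝓝 (h0.rank - Fintype.card n * 1)) :=
    (hx.const_mul _).const_sub _
  have hR : (h0.rank : ℝ) + 1 ≤ Fintype.card n := by exact_mod_cast hrank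
  have hev := hy.eventually_lt_const (u := (-1/2 : ℝ)) (by linarith)
  have hfin : ∑ p, c p * (Q * P p).trace.re - κ * h0.rank ≤ - (e0 / 2) := by
    refine le_of_tendsto hS ?_
    filter_upwards [hev] with k hk
    rw [heq]
    have := he (φ k)
    nlinarith
  linarith

theorem exists_almost [Nonempty n] (c : ι → ℝ) (hc : ∀ p, 0 ≤ c p) (κ : ℝ)
    (M : ∀ p, Matrix n (m p) ℂ) (hM : ∀ p, (M p).rank = Fintype.card (m p))
    (hbal : ∑ p, c p * Fintype.card (m p) = κ * Fintype.card n)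
    (hSS : ∀ y : Matrix n n ℂ, κ * y.rank ≤ ∑ p, c p * (y * M p).rank) (ρ : ℝ) (hρ : 0 < ρ) :
    ∃ h : Matrix n n ℂ, h.det ≠ 0 ∧ ∀ a b,
      ‖(∑ p, (c p : ℂ) • projM (h * M p) - (κ : ℂ) • (1 : Matrix n n ℂ)) a b‖ ≤ ρ := by
  choose h hd ht hst using fun k : ℕ => exists_stationary c hc κ (1 / ((k : ℝ) + 1))
    (by positivity) M hM hbal
  set N : ℝ := (Fintype.card n : ℝ) with hNd
  have hN0 : 0 ≤ N := by positivity
  let e : ℕ → ℝ := fun k => 1 / ((k : ℝ) + 1) / ‖(h k).det‖ ^ 2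
  have hdp : ∀ k, 0 < ‖(h k).det‖ ^ 2 := fun k => by have := norm_pos_iff.2 (hd k); positivity
  have hepos : ∀ k, 0 < e k := fun k => div_pos (by positivity) (hdp k)
  by_cases hex : ∃ k, e k * (1 + N * N) ≤ ρ
  · obtain ⟨k, hk⟩ := hex
    refine ⟨h k, hd k, fun a b => le_trans ?_ hk⟩
    rw [hst k, Matrix.smul_apply, smul_eq_mul, norm_mul, Complex.norm_real, Real.norm_of_nonneg
      (hepos k).le]
    refine mul_le_mul_of_nonneg_left ?_ (hepos k).le
    rw [Matrix.sub_apply, Matrix.smul_apply, smul_eq_mul]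
    refine (norm_sub_le _ _).trans (add_le_add ?_ ?_)
    · rw [Matrix.one_apply]; split_ifs <;> simp
    · rw [norm_mul, Complex.norm_natCast]
      refine mul_le_mul_of_nonneg_left ?_ hN0
      rw [Matrix.mul_apply]
      refine (norm_sum_le _ _).trans ?_
      have : ∑ j : n, ‖h k a j * (h k)ᴴ j b‖ ≤ ∑ j : n, (1 : ℝ) :=
        Finset.sum_le_sum fun j _ => by
          rw [norm_mul, conjTranspose_apply, norm_star]
          exact mul_le_one₀ (entry_le_one_of_trace _ (ht k) a j) (norm_nonneg _)
            (entry_le_one_of_trace _ (ht k) b j)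
      simpa [hNd] using this
  · exfalso
    push Not at hex
    let e0 := ρ / (1 + N * N)
    have he0 : 0 < e0 := by positivity
    have he : ∀ k, e0 ≤ e k := fun k => by
      rw [div_le_iff₀ (by positivity)]; exact (hex k).le
    refine no_bad_limit c hc κ M hM hSS e e0 he0 he h hd ht hst ?_
    have h1 : Tendsto (fun k => ‖(h k).det‖ ^ 2) atTop (𝓝 0) := by
      have h2 : Tendsto (fun k : ℕ => 1 / ((k : ℝ) + 1) * e0⁻¹) atTop (𝓝 (0 * e0⁻¹)) :=
        tendsto_one_div_add_atTop_nhds_zero_nat.mul_const _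
      rw [zero_mul] at h2
      refine squeeze_zero (fun k => (hdp k).le) (fun k => ?_) h2
      have h3 := he k
      simp only [e] at h3
      rw [le_div_iff₀ (hdp k)] at h3
      rw [← div_eq_mul_inv, le_div_iff₀ he0]
      linarith
    have h4 := h1.sqrt
    simp only [Real.sqrt_sq (norm_nonneg _), Real.sqrt_zero] at h4
    exact tendsto_zero_iff_norm_tendsto_zero.2 h4

end

end

section
open Matrix
open scoped ComplexOrder
set_option linter.unusedSectionVars false

section
variable {n : Type*} [Fintype n] [DecidableEq n]
open Filter Topology

theorem exists_perm_of_map_eq {β : Type*} [DecidableEq β] (f g : n → β)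
    (h : Finset.univ.val.map f = Finset.univ.val.map g) : ∃ σ : Equiv.Perm n, ∀ i, f (σ i) = g i := by
  have hcard : ∀ x, Fintype.card {i // g i = x} = Fintype.card {i // f i = x} := by
    intro x
    have := congrArg (Multiset.count x) h
    rw [Multiset.count_map, Multiset.count_map] at this
    rw [Fintype.card_subtype, Fintype.card_subtype]
    simp only [eq_comm (a := x)] at this
    exact this.symm
  exact ⟨Equiv.ofFiberEquiv fun x => Fintype.equivOfCardEq (hcard x),
    fun i => Equiv.ofFiberEquiv_map _ i⟩

/-- Hermitian matrices with the same characteristic polynomial are unitarily conjugate. -/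
theorem exists_unitary_conj (A B : Matrix n n ℂ) (hA : A.IsHermitian) (hB : B.IsHermitian)
    (h : A.charpoly = B.charpoly) : ∃ w : Matrix n n ℂ, wᴴ * w = 1 ∧ w * wᴴ = 1 ∧
      A = w * B * wᴴ := by
  have he := (IsHermitian.eigenvalues_eq_eigenvalues_iff hA hB).2 h
  have h1 := hA.spectral_theorem
  have h2 := hB.spectral_theorem
  rw [Unitary.conjStarAlgAut_apply] at h1 h2
  rw [← he] at h2
  set U : Matrix n n ℂ := (hA.eigenvectorUnitary : Matrix n n ℂ) with hU
  set V : Matrix n n ℂ := (hB.eigenvectorUnitary : Matrix n n ℂ) with hV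
  have hU1 : U * Uᴴ = 1 := Unitary.coe_mul_star_self hA.eigenvectorUnitary
  have hV1 : V * Vᴴ = 1 := Unitary.coe_mul_star_self hB.eigenvectorUnitary
  have hU2 : Uᴴ * U = 1 := Unitary.coe_star_mul_self hA.eigenvectorUnitary
  have hV2 : Vᴴ * V = 1 := Unitary.coe_star_mul_self hB.eigenvectorUnitary
  set D : Matrix n n ℂ := diagonal (RCLike.ofReal ∘ hA.eigenvalues) with hD
  have h1' : A = U * D * Uᴴ := h1
  have h2' : B = V * D * Vᴴ := h2
  refine ⟨U * Vᴴ, ?_, ?_, ?_⟩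
  · rw [conjTranspose_mul, conjTranspose_conjTranspose, Matrix.mul_assoc, ← Matrix.mul_assoc Uᴴ, hU2,
      Matrix.one_mul, hV1]
  · rw [conjTranspose_mul, conjTranspose_conjTranspose, Matrix.mul_assoc, ← Matrix.mul_assoc Vᴴ, hV2,
      Matrix.one_mul, hU1]
  · have e : U * Vᴴ * (V * D * Vᴴ) * (U * Vᴴ)ᴴ = U * (Vᴴ * V) * D * (Vᴴ * V) * Uᴴ := by
      rw [conjTranspose_mul, conjTranspose_conjTranspose]; simp only [Matrix.mul_assoc]
    calc A = U * D * Uᴴ := h1'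
      _ = U * Vᴴ * (V * D * Vᴴ) * (U * Vᴴ)ᴴ := by
        rw [e, hV2, Matrix.mul_one, Matrix.mul_one]
      _ = U * Vᴴ * B * (U * Vᴴ)ᴴ := by rw [← h2']

/-- real diagonal matrix. -/
noncomputable def rdiag (α : n → ℝ) : Matrix n n ℂ := diagonal fun l => (α l : ℂ)

theorem rdiag_herm (α : n → ℝ) : (rdiag α).IsHermitian := by
  change (rdiag α)ᴴ = rdiag α
  rw [rdiag, diagonal_conjTranspose]
  congr 1
  ext l
  simp

theorem rdiag_charpoly (α : n → ℝ) : (rdiag α).charpoly =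
    ∏ l, (Polynomial.X - Polynomial.C (α l : ℂ)) := charpoly_diagonal _

theorem conj_herm (B w : Matrix n n ℂ) (hB : B.IsHermitian) : (w * B * wᴴ).IsHermitian := by
  change (w * B * wᴴ)ᴴ = _
  rw [conjTranspose_mul, conjTranspose_mul, conjTranspose_conjTranspose, hB, Matrix.mul_assoc]

theorem conj_charpoly (B w : Matrix n n ℂ) (hw : wᴴ * w = 1) : (w * B * wᴴ).charpoly = B.charpoly := by
  rw [Matrix.charpoly_mul_comm, ← Matrix.mul_assoc, hw, Matrix.one_mul]
end

theorem mem_coadjointOrbit_iff {n : ℕ} (lam : Fin n → ℝ) (hsum : ∑ i, lam i = 0)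
    (A : Matrix (Fin n) (Fin n) ℂ) : A ∈ coadjointOrbit lam ↔
      A.IsHermitian ∧ A.charpoly = (rdiag lam).charpoly := by
  constructor
  · rintro ⟨-, hA, σ, hσ⟩
    refine ⟨hA, ?_⟩
    rw [hA.charpoly_eq, rdiag_charpoly, ← Equiv.prod_comp σ]
    exact Finset.prod_congr rfl fun i _ => by rw [hσ]; rfl
  · rintro ⟨hA, h⟩
    have h1 := hA.roots_charpoly_eq_eigenvalues
    have hp : (∏ l, (Polynomial.X - Polynomial.C (lam l : ℂ))).roots =
        Finset.univ.val.map fun l => (lam l : ℂ) := by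
      have := Polynomial.roots_multiset_prod_X_sub_C (Finset.univ.val.map fun l => (lam l : ℂ))
      rw [Multiset.map_map] at this
      exact this
    rw [h, rdiag_charpoly, hp] at h1
    have h2 : Finset.univ.val.map hA.eigenvalues = Finset.univ.val.map lam := by
      have h3 := congrArg (Multiset.map Complex.re) h1
      rw [Multiset.map_map, Multiset.map_map] at h3
      exact h3.symm
    obtain ⟨σ, hσ⟩ := exists_perm_of_map_eq _ _ h2
    refine ⟨?_, hA, σ, hσ⟩
    rw [hA.trace_eq_sum_eigenvalues, ← Equiv.sum_comp σ]
    simp only [hσ]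
    have : ((∑ i, lam i : ℝ) : ℂ) = 0 := by rw [hsum]; simp
    rw [← this]
    simp

section
variable {m : ℕ}

/-- first columns of `g`. -/
def flagM (g : Matrix (Fin (m+1)) (Fin (m+1)) ℂ) (j : Fin m) :
    Matrix (Fin (m+1)) {l : Fin (m+1) // l ≤ j.castSucc} ℂ := g.submatrix id Subtype.val

/-- coefficients. -/
def coefA (α : Fin (m+1) → ℝ) (j : Fin m) : ℝ := α j.castSucc - α j.succ

theorem mul_flagM (h g : Matrix (Fin (m+1)) (Fin (m+1)) ℂ) (j : Fin m) :
    h * flagM g j = flagM (h * g) j := rfl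

theorem flagM_one_gram (j : Fin m) : (flagM (1 : Matrix (Fin (m+1)) (Fin (m+1)) ℂ) j)ᴴ *
    flagM 1 j = 1 := by
  ext a b
  simp only [flagM, Matrix.mul_apply, conjTranspose_apply, submatrix_apply, id, Matrix.one_apply]
  simp [Subtype.ext_iff, eq_comm]

theorem flagM_rank (g : Matrix (Fin (m+1)) (Fin (m+1)) ℂ) (hg : g.det ≠ 0) (j : Fin m) :
    (flagM g j).rank = Fintype.card {l : Fin (m+1) // l ≤ j.castSucc} := by
  have h1 : flagM g j = g * flagM 1 j := by rw [mul_flagM, Matrix.mul_one]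
  rw [h1, rank_mul_of_det g hg, ← rank_conjTranspose_mul_self, flagM_one_gram, rank_one]

theorem flagM_one_mul (j : Fin m) {k : Type*} (K : Matrix {l : Fin (m+1) // l ≤ j.castSucc} k ℂ) (a : Fin (m+1))
    (b : k) : ((flagM (1 : Matrix (Fin (m+1)) (Fin (m+1)) ℂ) j) * K) a b =
      if h : a ≤ j.castSucc then K ⟨a, h⟩ b else 0 := by
  rw [Matrix.mul_apply]
  simp only [flagM, submatrix_apply, id, Matrix.one_apply, ite_mul, one_mul, zero_mul]
  split_ifs with h
  · rw [Finset.sum_eq_single ⟨a, h⟩]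
    · simp
    · intro x _ hx
      rw [if_neg]
      intro hax
      exact hx (Subtype.ext hax.symm)
    · simp
  · apply Finset.sum_eq_zero
    intro x _
    rw [if_neg]
    intro hax
    exact h (hax ▸ x.2)

theorem projM_flagM_unitary (u : Matrix (Fin (m+1)) (Fin (m+1)) ℂ) (hu : uᴴ * u = 1) (j : Fin m) :
    projM (flagM u j) = u * diagonal (fun l => if l ≤ j.castSucc then (1 : ℂ) else 0) * uᴴ := by
  have h1 : flagM u j = u * flagM 1 j := by rw [mul_flagM, Matrix.mul_one]
  have h2 : (flagM u j)ᴴ * flagM u j = 1 := by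
    rw [h1, conjTranspose_mul, Matrix.mul_assoc, ← Matrix.mul_assoc uᴴ, hu, Matrix.one_mul,
      flagM_one_gram]
  have h3 : flagM (1 : Matrix (Fin (m+1)) (Fin (m+1)) ℂ) j * (flagM 1 j)ᴴ =
      diagonal (fun l => if l ≤ j.castSucc then (1 : ℂ) else 0) := by
    ext a b
    rw [flagM_one_mul]
    simp only [flagM, conjTranspose_apply, submatrix_apply, id, Matrix.one_apply, diagonal_apply]
    by_cases hab : a = b
    · subst hab; simp
    · simp [hab, Ne.symm hab]
  rw [projM, h2, inv_one, Matrix.mul_one, h1, conjTranspose_mul, Matrix.mul_assoc,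
    ← Matrix.mul_assoc (flagM 1 j), h3, Matrix.mul_assoc]

theorem abel_flag (α : Fin (m+1) → ℝ) (l : Fin (m+1)) :
    ∑ j : Fin m, coefA α j * (if l ≤ j.castSucc then 1 else 0) = α l - α (Fin.last m) := by
  induction l using Fin.reverseInduction with
  | last =>
    rw [sub_self]
    apply Finset.sum_eq_zero
    intro j _
    rw [if_neg, mul_zero]
    exact not_le.2 (Fin.castSucc_lt_last j)
  | cast i ih =>
    have h1 : ∀ j : Fin m, coefA α j * (if i.castSucc ≤ j.castSucc then 1 else 0) =
        coefA α j * (if i.succ ≤ j.castSucc then 1 else 0) + (if j = i then coefA α j else 0) := by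
      intro j
      rcases lt_trichotomy i j with h | h | h
      · rw [if_pos (Fin.castSucc_le_castSucc_iff.2 h.le), if_pos (Fin.succ_le_castSucc_iff.2 h),
          if_neg h.ne', add_zero]
      · subst h
        simp
      · rw [if_neg (by simpa using h), if_neg, if_neg h.ne]
        · simp
        · rw [Fin.succ_le_castSucc_iff]; exact not_lt.2 h.le
    rw [Finset.sum_congr rfl fun j _ => h1 j, Finset.sum_add_distrib, ih]
    simp [coefA]

theorem abel_flagC (α : Fin (m+1) → ℝ) (l : Fin (m+1)) :
    ∑ j : Fin m, (coefA α j : ℂ) * (if l ≤ j.castSucc then 1 else 0) =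
      (α l : ℂ) - (α (Fin.last m) : ℂ) := by
  rw [← Complex.ofReal_sub, ← abel_flag, Complex.ofReal_sum]
  refine Finset.sum_congr rfl fun j _ => ?_
  split_ifs <;> simp

theorem sum_flag_unitary (u : Matrix (Fin (m+1)) (Fin (m+1)) ℂ) (hu : uᴴ * u = 1)
    (hu2 : u * uᴴ = 1) (α : Fin (m+1) → ℝ) :
    ∑ j, (coefA α j : ℂ) • projM (flagM u j) =
      u * rdiag α * uᴴ - (α (Fin.last m) : ℂ) • (1 : Matrix (Fin (m+1)) (Fin (m+1)) ℂ) := by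
  have h1 : ∑ j, (coefA α j : ℂ) • diagonal (fun l => if l ≤ j.castSucc then (1 : ℂ) else 0) =
      rdiag α - (α (Fin.last m) : ℂ) • (1 : Matrix (Fin (m+1)) (Fin (m+1)) ℂ) := by
    ext a b
    rw [Matrix.sum_apply, rdiag, Matrix.sub_apply]
    simp only [Matrix.smul_apply, diagonal_apply, Matrix.one_apply, smul_eq_mul]
    by_cases hab : a = b
    · subst hab
      simp only [if_true]
      rw [mul_one, ← abel_flagC]
    · simp [hab]
  simp only [projM_flagM_unitary u hu]
  have h2 : ∀ j, (coefA α j : ℂ) • (u * diagonal (fun l => if l ≤ j.castSucc then (1 : ℂ) else 0) * uᴴ)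
      = u * ((coefA α j : ℂ) • diagonal (fun l => if l ≤ j.castSucc then (1 : ℂ) else 0)) * uᴴ := by
    intro j
    rw [Matrix.mul_smul, Matrix.smul_mul]
  rw [Finset.sum_congr rfl fun j _ => h2 j, ← Finset.sum_mul, ← Finset.mul_sum, h1, Matrix.mul_sub,
    Matrix.sub_mul, Matrix.mul_smul, Matrix.smul_mul, Matrix.mul_one, hu2]

theorem bal_flag (α : Fin (m+1) → ℝ) :
    ∑ j : Fin m, coefA α j * (Fintype.card {l : Fin (m+1) // l ≤ j.castSucc} : ℝ) =
      ∑ l, α l - α (Fin.last m) * Fintype.card (Fin (m+1)) := by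
  have h1 : ∀ j : Fin m, (Fintype.card {l : Fin (m+1) // l ≤ j.castSucc} : ℝ) =
      ∑ l : Fin (m+1), if l ≤ j.castSucc then (1 : ℝ) else 0 := by
    intro j
    rw [Fintype.card_subtype, Finset.sum_boole]
  simp only [h1, Finset.mul_sum]
  rw [Finset.sum_comm, Finset.sum_congr rfl fun l _ => abel_flag α l, Finset.sum_sub_distrib]
  simp [mul_comm]

theorem flag_charpoly (N : Matrix (Fin (m+1)) (Fin (m+1)) ℂ) (hN : N.det ≠ 0)
    (γ : Fin (m+1) → ℝ) :
    (∑ j, (coefA γ j : ℂ) • projM (flagM N j) +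
      (γ (Fin.last m) : ℂ) • (1 : Matrix (Fin (m+1)) (Fin (m+1)) ℂ)).charpoly =
      (rdiag γ).charpoly := by
  have hu := isUnit_iff_ne_zero.2 hN
  set A := ∑ j, (coefA γ j : ℂ) • projM (flagM N j) +
      (γ (Fin.last m) : ℂ) • (1 : Matrix (Fin (m+1)) (Fin (m+1)) ℂ) with hA
  let K : ∀ j : Fin m, Matrix {l : Fin (m+1) // l ≤ j.castSucc} (Fin (m+1)) ℂ := fun j =>
    ((flagM N j)ᴴ * flagM N j)⁻¹ * (flagM N j)ᴴ * N
  have hK : ∀ j, K j * flagM 1 j = 1 := by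
    intro j
    have h1 := isUnit_det_gram _ (flagM_rank N hN j)
    simp only [K]
    rw [Matrix.mul_assoc, mul_flagM, Matrix.mul_one, Matrix.mul_assoc, nonsing_inv_mul _ h1]
  have hE : ∀ j, N⁻¹ * projM (flagM N j) * N = flagM 1 j * K j := by
    intro j
    have h1 : N⁻¹ * flagM N j = flagM 1 j := by rw [mul_flagM, nonsing_inv_mul _ hu]
    rw [← h1]
    simp only [projM, K, Matrix.mul_assoc]
  have hconj : N⁻¹ * A * N = ∑ j, (coefA γ j : ℂ) • (flagM 1 j * K j) +
      (γ (Fin.last m) : ℂ) • (1 : Matrix (Fin (m+1)) (Fin (m+1)) ℂ) := by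
    rw [hA, Matrix.mul_add, Matrix.add_mul, Matrix.mul_smul, Matrix.smul_mul, Matrix.mul_one,
      nonsing_inv_mul _ hu, Matrix.mul_sum, Matrix.sum_mul]
    congr 1
    refine Finset.sum_congr rfl fun j _ => ?_
    rw [Matrix.mul_smul, Matrix.smul_mul, hE]
  have hent : ∀ (j : Fin m) (a b : Fin (m+1)), b ≤ a → (flagM 1 j * K j) a b =
      if a = b then (if b ≤ j.castSucc then 1 else 0) else 0 := by
    intro j a b hba
    by_cases hb : b ≤ j.castSucc
    · have h1 : (flagM 1 j * K j) a b = ((flagM 1 j * K j) * flagM 1 j) a ⟨b, hb⟩ := by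
        rw [mul_flagM, Matrix.mul_one]; rfl
      rw [h1, Matrix.mul_assoc, hK, Matrix.mul_one, if_pos hb]
      rfl
    · rw [flagM_one_mul, dif_neg (fun h => hb (hba.trans h)), if_neg hb]
      simp
  have h1 : A.charpoly = (N⁻¹ * A * N).charpoly := by
    rw [Matrix.charpoly_mul_comm, ← Matrix.mul_assoc, mul_nonsing_inv _ hu, Matrix.one_mul]
  have hlow : ∀ a b : Fin (m+1), b ≤ a → (N⁻¹ * A * N) a b = if a = b then (γ b : ℂ) else 0 := by
    intro a b hab
    rw [hconj, Matrix.add_apply, Matrix.sum_apply]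
    simp only [Matrix.smul_apply, smul_eq_mul, hent _ _ _ hab, Matrix.one_apply]
    by_cases h : a = b
    · simp only [if_pos h]
      rw [abel_flagC]
      ring
    · simp [if_neg h]
  rw [h1, charpoly_of_isUpperTriangular, rdiag_charpoly]
  · exact Finset.prod_congr rfl fun l _ => by rw [hlow l l le_rfl, if_pos rfl]
  · intro a b hab
    have hab' : b < a := hab
    rw [hlow a b hab'.le, if_neg hab'.ne']

end

end

section
open Matrix
open scoped ComplexOrder
set_option linter.unusedSectionVars false

section
open Filter Topology
variable {m : ℕ} {I : Type*} [Fintype I]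

/-- Solvability of the spectral problem: Hermitian matrices with given spectra summing to zero. -/
def SolU (α : I → Fin (m+1) → ℝ) : Prop :=
  ∃ u : I → Matrix (Fin (m+1)) (Fin (m+1)) ℂ, (∀ i, (u i)ᴴ * u i = 1 ∧ u i * (u i)ᴴ = 1) ∧
    ∑ i, u i * rdiag (α i) * (u i)ᴴ = 0

/-- The weight. -/
noncomputable def kap (α : I → Fin (m+1) → ℝ) : ℝ := - ∑ i, α i (Fin.last m)

theorem sol_flag (α : I → Fin (m+1) → ℝ) (u : I → Matrix (Fin (m+1)) (Fin (m+1)) ℂ)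
    (hu : ∀ i, (u i)ᴴ * u i = 1 ∧ u i * (u i)ᴴ = 1)
    (hs : ∑ i, u i * rdiag (α i) * (u i)ᴴ = 0) :
    ∑ p : I × Fin m, (coefA (α p.1) p.2 : ℂ) • projM (flagM (u p.1) p.2) =
      (kap α : ℂ) • (1 : Matrix (Fin (m+1)) (Fin (m+1)) ℂ) := by
  rw [Fintype.sum_prod_type]
  simp only [sum_flag_unitary _ (hu _).1 (hu _).2]
  rw [Finset.sum_sub_distrib, hs, ← Finset.sum_smul, zero_sub, kap, Complex.ofReal_neg,
    Complex.ofReal_sum, neg_smul]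

theorem sol_trace (α : I → Fin (m+1) → ℝ) (h : SolU α) : ∑ i, ∑ l, α i l = 0 := by
  obtain ⟨u, hu, hs⟩ := h
  have h1 := congrArg Matrix.trace hs
  rw [Matrix.trace_sum, Matrix.trace_zero] at h1
  have h2 : ∀ i, (u i * rdiag (α i) * (u i)ᴴ).trace = ((∑ l, α i l : ℝ) : ℂ) := by
    intro i
    rw [Matrix.trace_mul_comm, ← Matrix.mul_assoc, (hu i).1, Matrix.one_mul, rdiag,
      Matrix.trace_diagonal, Complex.ofReal_sum]
  simp only [h2] at h1
  exact_mod_cast h1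

theorem det_of_unitary (u : Matrix (Fin (m+1)) (Fin (m+1)) ℂ) (hu : uᴴ * u = 1) : u.det ≠ 0 := by
  intro h
  have := congrArg Matrix.det hu
  rw [det_mul, h, mul_zero, det_one] at this
  exact zero_ne_one this

theorem map_det_aut (g : Matrix (Fin (m+1)) (Fin (m+1)) ℂ) (τ : ℂ ≃+* ℂ) :
    (g.map τ).det = τ g.det := by
  have := RingHom.map_det (τ : ℂ →+* ℂ) g
  exact this.symm

theorem generic_SS (α : I → Fin (m+1) → ℝ) (hα : ∀ i, Antitone (α i))
    (u : I → Matrix (Fin (m+1)) (Fin (m+1)) ℂ)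
    (hu : ∀ i, (u i)ᴴ * u i = 1 ∧ u i * (u i)ᴴ = 1)
    (hs : ∑ i, u i * rdiag (α i) * (u i)ᴴ = 0)
    (g : I → Matrix (Fin (m+1)) (Fin (m+1)) ℂ) (hg : ∀ i, (g i).det ≠ 0)
    (τ : ℕ → ℂ ≃+* ℂ) (hτ : ∀ i, Tendsto (fun k => (g i).map (τ k)) atTop (𝓝 (u i)))
    (y : Matrix (Fin (m+1)) (Fin (m+1)) ℂ) :
    kap α * y.rank ≤ ∑ p : I × Fin m, coefA (α p.1) p.2 * (y * flagM (g p.1) p.2).rank := by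
  refine semistable_limit (fun p : I × Fin m => coefA (α p.1) p.2)
    (fun p => sub_nonneg.2 (hα p.1 (Fin.castSucc_lt_succ (i := p.2)).le)) (kap α)
    (fun p => flagM (u p.1) p.2) (fun p => flagM_rank _ (det_of_unitary _ (hu p.1).1) _)
    (sol_flag α u hu hs) (fun k p => flagM ((g p.1).map (τ k)) p.2) ?_ ?_
    (fun k => y.map (τ k)) y.rank (fun p => (y * flagM (g p.1) p.2).rank) ?_ ?_
  · intro k p
    refine flagM_rank _ ?_ _
    rw [map_det_aut]
    simpa using hg p.1
  · intro p
    have hc : Continuous fun x : Matrix (Fin (m+1)) (Fin (m+1)) ℂ => flagM x p.2 :=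
      continuous_id.matrix_submatrix _ _
    have h1 := Filter.Tendsto.comp (hc.tendsto (u p.1)) (hτ p.1)
    exact h1
  · intro k
    exact cv_rank_map_eq y (τ k)
  · intro k p
    have h1 : y.map (τ k) * flagM ((g p.1).map (τ k)) p.2 = (y * flagM (g p.1) p.2).map (τ k) := by
      have := Matrix.map_mul (L := y) (M := flagM (g p.1) p.2) (f := (τ k : ℂ →+* ℂ))
      exact this.symm
    change (y.map (τ k) * flagM ((g p.1).map (τ k)) p.2).rank = _
    rw [h1]
    exact cv_rank_map_eq _ (τ k)

theorem exists_generic (u v : I → Matrix (Fin (m+1)) (Fin (m+1)) ℂ)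
    (hu : ∀ i, (u i)ᴴ * u i = 1) :
    ∃ g : I → Matrix (Fin (m+1)) (Fin (m+1)) ℂ, (∀ i, (g i).det ≠ 0) ∧
      (∃ τ : ℕ → ℂ ≃+* ℂ, ∀ i, Tendsto (fun k => (g i).map (τ k)) atTop (𝓝 (u i))) ∧
      (∃ τ : ℕ → ℂ ≃+* ℂ, ∀ i, Tendsto (fun k => (g i).map (τ k)) atTop (𝓝 (v i))) := by
  let S : Set ℂ := (Set.range fun x : I × Fin (m+1) × Fin (m+1) => u x.1 x.2.1 x.2.2) ∪
    (Set.range fun x : I × Fin (m+1) × Fin (m+1) => v x.1 x.2.1 x.2.2)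
  have hS : S.Countable := ((Set.finite_range _).union (Set.finite_range _)).countable
  obtain ⟨z, hz⟩ := exists_transc_aut S hS
  let g : I → Matrix (Fin (m+1)) (Fin (m+1)) ℂ := fun i => (1 - z) • u i + z • v i
  have key : ∀ (a : ℚ) (i : I) (τ : ℕ → ℂ ≃+* ℂ), (∀ k, ∀ s ∈ S, τ k s = s) →
      (∀ k : ℕ, τ k z = (a : ℂ) + ((1 / ((k : ℚ) + 1) : ℚ) : ℂ) * z) →
      Tendsto (fun k => (g i).map (τ k)) atTop (𝓝 ((1 - (a : ℂ)) • u i + (a : ℂ) • v i)) := by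
    intro a i τ h1 h2
    have hlim : Tendsto (fun k => τ k z) atTop (𝓝 (a : ℂ)) := by
      have h3 : Tendsto (fun k : ℕ => (a : ℂ) + (1 / ((k : ℂ) + 1)) * z) atTop
          (𝓝 ((a : ℂ) + 0 * z)) :=
        tendsto_const_nhds.add (tendsto_one_div_add_atTop_nhds_zero_nat.mul_const z)
      rw [zero_mul, add_zero] at h3
      refine h3.congr fun k => ?_
      rw [h2]
      push_cast
      rfl
    have h4 : ∀ k, (g i).map (τ k) = (1 - τ k z) • u i + (τ k z) • v i := by
      intro k
      ext x y
      have hx : u i x y ∈ S := Or.inl ⟨(i, x, y), rfl⟩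
      have hy : v i x y ∈ S := Or.inr ⟨(i, x, y), rfl⟩
      simp only [g, Matrix.map_apply, Matrix.add_apply, Matrix.smul_apply, smul_eq_mul, map_add,
        map_mul, map_sub, map_one, h1 k _ hx, h1 k _ hy]
    simp only [h4]
    exact ((tendsto_const_nhds.sub hlim).smul_const _).add (hlim.smul_const _)
  have hne : ∀ k : ℕ, (1 / ((k : ℚ) + 1)) ≠ 0 := fun k => by positivity
  choose τ0 h01 h02 using fun k : ℕ => hz 0 (1 / ((k : ℚ) + 1)) (hne k)
  choose τ1 h11 h12 using fun k : ℕ => hz 1 (1 / ((k : ℚ) + 1)) (hne k)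
  have t0 : ∀ i, Tendsto (fun k => (g i).map (τ0 k)) atTop (𝓝 (u i)) := fun i => by
    simpa using key 0 i τ0 h01 h02
  have t1 : ∀ i, Tendsto (fun k => (g i).map (τ1 k)) atTop (𝓝 (v i)) := fun i => by
    simpa using key 1 i τ1 h11 h12
  refine ⟨g, fun i hgi => ?_, ⟨τ0, t0⟩, ⟨τ1, t1⟩⟩
  have hc : Continuous fun x : Matrix (Fin (m+1)) (Fin (m+1)) ℂ => x.det :=
    continuous_id.matrix_det
  have h1 := Filter.Tendsto.comp (hc.tendsto (u i)) (t0 i)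
  have h2 : ((fun x : Matrix (Fin (m+1)) (Fin (m+1)) ℂ => x.det) ∘ fun k => (g i).map (τ0 k)) =
      fun _ => 0 := by
    ext k
    change ((g i).map (τ0 k)).det = 0
    rw [map_det_aut, hgi, map_zero]
  rw [h2] at h1
  exact det_of_unitary _ (hu i) (tendsto_nhds_unique h1 tendsto_const_nhds)

theorem charpoly_of_tendsto (A : ℕ → Matrix (Fin (m+1)) (Fin (m+1)) ℂ)
    (L : Matrix (Fin (m+1)) (Fin (m+1)) ℂ) (P : Polynomial ℂ) (h : Tendsto A atTop (𝓝 L))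
    (hA : ∀ k, (A k).charpoly = P) : L.charpoly = P := by
  apply Polynomial.funext
  intro t
  have hc : Continuous fun x : Matrix (Fin (m+1)) (Fin (m+1)) ℂ => (Matrix.scalar _ t - x).det :=
    (continuous_const.sub continuous_id).matrix_det
  have h1 := Filter.Tendsto.comp (hc.tendsto L) h
  have h2 : ((fun x : Matrix (Fin (m+1)) (Fin (m+1)) ℂ => (Matrix.scalar _ t - x).det) ∘ A) =
      fun _ => P.eval t := by
    ext k
    change (Matrix.scalar _ t - A k).det = _
    rw [← Matrix.eval_charpoly, hA]
  rw [h2] at h1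
  rw [Matrix.eval_charpoly]
  exact (tendsto_nhds_unique h1 tendsto_const_nhds)

/-- Semistability implies solvability. -/
theorem sol_of_SS (γ : I → Fin (m+1) → ℝ) (hγ : ∀ i, Antitone (γ i))
    (htr : ∑ i, ∑ l, γ i l = 0)
    (g : I → Matrix (Fin (m+1)) (Fin (m+1)) ℂ) (hg : ∀ i, (g i).det ≠ 0)
    (hSS : ∀ y : Matrix (Fin (m+1)) (Fin (m+1)) ℂ, kap γ * y.rank ≤
      ∑ p : I × Fin m, coefA (γ p.1) p.2 * (y * flagM (g p.1) p.2).rank) : SolU γ := by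
  have hc : ∀ p : I × Fin m, 0 ≤ coefA (γ p.1) p.2 :=
    fun p => sub_nonneg.2 (hγ p.1 (Fin.castSucc_lt_succ (i := p.2)).le)
  have hbal : ∑ p : I × Fin m, coefA (γ p.1) p.2 *
      (Fintype.card {l : Fin (m+1) // l ≤ p.2.castSucc} : ℝ) =
      kap γ * Fintype.card (Fin (m+1)) := by
    rw [Fintype.sum_prod_type]
    simp only [bal_flag]
    rw [Finset.sum_sub_distrib, htr, ← Finset.sum_mul, kap]
    ring
  choose h hd hb using fun k : ℕ => exists_almost (fun p : I × Fin m => coefA (γ p.1) p.2) hc (kap γ)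
    (fun p => flagM (g p.1) p.2) (fun p => flagM_rank _ (hg p.1) _) hbal hSS (1 / ((k : ℝ) + 1))
    (by positivity)
  let A : ℕ → I → Matrix (Fin (m+1)) (Fin (m+1)) ℂ := fun k i =>
    ∑ j, (coefA (γ i) j : ℂ) • projM (flagM (h k * g i) j) +
      (γ i (Fin.last m) : ℂ) • (1 : Matrix (Fin (m+1)) (Fin (m+1)) ℂ)
  have hdet : ∀ k i, (h k * g i).det ≠ 0 := fun k i => by
    rw [det_mul]; exact mul_ne_zero (hd k) (hg i)
  have hop : ∀ k i j, IsOP (projM (flagM (h k * g i) j)) := fun k i j =>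
    projM_isOP _ (flagM_rank _ (hdet k i) j)
  have hchar : ∀ k i, (A k i).charpoly = (rdiag (γ i)).charpoly := fun k i =>
    flag_charpoly _ (hdet k i) _
  have hherm : ∀ k i, (A k i)ᴴ = A k i := by
    intro k i
    simp only [A, conjTranspose_add, conjTranspose_sum, conjTranspose_smul, (hop k i _).1,
      conjTranspose_one, Complex.star_def, Complex.conj_ofReal]
  have hsum : ∀ k, ∑ i, A k i = ∑ p : I × Fin m, (coefA (γ p.1) p.2 : ℂ) •
      projM (h k * flagM (g p.1) p.2) - (kap γ : ℂ) • (1 : Matrix (Fin (m+1)) (Fin (m+1)) ℂ) := by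
    intro k
    rw [Fintype.sum_prod_type]
    simp only [A, mul_flagM]
    rw [Finset.sum_add_distrib, ← Finset.sum_smul, kap, Complex.ofReal_neg, neg_smul, sub_neg_eq_add,
      Complex.ofReal_sum]
  have hbd : ∀ k i a b, ‖A k i a b‖ ≤ ∑ i, (∑ j, |coefA (γ i) j| + |γ i (Fin.last m)|) := by
    intro k i a b
    refine le_trans ?_ (Finset.single_le_sum (f := fun i => ∑ j, |coefA (γ i) j| + |γ i (Fin.last m)|)
      (fun i _ => by positivity) (Finset.mem_univ i))
    simp only [A, Matrix.add_apply, Matrix.sum_apply, Matrix.smul_apply, smul_eq_mul]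
    refine (norm_add_le _ _).trans (add_le_add ((norm_sum_le _ _).trans ?_) ?_)
    · refine Finset.sum_le_sum fun j _ => ?_
      rw [norm_mul, Complex.norm_real, Real.norm_eq_abs]
      exact mul_le_of_le_one_right (abs_nonneg _) (isOP_entry (hop k i j) a b)
    · rw [norm_mul, Complex.norm_real, Real.norm_eq_abs]
      refine mul_le_of_le_one_right (abs_nonneg _) ?_
      rw [Matrix.one_apply]
      split_ifs <;> simp
  obtain ⟨L, φ, hφ, hL⟩ := exists_subseq_matrix A _ hbd
  have hLc : ∀ i, (L i).charpoly = (rdiag (γ i)).charpoly := fun i =>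
    charpoly_of_tendsto _ _ _ (hL i) fun k => hchar (φ k) i
  have hLh : ∀ i, (L i).IsHermitian := by
    intro i
    have h1 : Tendsto (fun k => (A (φ k) i)ᴴ) atTop (𝓝 (L i)ᴴ) :=
      (continuous_id.matrix_conjTranspose.tendsto (L i)).comp (hL i)
    simp only [hherm] at h1
    exact tendsto_nhds_unique h1 (hL i)
  have hL0 : ∑ i, L i = 0 := by
    have h1 : Tendsto (fun k => ∑ i, A (φ k) i) atTop (𝓝 (∑ i, L i)) :=
      tendsto_finsetSum _ fun i _ => hL i
    ext a b
    have h2 : Tendsto (fun k => (∑ i, A (φ k) i) a b) atTop (𝓝 ((∑ i, L i) a b)) :=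
      ((continuous_id.matrix_elem a b).tendsto _).comp h1
    have h3 : Tendsto (fun k => (∑ i, A (φ k) i) a b) atTop (𝓝 0) := by
      refine squeeze_zero_norm (fun k => ?_) ((tendsto_one_div_add_atTop_nhds_zero_nat (𝕜 := ℝ)).comp
        hφ.tendsto_atTop)
      rw [hsum]
      exact hb (φ k) a b
    exact tendsto_nhds_unique h2 h3
  choose w hw1 hw2 hw3 using fun i => exists_unitary_conj (L i) (rdiag (γ i)) (hLh i) (rdiag_herm _) (hLc i)
  refine ⟨w, fun i => ⟨hw1 i, hw2 i⟩, ?_⟩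
  rw [← hL0]
  exact Finset.sum_congr rfl fun i _ => (hw3 i).symm

/-- Convexity of the solvability locus. -/
theorem SolU_convex (α β : I → Fin (m+1) → ℝ) (hα : ∀ i, Antitone (α i)) (hβ : ∀ i, Antitone (β i))
    (h1 : SolU α) (h2 : SolU β) (a b : ℝ) (ha : 0 ≤ a) (hb : 0 ≤ b) :
    SolU (a • α + b • β) := by
  have t1 := sol_trace α h1
  have t2 := sol_trace β h2
  obtain ⟨u, hu, hus⟩ := h1
  obtain ⟨v, hv, hvs⟩ := h2
  obtain ⟨g, hg, ⟨τ0, h0⟩, ⟨τ1, h1⟩⟩ := exists_generic u v fun i => (hu i).1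
  refine sol_of_SS _ ?_ ?_ g hg ?_
  · intro i x y hxy
    simp only [Pi.add_apply, Pi.smul_apply, smul_eq_mul]
    exact add_le_add (mul_le_mul_of_nonneg_left (hα i hxy) ha)
      (mul_le_mul_of_nonneg_left (hβ i hxy) hb)
  · simp only [Pi.add_apply, Pi.smul_apply, smul_eq_mul, Finset.sum_add_distrib, ← Finset.mul_sum,
      t1, t2]
    ring
  · intro y
    have e1 := generic_SS α hα u hu hus g hg τ0 h0 y
    have e2 := generic_SS β hβ v hv hvs g hg τ1 h1 y
    have e3 : kap (a • α + b • β) = a * kap α + b * kap β := by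
      simp only [kap, Pi.add_apply, Pi.smul_apply, smul_eq_mul, Finset.sum_add_distrib,
        ← Finset.mul_sum]
      ring
    have e4 : ∀ p : I × Fin m, coefA ((a • α + b • β) p.1) p.2 * ((y * flagM (g p.1) p.2).rank : ℝ) =
        a * (coefA (α p.1) p.2 * (y * flagM (g p.1) p.2).rank) +
        b * (coefA (β p.1) p.2 * (y * flagM (g p.1) p.2).rank) := by
      intro p
      simp only [coefA, Pi.add_apply, Pi.smul_apply, smul_eq_mul]
      ring
    rw [e3, Finset.sum_congr rfl fun p _ => e4 p, Finset.sum_add_distrib, ← Finset.mul_sum,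
      ← Finset.mul_sum]
    have := mul_le_mul_of_nonneg_left e1 ha
    have := mul_le_mul_of_nonneg_left e2 hb
    linarith

end

end

section
open Matrix
open scoped ComplexOrder Pointwise
set_option linter.unusedSectionVars false

section
variable {m : ℕ}

/-- The family of spectra attached to `t`. -/
def famA {r : ℕ} (ν lam : Fin (m+1) → ℝ) (t : Fin r → ℝ) : Option (Fin r) → Fin (m+1) → ℝ
  | none => ν
  | some i => t i • lam

theorem famA_antitone {r : ℕ} (ν lam : Fin (m+1) → ℝ) (t : Fin r → ℝ) (hν : Antitone ν)
    (hl : Antitone lam) (ht : ∀ i, 0 ≤ t i) : ∀ o, Antitone (famA ν lam t o) := by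
  rintro (_ | i)
  · exact hν
  · intro x y hxy
    simp only [famA, Pi.smul_apply, smul_eq_mul]
    exact mul_le_mul_of_nonneg_left (hl hxy) (ht i)

theorem famA_convex {r : ℕ} (ν lam : Fin (m+1) → ℝ) (hν : Antitone ν) (hl : Antitone lam) :
    Convex ℝ {t : Fin r → ℝ | (∀ i, 0 ≤ t i) ∧ SolU (famA ν lam t)} := by
  rintro s ⟨hs, hs2⟩ t ⟨ht, ht2⟩ a b ha hb hab
  refine ⟨fun i => ?_, ?_⟩
  · simp only [Pi.add_apply, Pi.smul_apply, smul_eq_mul]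
    have := mul_nonneg ha (hs i)
    have := mul_nonneg hb (ht i)
    linarith
  · have h := SolU_convex _ _ (famA_antitone ν lam s hν hl hs) (famA_antitone ν lam t hν hl ht)
      hs2 ht2 a b ha hb
    have e : a • famA ν lam s + b • famA ν lam t = famA ν lam (a • s + b • t) := by
      funext o l
      rcases o with _ | i
      · simp only [Pi.add_apply, Pi.smul_apply, smul_eq_mul, famA]
        rw [← add_mul, hab, one_mul]
      · simp only [Pi.add_apply, Pi.smul_apply, smul_eq_mul, famA]
        ring
    rwa [e] at h

theorem famA_perm {r : ℕ} (ν lam : Fin (m+1) → ℝ) (t : Fin r → ℝ) (σ : Equiv.Perm (Fin r))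
    (h : SolU (famA ν lam t)) : SolU (famA ν lam (t ∘ σ)) := by
  obtain ⟨u, hu, hs⟩ := h
  refine ⟨fun o => u (o.map σ), fun o => hu _, ?_⟩
  rw [← hs, Fintype.sum_option, Fintype.sum_option]
  congr 1
  exact Equiv.sum_comp σ fun i => u (some i) * rdiag (famA ν lam t (some i)) * (u (some i))ᴴ

theorem famA_avg {s : ℕ} (ν lam : Fin (m+1) → ℝ) (hν : Antitone ν) (hl : Antitone lam)
    (t : Fin (s+1) → ℝ) (ht : ∀ i, 0 ≤ t i) (ht1 : ∑ i, t i = 1) (h : SolU (famA ν lam t)) :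
    SolU (famA ν lam (fun _ : Fin (s+1) => ((s+1 : ℕ) : ℝ)⁻¹)) := by
  have h1 := (famA_convex (r := s+1) ν lam hν hl).sum_mem (t := Finset.univ)
    (w := fun _ : Fin (s+1) => ((s+1 : ℕ) : ℝ)⁻¹) (z := fun k => t ∘ Equiv.addRight k)
    (fun _ _ => by positivity)
    (by rw [Finset.sum_const, Finset.card_univ, Fintype.card_fin, nsmul_eq_mul]; field_simp)
    (fun k _ => ⟨fun i => ht _, famA_perm ν lam t _ h⟩)
  have e : ∑ k : Fin (s+1), ((s+1 : ℕ) : ℝ)⁻¹ • (t ∘ Equiv.addRight k) =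
      fun _ : Fin (s+1) => ((s+1 : ℕ) : ℝ)⁻¹ := by
    funext i
    rw [Finset.sum_apply]
    simp only [Pi.smul_apply, Function.comp, Equiv.coe_addRight, smul_eq_mul, ← Finset.mul_sum]
    have := Equiv.sum_comp (Equiv.addLeft i) t
    simp only [Equiv.coe_addLeft] at this
    rw [this, ht1, mul_one]
  rw [e] at h1
  exact h1.2

theorem exists_antitone_spec (A : Matrix (Fin (m+1)) (Fin (m+1)) ℂ) (hA : A.IsHermitian) :
    ∃ ν : Fin (m+1) → ℝ, Antitone ν ∧ A.charpoly = (rdiag ν).charpoly := by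
  let f : Fin (m+1) → ℝ := fun i => - hA.eigenvalues i
  let σ := Tuple.sort f
  refine ⟨fun i => hA.eigenvalues (σ i), ?_, ?_⟩
  · intro x y hxy
    have := Tuple.monotone_sort f hxy
    simpa [f, σ] using this
  · rw [hA.charpoly_eq, rdiag_charpoly, ← Equiv.prod_comp σ]
    rfl

theorem exists_weights {E : Type*} [AddCommGroup E] [Module ℝ E] {r : ℕ} (f : Fin r → E) (x : E)
    (hx : x ∈ convexHull ℝ (Set.range f)) :
    ∃ t : Fin r → ℝ, (∀ i, 0 ≤ t i) ∧ ∑ i, t i = 1 ∧ x = ∑ i, t i • f i := by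
  have hc : convexHull ℝ (Set.range f) ⊆
      {x | ∃ t : Fin r → ℝ, (∀ i, 0 ≤ t i) ∧ ∑ i, t i = 1 ∧ x = ∑ i, t i • f i} := by
    refine convexHull_min ?_ ?_
    · rintro _ ⟨i, rfl⟩
      refine ⟨Pi.single i 1, fun j => ?_, ?_, ?_⟩
      · by_cases h : j = i
        · subst h; simp
        · simp [h]
      · simp
      · simp [Pi.single_apply, ite_smul]
    · rintro x ⟨s, hs, hs1, rfl⟩ y ⟨t, ht, ht1, rfl⟩ a b ha hb hab
      refine ⟨fun i => a * s i + b * t i, fun i => ?_, ?_, ?_⟩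
      · exact add_nonneg (mul_nonneg ha (hs i)) (mul_nonneg hb (ht i))
      · rw [Finset.sum_add_distrib, ← Finset.mul_sum, ← Finset.mul_sum, hs1, ht1]; linarith
      · simp only [add_smul, mul_smul, Finset.sum_add_distrib, Finset.smul_sum]
  exact hc hx

theorem rdiag_smul (t : ℝ) (lam : Fin (m+1) → ℝ) : rdiag (t • lam) = (t : ℂ) • rdiag lam := by
  rw [rdiag, rdiag, ← diagonal_smul]
  congr 1
  ext l
  simp

theorem conj_mem_orbit (lam : Fin (m+1) → ℝ) (hsum : ∑ i, lam i = 0)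
    (w : Matrix (Fin (m+1)) (Fin (m+1)) ℂ) (hw : wᴴ * w = 1) :
    w * rdiag lam * wᴴ ∈ coadjointOrbit lam :=
  (mem_coadjointOrbit_iff lam hsum _).2 ⟨conj_herm _ _ (rdiag_herm _), conj_charpoly _ _ hw⟩

theorem real_smul_eq (t : ℝ) (A : Matrix (Fin (m+1)) (Fin (m+1)) ℂ) : t • A = (t : ℂ) • A := by
  ext a b
  simp

theorem key_avg {s : ℕ} (lam : Fin (m+1) → ℝ) (hl : Antitone lam) (hsum : ∑ i, lam i = 0)
    (X : Matrix (Fin (m+1)) (Fin (m+1)) ℂ)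
    (hX : X ∈ partialConvexHull (s+1) (coadjointOrbit lam)) :
    ∃ A : Fin (s+1) → Matrix (Fin (m+1)) (Fin (m+1)) ℂ, (∀ i, A i ∈ coadjointOrbit lam) ∧
      X = ((s+1 : ℕ) : ℝ)⁻¹ • ∑ i, A i := by
  obtain ⟨f, hf, hX⟩ := hX
  obtain ⟨t, ht, ht1, hXt⟩ := exists_weights f X hX
  have hf' := fun i => (mem_coadjointOrbit_iff lam hsum _).1 (hf i)
  choose w hw1 hw2 hw3 using fun i => exists_unitary_conj (f i) (rdiag lam) (hf' i).1 (rdiag_herm _)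
    (hf' i).2
  have hXh : (-X).IsHermitian := by
    change (-X)ᴴ = -X
    rw [conjTranspose_neg, hXt, conjTranspose_sum]
    congr 1
    refine Finset.sum_congr rfl fun i _ => ?_
    rw [real_smul_eq, conjTranspose_smul, (hf' i).1, Complex.star_def, Complex.conj_ofReal]
  obtain ⟨ν, hν, hνc⟩ := exists_antitone_spec (-X) hXh
  obtain ⟨v, hv1, hv2, hv3⟩ := exists_unitary_conj (-X) (rdiag ν) hXh (rdiag_herm _) hνc
  have hsol : SolU (famA ν lam t) := by
    refine ⟨fun o => o.elim v w, ?_, ?_⟩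
    · rintro (_ | i)
      · exact ⟨hv1, hv2⟩
      · exact ⟨hw1 i, hw2 i⟩
    · rw [Fintype.sum_option]
      simp only [famA, Option.elim, rdiag_smul, Matrix.mul_smul, Matrix.smul_mul, ← hw3, ← hv3]
      rw [neg_add_eq_zero, hXt]
      exact Finset.sum_congr rfl fun i _ => real_smul_eq _ _
  obtain ⟨u, hu, hus⟩ := famA_avg ν lam hν hl t ht ht1 hsol
  rw [Fintype.sum_option] at hus
  simp only [famA, rdiag_smul, Matrix.mul_smul, Matrix.smul_mul] at hus
  rw [← Finset.smul_sum] at hus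
  let q := v * (u none)ᴴ
  have hq : qᴴ * q = 1 := by
    simp only [q, conjTranspose_mul, conjTranspose_conjTranspose]
    rw [Matrix.mul_assoc, ← Matrix.mul_assoc vᴴ, hv1, Matrix.one_mul, (hu none).2]
  refine ⟨fun i => (q * u (some i)) * rdiag lam * (q * u (some i))ᴴ, fun i => ?_, ?_⟩
  · refine conj_mem_orbit lam hsum _ ?_
    rw [conjTranspose_mul, Matrix.mul_assoc, ← Matrix.mul_assoc qᴴ, hq, Matrix.one_mul, (hu _).1]
  · have e1 : ∑ i, (q * u (some i)) * rdiag lam * (q * u (some i))ᴴ =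
        q * (∑ i, u (some i) * rdiag lam * (u (some i))ᴴ) * qᴴ := by
      rw [Matrix.mul_sum, Matrix.sum_mul]
      refine Finset.sum_congr rfl fun i _ => ?_
      rw [conjTranspose_mul]
      simp only [Matrix.mul_assoc]
    have e2 := (neg_eq_of_add_eq_zero_right hus)
    have e3 : q * (u none * rdiag ν * (u none)ᴴ) * qᴴ = v * rdiag ν * vᴴ := by
      have : q * (u none * rdiag ν * (u none)ᴴ) * qᴴ =
          v * ((u none)ᴴ * u none) * rdiag ν * ((u none)ᴴ * u none) * vᴴ := by
        simp only [q, conjTranspose_mul, conjTranspose_conjTranspose, Matrix.mul_assoc]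
      rw [this, (hu none).1, Matrix.mul_one, Matrix.mul_one]
    rw [e1, real_smul_eq, ← Matrix.smul_mul, ← Matrix.mul_smul, ← e2, Matrix.mul_neg, Matrix.neg_mul,
      e3, ← hv3, neg_neg]

theorem key_eq {s : ℕ} (lam : Fin (m+1) → ℝ) (hl : Antitone lam) (hsum : ∑ i, lam i = 0) :
    partialConvexHull (s+1) (coadjointOrbit lam) =
      (((s+1 : ℕ) : ℝ)⁻¹) • {B : Matrix (Fin (m+1)) (Fin (m+1)) ℂ |
        ∃ A : Fin (s+1) → Matrix (Fin (m+1)) (Fin (m+1)) ℂ,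
          (∀ i, A i ∈ coadjointOrbit lam) ∧ B = ∑ i, A i} := by
  ext X
  rw [Set.mem_smul_set]
  constructor
  · intro hX
    obtain ⟨A, hA, h⟩ := key_avg lam hl hsum X hX
    exact ⟨_, ⟨A, hA, rfl⟩, h.symm⟩
  · rintro ⟨_, ⟨A, hA, rfl⟩, rfl⟩
    refine ⟨A, hA, ?_⟩
    rw [Finset.smul_sum]
    refine (convex_convexHull ℝ (Set.range A)).sum_mem (fun _ _ => by positivity) ?_
      fun i _ => subset_convexHull ℝ _ ⟨i, rfl⟩
    rw [Finset.sum_const, Finset.card_univ, Fintype.card_fin, nsmul_eq_mul]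
    field_simp
end

theorem final_thm (n : ℕ) (hn : 2 ≤ n)
    (lam : Fin n → ℝ) (hmono : Antitone lam) (hsum : ∑ i, lam i = 0)
    (r : ℕ) (hr : 1 ≤ r) :
    Convex ℝ (partialConvexHull r (coadjointOrbit lam)) ↔
      Convex ℝ {B : Matrix (Fin n) (Fin n) ℂ |
        ∃ A : Fin r → Matrix (Fin n) (Fin n) ℂ,
          (∀ i, A i ∈ coadjointOrbit lam) ∧ B = ∑ i, A i} := by
  obtain ⟨m, rfl⟩ : ∃ m, n = m + 1 := ⟨n - 1, by omega⟩
  obtain ⟨s, rfl⟩ : ∃ s, r = s + 1 := ⟨r - 1, by omega⟩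
  rw [key_eq lam hmono hsum]
  constructor
  · intro h
    have h1 := h.smul ((s+1 : ℕ) : ℝ)
    rwa [smul_inv_smul₀ (by positivity)] at h1
  · intro h
    exact h.smul _

end

/-- `C_r(O_λ)` is convex iff the `r`-fold Minkowski sum `O_λ + … + O_λ` is convex. -/
theorem partialConvexHull_convex_iff_sum_convex (n : ℕ) (hn : 2 ≤ n)
    (lam : Fin n → ℝ) (hmono : Antitone lam) (hsum : ∑ i, lam i = 0)
    (r : ℕ) (hr : 1 ≤ r) :
    Convex ℝ (partialConvexHull r (coadjointOrbit lam)) ↔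
      Convex ℝ {B : Matrix (Fin n) (Fin n) ℂ |
        ∃ A : Fin r → Matrix (Fin n) (Fin n) ℂ,
          (∀ i, A i ∈ coadjointOrbit lam) ∧ B = ∑ i, A i} := by
  exact final_thm n hn lam hmono hsum r hr
end
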